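/- For every fixed ε > 0 there is a constant C(ε) such that, with the notation of the context, for every real R > 0 the number of triples (g, q, κ), where (q, κ) is an admissible pair and g = (x₁, x₂, y₁, y₂) ∈ ℤ⁴ satisfies a₁x₁²y₁³ + a₂x₂²y₂³ ≠ 0, the congruences (c1), (c2), (c3), (c4), and max(|x₁|/X₁, |x₂|/X₂, |y₁|/Y₁, |y₂|/Y₂) ≤ R, is at most C(ε) · (Y₁Y₂)^{−3/2} Y₃^{−3} R⁷ B^{2+ε}. -/

import Mathlib

/-- The set `S₀(B)` of sextuples `(x₁, x₂, x₃, y₁, y₂, y₃)` of positive integers (encoded as a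
pair of functions `Fin 3 → ℤ`) such that `Xᵢ/2 < xᵢ ≤ Xᵢ` and `Yᵢ/2 < yᵢ ≤ Yᵢ`, the equation
`a₁x₁²y₁³ + a₂x₂²y₂³ + a₃x₃²y₃³ = 0` holds, `gcd(x₁y₁, x₂y₂, x₃y₃) = 1`,
`gcd(a₁a₂a₃, x₁x₂x₃y₁y₂y₃) = 1`, and `a₁y₁, a₂y₂, a₃y₃` are all squarefree. -/
def S0 (a : Fin 3 → ℤ) (X Y : Fin 3 → ℝ) : Set ((Fin 3 → ℤ) × (Fin 3 → ℤ)) :=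
  {p | (∀ i, 0 < p.1 i) ∧ (∀ i, 0 < p.2 i) ∧
    (∀ i, X i / 2 < (p.1 i : ℝ) ∧ (p.1 i : ℝ) ≤ X i) ∧
    (∀ i, Y i / 2 < (p.2 i : ℝ) ∧ (p.2 i : ℝ) ≤ Y i) ∧
    a 0 * p.1 0 ^ 2 * p.2 0 ^ 3 + a 1 * p.1 1 ^ 2 * p.2 1 ^ 3 +
      a 2 * p.1 2 ^ 2 * p.2 2 ^ 3 = 0 ∧
    Int.gcd (p.1 0 * p.2 0) (Int.gcd (p.1 1 * p.2 1) (p.1 2 * p.2 2)) = 1 ∧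
    Int.gcd (a 0 * a 1 * a 2) (p.1 0 * p.1 1 * p.1 2 * p.2 0 * p.2 1 * p.2 2) = 1 ∧
    (∀ i, Squarefree (a i * p.2 i))}

/-- The congruences (c1), (c2), (c3), (c4). -/
def Congs (a₁ a₂ q κ x₁ x₂ y₁ y₂ : ℤ) : Prop :=
  (q ∣ a₂ * x₁ - κ ^ 3 * a₁ * x₂) ∧
  (q ∣ κ ^ 2 * a₁ * y₁ + a₂ * y₂) ∧
  (q ∣ κ ^ 2 * a₁ * x₂ * y₁ + a₂ * x₂ * y₂) ∧
  (q ^ 2 ∣ 2 * a₂ * x₁ * y₁ + κ ^ 3 * a₁ * x₂ * y₁ + 3 * κ * a₂ * x₂ * y₂) ∧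
  (q ^ 3 ∣ 5 * κ ^ 2 * a₁ * a₂ * x₁ * y₁ + a₂ ^ 2 * x₁ * y₂ +
    κ ^ 5 * a₁ ^ 2 * x₂ * y₁ + 5 * κ ^ 3 * a₁ * a₂ * x₂ * y₂)

/-!
Suppose first that `x₁x₂ ≠ 0`, and let `F = a₁x₁²y₁³ + a₂x₂²y₂³` and `t = gcd(q, y₁, y₂)`. The
congruences force `18F = q³t²m` with a nonzero integer `m ≪ BR⁵/(Y₃³t²)`. For given `x₁, x₂, t, m`
the pair `(y₁/q, y₂/q)` is a rational point, of height polynomial in `B`, on the diagonal cubic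
`18a₁x₁²X³ + 18a₂x₂²Y³ = t²m`, which has `O(B^ε)` such points. This point and `t` determine `q`,
`y₁` and `y₂`, and then `κ` lies in at most `t τ(q)` residue classes. Summing over `m`, `t`, `x₁`
and `x₂` yields `O(X₁X₂BR⁷Y₃⁻³B^ε)` triples, and `X₁X₂ ≪ B(Y₁Y₂)^{-3/2}`.

The cubic maps to the curve `v² + kv = u³`, which acquires complex multiplication by `ℤ[ω]` over
`ℚ(ω)`. Put `φ = ω - ω²`, so that `φ² = -3`. The Kummer map `(u, v) ↦ v` modulo cubes embeds the
cokernel of `φ` in a set of classes represented by divisors of `k²`, so the image of `φⁿ` has index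
`O(B^ε)`. Two points of bounded height in one coset differ by `φⁿ` of a point whose logarithmic
height is smaller by a factor exponential in `n`, so that a coset contains `O(B^ε)` points once `n`
is large.

If `x₁ = 0`, then `q` divides `x₂`, and if `x₂ = 0`, then `q` divides `x₁`; these triples are
counted directly. For `R > B` the number of all tuples of the given size is small enough.
-/

section Cubes

variable {K : Type*} [Field K]

/-- The group `Kˣ / Kˣ³`, written additively. -/
def UnitsModCubes (K : Type*) [Field K] : Type _ :=
  Additive Kˣ ⧸ (nsmulAddMonoidHom 3 : Additive Kˣ →+ Additive Kˣ).range

instance (K : Type*) [Field K] : AddCommGroup (UnitsModCubes K) :=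
  QuotientAddGroup.Quotient.addCommGroup _

/-- The class of `x ≠ 0` modulo cubes. -/
def cubeClass {x : K} (hx : x ≠ 0) : UnitsModCubes K :=
  QuotientAddGroup.mk (Additive.ofMul (Units.mk0 x hx))

lemma cubeClass_mul {x y : K} (hx : x ≠ 0) (hy : y ≠ 0) :
    cubeClass (mul_ne_zero hx hy) = cubeClass hx + cubeClass hy := by
  rw [cubeClass, Units.mk0_mul]
  rfl

lemma cubeClass_eq_zero_iff {x : K} (hx : x ≠ 0) : cubeClass hx = 0 ↔ ∃ s, x = s ^ 3 := by
  refine (QuotientAddGroup.eq_zero_iff _).trans ⟨fun ⟨s, hs⟩ => ⟨s.toMul, ?_⟩, fun ⟨s, hs⟩ => ?_⟩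
  · simpa using (congrArg (fun t => (t.toMul : K)) hs).symm
  · have hs0 : s ≠ 0 := by rintro rfl; simp [hx] at hs
    exact ⟨.ofMul (Units.mk0 s hs0), congrArg Additive.ofMul (Units.ext hs.symm)⟩

lemma cubeClass_eq_of_eq_mul_cube {x y s : K} (hx : x ≠ 0) (hy : y ≠ 0) (h : x = y * s ^ 3) :
    cubeClass hx = cubeClass hy := by
  subst h
  rw [cubeClass_mul hy (right_ne_zero_of_mul hx), (cubeClass_eq_zero_iff _).2 ⟨s, rfl⟩, add_zero]

end Cubes

lemma index_range_pow_dvd {G : Type*} [AddCommGroup G] (f : AddMonoid.End G) (n : ℕ) :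
    (AddMonoidHom.range (f ^ n)).index ∣ (AddMonoidHom.range f).index ^ n := by
  induction n with
  | zero =>
    have htop : AddMonoidHom.range (1 : AddMonoid.End G) = ⊤ :=
      AddMonoidHom.range_eq_top.2 Function.surjective_id
    rw [pow_zero, pow_zero, htop, AddSubgroup.index_top]
  | succ n ih =>
    have hmap : AddMonoidHom.range (f ^ (n + 1)) = (AddMonoidHom.range (f ^ n)).map f := by
      rw [pow_succ']
      exact AddMonoidHom.range_comp _ _
    refine ((congrArg AddSubgroup.index hmap).trans (AddSubgroup.index_map _ _)).dvd.trans ?_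
    rw [pow_succ]
    exact mul_dvd_mul ((AddSubgroup.index_dvd_of_le le_sup_left).trans ih) dvd_rfl

lemma card_le_index_mul {G : Type*} [AddCommGroup G] (H : AddSubgroup G) (hH : H.index ≠ 0)
    (S : Finset G) {M : ℝ} (hM : 0 ≤ M)
    (h : ∀ S' ⊆ S, (∀ x ∈ S', ∀ y ∈ S', x - y ∈ H) → (S'.card : ℝ) ≤ M) :
    (S.card : ℝ) ≤ H.index * M := by
  classical
  have : Finite (G ⧸ H) := Nat.finite_of_card_ne_zero hH
  have hfibre (b : G ⧸ H) : ((S.filter fun x : G => (x : G ⧸ H) = b).card : ℝ) ≤ M := by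
    refine h _ (Finset.filter_subset _ _) fun x hx y hy => ?_
    rw [← QuotientAddGroup.eq_iff_sub_mem, (Finset.mem_filter.1 hx).2, (Finset.mem_filter.1 hy).2]
  have himage : (S.image ((↑) : G → G ⧸ H)).card ≤ H.index := by
    rw [AddSubgroup.index, ← Set.ncard_coe_finset]
    exact Set.ncard_le_card _
  calc (S.card : ℝ)
      = ∑ b ∈ S.image ((↑) : G → G ⧸ H), ((S.filter fun x : G => (x : G ⧸ H) = b).card : ℝ) := by
        exact_mod_cast Finset.card_eq_sum_card_image _ S
    _ ≤ ((S.image ((↑) : G → G ⧸ H)).card : ℝ) * M := by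
        simpa using Finset.sum_le_card_nsmul _ _ M fun b _ => hfibre b
    _ ≤ H.index * M := by gcongr

section PowerFreePart

variable {M : Type*} [CommMonoidWithZero M] [UniqueFactorizationMonoid M]

lemma exists_powerFree_decomposition {n : ℕ} (hn : n ≠ 0) {a : M} (ha : a ≠ 0) :
    ∃ d c, a = d * c ^ n ∧ ∀ p, Prime p → ¬p ^ n ∣ d := by
  induction a using (wellFounded_dvdNotUnit (α := M)).induction with
  | _ a ih =>
    by_cases h : ∃ p, Prime p ∧ p ^ n ∣ a
    · obtain ⟨p, hp, b, rfl⟩ := h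
      have hb : b ≠ 0 := right_ne_zero_of_mul ha
      obtain ⟨d, c, rfl, hd⟩ := ih b
        ⟨hb, p ^ n, fun hu => hp.not_isUnit ((isUnit_pow_iff hn).1 hu), mul_comm _ _⟩ hb
      exact ⟨d, p * c, by rw [mul_pow, mul_left_comm], hd⟩
    · push Not at h
      exact ⟨a, 1, by simp, h⟩

lemma dvd_pow_of_prime_dvd {n : ℕ} {d k : M} (hd0 : d ≠ 0)
    (hd : ∀ p, Prime p → ¬p ^ (n + 1) ∣ d) (hdk : ∀ p, Prime p → p ∣ d → p ∣ k) : d ∣ k ^ n := by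
  rw [UniqueFactorizationMonoid.dvd_iff_emultiplicity_le hd0]
  intro p hp
  by_cases hpd : p ∣ d
  · have hle : emultiplicity p d ≤ n :=
      Order.le_of_lt_add_one (by exact_mod_cast emultiplicity_lt_iff_not_dvd.2 (hd p hp))
    exact hle.trans (le_emultiplicity_of_pow_dvd (pow_dvd_pow_of_dvd (hdk p hp hpd) n))
  · rw [emultiplicity_eq_zero.2 hpd]
    exact zero_le

lemma not_dvd_of_mul_eq_pow {n : ℕ} (hn : n ≠ 0) {p d c m e : M} (hp : Prime p) (he : e ≠ 0)
    (hd : ¬p ^ n ∣ d) (hm : ¬p ∣ m) (h : d * c ^ n * m = e ^ n) : ¬p ∣ d := by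
  intro hpd
  have hne : d * c ^ n * m ≠ 0 := h ▸ pow_ne_zero n he
  have hdc := left_ne_zero_of_mul hne
  have hc : c ≠ 0 := (pow_ne_zero_iff hn).1 (right_ne_zero_of_mul hdc)
  have hfin {x : M} (hx : x ≠ 0) : FiniteMultiplicity p x := .of_prime_left hp hx
  have hmul : multiplicity p d + n * multiplicity p c = n * multiplicity p e := by
    rw [← (hfin he).multiplicity_pow hp, ← h, multiplicity_mul hp (hfin hne),
      multiplicity_eq_zero.2 hm, multiplicity_mul hp (hfin hdc), (hfin hc).multiplicity_pow hp,
      add_zero]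
  have hdvd : n ∣ multiplicity p d :=
    (Nat.dvd_add_iff_left (dvd_mul_right n _)).2 (hmul ▸ dvd_mul_right n _)
  exact multiplicity_ne_zero.2 hpd (Nat.eq_zero_of_dvd_of_lt hdvd
    ((hfin (left_ne_zero_of_mul hdc)).multiplicity_lt_iff_not_dvd.2 hd))

end PowerFreePart

section DivisorBound

open UniqueFactorizationMonoid

lemma ncard_dvd_le_prod_count_add_one {M : Type*} [CommMonoidWithZero M] [DecidableEq M]
    [UniqueFactorizationMonoid M] [StrongNormalizationMonoid M] [Finite Mˣ]
    {k : M} (hk : k ≠ 0) :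
    {x | x ∣ k}.ncard ≤
      (∏ p ∈ (normalizedFactors k).toFinset, ((normalizedFactors k).count p + 1)) *
        Nat.card Mˣ := by
  have := Fintype.ofFinite Mˣ
  have hsub : {x | x ∣ k} ⊆ ((Finset.Iic (normalizedFactors k) ×ˢ (Finset.univ : Finset Mˣ)).image
      fun s => s.1.prod * s.2 : Finset M) := by
    intro x hx
    have hx0 : x ≠ 0 := ne_zero_of_dvd_ne_zero hk hx
    obtain ⟨e, he⟩ := prod_normalizedFactors hx0
    refine Finset.mem_coe.2 (Finset.mem_image.2 ⟨(normalizedFactors x, e), ?_, he⟩)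
    simpa using (dvd_iff_normalizedFactors_le_normalizedFactors hx0 hk).1 hx
  refine (Set.ncard_le_ncard hsub (Finset.finite_toSet _)).trans ?_
  rw [Set.ncard_coe_finset, Nat.card_eq_fintype_card, ← Finset.card_univ, ← Multiset.card_Iic,
    ← Finset.card_product]
  exact Finset.card_image_le

lemma pow_rpow_comm {x : ℝ} (hx : 0 ≤ x) (e : ℕ) (δ : ℝ) : (x ^ e) ^ δ = (x ^ δ) ^ e := by
  rw [← Real.rpow_natCast, ← Real.rpow_mul hx, mul_comm, Real.rpow_mul hx, Real.rpow_natCast]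

lemma add_one_le_max_mul_pow_rpow {δ η x : ℝ} (hδ : 0 < δ) (hη : 1 < η) (hx : η ≤ x) (e : ℕ) :
    (e : ℝ) + 1 ≤ max 1 (1 / (δ * Real.log η)) * (x ^ e) ^ δ := by
  set A := max 1 (1 / (δ * Real.log η))
  have hlog : 0 < Real.log η := Real.log_pos hη
  have hη0 : 0 < η := one_pos.trans hη
  have hA1 : 1 ≤ A := le_max_left _ _
  have hA2 : 1 ≤ A * (δ * Real.log η) :=
    (div_le_iff₀ (by positivity)).1 (le_max_right _ _)
  have hexp : Real.exp (δ * Real.log η) ≤ x ^ δ := by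
    rw [mul_comm, ← Real.rpow_def_of_pos hη0]
    exact Real.rpow_le_rpow hη0.le hx hδ.le
  calc (e : ℝ) + 1 ≤ A * (e * (δ * Real.log η) + 1) := by
        nlinarith [mul_le_mul_of_nonneg_left hA2 (Nat.cast_nonneg (α := ℝ) e)]
    _ ≤ A * Real.exp (δ * Real.log η) ^ e := by
        rw [← Real.exp_nat_mul]
        gcongr
        exact Real.add_one_le_exp _
    _ ≤ A * (x ^ e) ^ δ := by
        rw [pow_rpow_comm (hη0.le.trans hx)]
        gcongr

lemma add_one_le_pow_rpow {δ x : ℝ} (hδ : 0 < δ) (hx : 2 ^ (1 / δ) ≤ x) (e : ℕ) :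
    (e : ℝ) + 1 ≤ (x ^ e) ^ δ := by
  have h2 : (2 : ℝ) ≤ x ^ δ := by
    calc (2 : ℝ) = ((2 : ℝ) ^ (1 / δ)) ^ δ := by
          rw [← Real.rpow_mul two_pos.le, one_div, inv_mul_cancel₀ hδ.ne', Real.rpow_one]
      _ ≤ x ^ δ := Real.rpow_le_rpow (by positivity) hx hδ.le
  calc (e : ℝ) + 1 ≤ 2 ^ e := by exact_mod_cast Nat.lt_two_pow_self
    _ ≤ (x ^ δ) ^ e := by gcongr
    _ = (x ^ e) ^ δ := (pow_rpow_comm ((by positivity : (0 : ℝ) ≤ 2 ^ (1 / δ)).trans hx) e δ).symm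

variable {O : Type*} [CommRing O] [IsDomain O] {N : AbsoluteValue O ℝ} [Northcott N]

lemma one_le_abv_of_ne_zero {x : O} (hx : x ≠ 0) : 1 ≤ N x := by
  by_contra! hlt
  have hinj : Function.Injective fun n : ℕ => x ^ n := fun m n hmn =>
    pow_right_injective₀ (N.pos hx) hlt.ne (by simpa using congrArg N hmn)
  refine Set.infinite_range_of_injective hinj ((Northcott.finite_le (h := N) 1).subset
    (Set.range_subset_iff.2 fun n => ?_))
  rw [Set.mem_ofPred_eq, map_pow]
  exact pow_le_one₀ (N.nonneg x) hlt.le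

lemma abv_unit_eq_one (e : Oˣ) : N e = 1 := by
  refine le_antisymm ?_ (one_le_abv_of_ne_zero e.ne_zero)
  have hinv : 1 ≤ N (↑e⁻¹ : O) := one_le_abv_of_ne_zero e⁻¹.ne_zero
  have hmul : N e * N (↑e⁻¹ : O) = 1 := by rw [← map_mul, e.mul_inv, map_one]
  nlinarith [N.nonneg (e : O)]

lemma isUnit_of_abv_eq_one {x : O} (hx : N x = 1) : IsUnit x := by
  have hx0 : x ≠ 0 := N.ne_zero_iff.1 (hx ▸ one_ne_zero)
  by_contra hu
  refine Set.infinite_range_of_injective (pow_injective_of_not_isUnit hu hx0)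
    ((Northcott.finite_le (h := N) 1).subset (Set.range_subset_iff.2 fun n => ?_))
  simp [hx]

lemma abv_le_of_dvd {x y : O} (hy : y ≠ 0) (h : x ∣ y) : N x ≤ N y := by
  obtain ⟨z, rfl⟩ := h
  rw [map_mul]
  exact le_mul_of_one_le_right (N.nonneg x) (one_le_abv_of_ne_zero (right_ne_zero_of_mul hy))

variable (N) in
lemma exists_one_lt_le_abv : ∃ η : ℝ, 1 < η ∧ ∀ x : O, x ≠ 0 → ¬IsUnit x → η ≤ N x := by
  rcases Set.eq_empty_or_nonempty {x : O | x ≠ 0 ∧ ¬IsUnit x} with h | h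
  · exact ⟨2, one_lt_two, fun x hx hu => (Set.eq_empty_iff_forall_notMem.1 h x ⟨hx, hu⟩).elim⟩
  · obtain ⟨y, ⟨hy0, hyu⟩, hmin⟩ := Northcott.exists_min_image N _ h
    exact ⟨N y, (one_le_abv_of_ne_zero hy0).lt_of_ne' fun h => hyu (isUnit_of_abv_eq_one h),
      fun x hx hu => hmin x ⟨hx, hu⟩⟩

variable (N) in
include N in
lemma finite_units_of_northcott : Finite Oˣ :=
  have : Finite {x : O | N x ≤ 1} := Northcott.finite_le (h := N) 1
  Finite.of_injective (fun e : Oˣ => (⟨e, (abv_unit_eq_one e).le⟩ : {x : O | N x ≤ 1}))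
    fun _ _ h => Units.ext (congrArg Subtype.val h)

lemma prod_count_rpow_eq [UniqueFactorizationMonoid O] [StrongNormalizationMonoid O]
    [DecidableEq O] {k : O} (hk : k ≠ 0) (δ : ℝ) :
    ∏ p ∈ (normalizedFactors k).toFinset, (N p ^ (normalizedFactors k).count p) ^ δ =
      N k ^ δ := by
  rw [Real.finsetProd_rpow _ _ fun p _ => pow_nonneg (N.nonneg p) _,
    ← Finset.prod_multiset_map_count, ← map_multiset_prod]
  obtain ⟨e, he⟩ := prod_normalizedFactors hk
  rw [(congrArg N he).symm, map_mul, abv_unit_eq_one, mul_one]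

variable (N) in
theorem exists_ncard_dvd_le_mul_rpow [UniqueFactorizationMonoid O] {δ : ℝ} (hδ : 0 < δ) :
    ∃ C : ℝ, 0 < C ∧ ∀ k : O, k ≠ 0 →
      {x | x ∣ k}.Finite ∧ ({x | x ∣ k}.ncard : ℝ) ≤ C * N k ^ δ := by
  classical
  let := UniqueFactorizationMonoid.strongNormalizationMonoid (α := O)
  have := finite_units_of_northcott N
  have := Fintype.ofFinite Oˣ
  obtain ⟨η, hη, hgap⟩ := exists_one_lt_le_abv N
  set A := max 1 (1 / (δ * Real.log η))
  have hA1 : 1 ≤ A := le_max_left _ _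
  set F := (Northcott.finite_le (h := N) (2 ^ (1 / δ))).toFinset
  refine ⟨A ^ F.card * Nat.card Oˣ, mul_pos (by positivity) (by exact_mod_cast Nat.card_pos),
    fun k hk => ?_⟩
  set m := normalizedFactors k
  have hlocal : ∀ p ∈ m.toFinset,
      (m.count p : ℝ) + 1 ≤ (if p ∈ F then A else 1) * (N p ^ m.count p) ^ δ := by
    intro p hp
    have hprime := prime_of_normalized_factor p (Multiset.mem_toFinset.1 hp)
    split_ifs with hpF
    · exact add_one_le_max_mul_pow_rpow hδ hη (hgap p hprime.ne_zero hprime.not_isUnit) _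
    · rw [one_mul]
      exact add_one_le_pow_rpow hδ (le_of_not_ge fun h => hpF (by simpa [F] using h)) _
  have hsmall : ∏ p ∈ m.toFinset, (if p ∈ F then A else 1) ≤ A ^ F.card := by
    rw [Finset.prod_ite, Finset.prod_const, Finset.prod_const_one, mul_one]
    exact pow_le_pow_right₀ hA1
      (Finset.card_le_card fun x hx => (Finset.mem_filter.1 hx).2)
  refine ⟨@Set.toFinite _ _ (fintypeSubtypeDvd k hk).finite, ?_⟩
  calc ({x | x ∣ k}.ncard : ℝ) ≤ (∏ p ∈ m.toFinset, ((m.count p : ℝ) + 1)) * Nat.card Oˣ := by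
        exact_mod_cast ncard_dvd_le_prod_count_add_one hk
    _ ≤ (∏ p ∈ m.toFinset, (if p ∈ F then A else 1) * (N p ^ m.count p) ^ δ) * Nat.card Oˣ := by
        gcongr with p hp
        exact hlocal p hp
    _ ≤ A ^ F.card * N k ^ δ * Nat.card Oˣ := by
        rw [Finset.prod_mul_distrib, prod_count_rpow_eq hk]
        gcongr
    _ = _ := by ring

end DivisorBound

section Height

variable {O : Type*} [CommRing O] {K : Type*} [Field K] [Algebra O K]
  {N : AbsoluteValue O ℝ} {T T₁ T₂ : ℝ} {x y : K}

/-- `HeightLE N T x` says that the naive height of `x`, measured by the absolute value `N` on `O`,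
is at most `T`: the element `x` is a quotient of two elements of `O` of size at most `T`. -/
def HeightLE (N : AbsoluteValue O ℝ) (T : ℝ) (x : K) : Prop :=
  ∃ α β : O, β ≠ 0 ∧ x * algebraMap O K β = algebraMap O K α ∧ N α ≤ T ∧ N β ≤ T

namespace HeightLE

lemma mono (h : HeightLE N T₁ x) (hT : T₁ ≤ T₂) : HeightLE N T₂ x := by
  obtain ⟨α, β, hβ, hx, hα, hβT⟩ := h
  exact ⟨α, β, hβ, hx, hα.trans hT, hβT.trans hT⟩

lemma nonneg (h : HeightLE N T x) : 0 ≤ T := by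
  obtain ⟨-, β, -, -, -, hβ⟩ := h
  exact (N.nonneg β).trans hβ

lemma add [IsDomain O] (hx : HeightLE N T₁ x) (hy : HeightLE N T₂ y) :
    HeightLE N (2 * T₁ * T₂) (x + y) := by
  have hT₁ := hx.nonneg
  have hT₂ := hy.nonneg
  obtain ⟨α, β, hβ, hx, hα, hβT⟩ := hx
  obtain ⟨γ, δ, hδ, hy, hγ, hδT⟩ := hy
  refine ⟨α * δ + γ * β, β * δ, mul_ne_zero hβ hδ, ?_, ?_, ?_⟩
  · simp only [map_add, map_mul, ← hx, ← hy]
    ring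
  · calc N (α * δ + γ * β) ≤ N α * N δ + N γ * N β := by
          simpa only [map_mul] using N.add_le (α * δ) (γ * β)
      _ ≤ T₁ * T₂ + T₂ * T₁ := by gcongr
      _ = 2 * T₁ * T₂ := by ring
  · rw [map_mul]
    calc N β * N δ ≤ T₁ * T₂ := by gcongr
      _ ≤ 2 * T₁ * T₂ := by nlinarith [mul_nonneg hT₁ hT₂]

lemma mul [IsDomain O] (hx : HeightLE N T₁ x) (hy : HeightLE N T₂ y) :
    HeightLE N (T₁ * T₂) (x * y) := by
  have hT₁ := hx.nonneg
  obtain ⟨α, β, hβ, hx, hα, hβT⟩ := hx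
  obtain ⟨γ, δ, hδ, hy, hγ, hδT⟩ := hy
  refine ⟨α * γ, β * δ, mul_ne_zero hβ hδ, ?_, ?_, ?_⟩
  · simp only [map_mul, ← hx, ← hy]
    ring
  all_goals
    rw [map_mul]
    gcongr

lemma neg (h : HeightLE N T x) : HeightLE N T (-x) := by
  obtain ⟨α, β, hβ, hx, hα, hβT⟩ := h
  exact ⟨-α, β, hβ, by rw [map_neg, ← hx, neg_mul], by rwa [N.map_neg], hβT⟩

lemma of_abv_le [IsDomain O] {α : O} (hα : N α ≤ T) (hT : 1 ≤ T) :
    HeightLE N T (algebraMap O K α) :=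
  ⟨α, 1, one_ne_zero, by simp, hα, by simpa using hT⟩

lemma inv [IsDomain O] [FaithfulSMul O K] (h : HeightLE N T x) : HeightLE N T x⁻¹ := by
  rcases eq_or_ne x 0 with rfl | hx
  · simpa using h
  obtain ⟨α, β, hβ, hαβ, hα, hβT⟩ := h
  have hβ' : algebraMap O K β ≠ 0 := by simpa using hβ
  refine ⟨β, α, ?_, by rw [← hαβ, inv_mul_cancel_left₀ hx], hβT, hα⟩
  rintro rfl
  exact mul_ne_zero hx hβ' (by rw [hαβ, map_zero])

/-- The growth hypothesis on `N` counts a two-dimensional lattice in a disc of radius `T`. -/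
lemma finite_and_ncard_le [FaithfulSMul O K] [Northcott N] {c : ℝ}
    (hc : ({α : O | N α ≤ T}.ncard : ℝ) ≤ c * T ^ 2) :
    {x : K | HeightLE N T x}.Finite ∧
      ({x : K | HeightLE N T x}.ncard : ℝ) ≤ (c * T ^ 2) ^ 2 := by
  have hfin := Northcott.finite_le (h := N) T
  have hsub : {x : K | HeightLE N T x} ⊆
      (fun s : O × O => algebraMap O K s.1 / algebraMap O K s.2) ''
        ({α : O | N α ≤ T} ×ˢ {α : O | N α ≤ T}) := by
    rintro x ⟨α, β, hβ, hx, hα, hβT⟩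
    have hβ' : algebraMap O K β ≠ 0 := by simpa using hβ
    exact ⟨(α, β), ⟨hα, hβT⟩, by simp [← hx, hβ']⟩
  refine ⟨((hfin.prod hfin).image _).subset hsub, ?_⟩
  have hcard := (Set.ncard_le_ncard hsub ((hfin.prod hfin).image _)).trans
    (Set.ncard_image_le (hfin.prod hfin))
  rw [Set.ncard_prod] at hcard
  calc ({x : K | HeightLE N T x}.ncard : ℝ) ≤ ({α : O | N α ≤ T}.ncard : ℝ) ^ 2 := by
        rw [sq]
        exact_mod_cast hcard
    _ ≤ (c * T ^ 2) ^ 2 := by gcongr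

end HeightLE

lemma exists_isCoprime_mul_algebraMap_eq [IsDomain O] [IsPrincipalIdealRing O]
    [IsFractionRing O K] (x : K) : ∃ p r : O, r ≠ 0 ∧ IsCoprime p r ∧
      x * algebraMap O K r = algebraMap O K p := by
  obtain ⟨p, r, hco, hx⟩ := IsFractionRing.exists_reduced_fraction (A := O) x
  exact ⟨p, r, nonZeroDivisors.coe_ne_zero r, hco.isCoprime, hx ▸ IsLocalization.mk'_spec K p r⟩

lemma HeightLE.exists_isCoprime [IsDomain O] [IsPrincipalIdealRing O] [IsFractionRing O K]
    [Northcott N] (h : HeightLE N T x) : ∃ p r : O, IsCoprime p r ∧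
      x * algebraMap O K r = algebraMap O K p ∧ N p ≤ T ∧ N r ≤ T := by
  obtain ⟨α, β, hβ, hαβ, hα, hβT⟩ := h
  obtain ⟨p, r, hr, hco, hx⟩ := exists_isCoprime_mul_algebraMap_eq (O := O) x
  have hcross : α * r = p * β := IsFractionRing.injective O K (by
    rw [map_mul, map_mul, ← hαβ, ← hx]
    ring)
  obtain ⟨g, rfl⟩ : r ∣ β := hco.symm.dvd_of_dvd_mul_left ⟨α, by rw [← hcross, mul_comm]⟩
  obtain rfl : α = p * g := mul_right_cancel₀ hr (by rw [hcross]; ring)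
  have hg : 1 ≤ N g := one_le_abv_of_ne_zero (right_ne_zero_of_mul hβ)
  rw [map_mul] at hα hβT
  exact ⟨p, r, hco, hx, (le_mul_of_one_le_right (N.nonneg p) hg).trans hα,
    (le_mul_of_one_le_right (N.nonneg r) hg).trans hβT⟩

lemma exists_eq_mul_and_eq_mul_of_isCoprime {R : Type*} [CommRing R] {a b x y : R}
    (hab : IsCoprime a b) (h : a * y = b * x) : ∃ z, x = a * z ∧ y = b * z := by
  obtain ⟨s, t, hst⟩ := hab
  exact ⟨s * x + t * y, by linear_combination (-x) * hst - t * h,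
    by linear_combination (-y) * hst + s * h⟩

lemma dvd_mul_add_mul_pow_five {R : Type*} [CommRing R] {a b z : R} (ha : z ∣ a ^ 3)
    (hb : z ∣ b ^ 3) (x y : R) : z ∣ (x * a + y * b) ^ 5 := by
  rw [← Ideal.mem_span_singleton] at ha hb ⊢
  refine Ideal.add_pow_add_pred_mem_of_pow_mem (m := 3) (n := 3) _ ?_ ?_ <;>
    rw [mul_pow] <;> exact Ideal.mul_mem_left _ _ ‹_›

section CubeDescent

variable {w α β p r : O}

/-- For coprime `p` and `r`, a common divisor of `p - w² r` and `p - w r` divides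
`2w + 1 = √-3`. -/
lemma exists_cube_eq_mul_and_dvd (hw : w ^ 2 + w + 1 = 0) (hαβ : IsCoprime α β)
    (hpr : IsCoprime p r)
    (h : α * (p - w * r) ^ 3 = (α + β) * (p - w ^ 2 * r) ^ 3) :
    ∃ z, (p - w ^ 2 * r) ^ 3 = α * z ∧ (p - w * r) ^ 3 = (α + β) * z ∧ z ∣ (2 * w + 1) ^ 5 := by
  have hco : IsCoprime α (α + β) := by simpa [add_comm] using hαβ.add_mul_left_right 1
  obtain ⟨z, hA, hB⟩ := exists_eq_mul_and_eq_mul_of_isCoprime hco h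
  obtain ⟨s, t, hst⟩ := hpr
  have hθ : 2 * w + 1 = (s * w + t) * (p - w ^ 2 * r) + (-s * w ^ 2 - t) * (p - w * r) := by
    linear_combination (-(2 * w + 1)) * hst + (s * p + t * r) * hw
  exact ⟨z, hA, hB, hθ ▸ dvd_mul_add_mul_pow_five (hA ▸ dvd_mul_left z α)
    (hB ▸ dvd_mul_left z (α + β)) _ _⟩

lemma abv_le_of_pow_three_eq_mul [IsDomain O] {a b z : O} {M : ℝ} (hT : 0 ≤ T) (hM : 1 ≤ M)
    (h : a ^ 3 = b * z) (hb : N b ≤ 2 * T ^ 3) (hz : N z ≤ M) : N a ≤ 2 * M * T := by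
  have hM3 : M ≤ M ^ 3 := le_self_pow₀ hM three_ne_zero
  refine le_of_pow_le_pow_left₀ three_ne_zero (by positivity) ?_
  calc N a ^ 3 = N b * N z := by rw [← map_pow, h, map_mul]
    _ ≤ 2 * T ^ 3 * M := by gcongr
    _ ≤ 8 * T ^ 3 * M ^ 3 := by gcongr; norm_num
    _ = (2 * M * T) ^ 3 := by ring

lemma abv_eq_one_of_sq_add_self_add_one_eq_zero [IsDomain O] [Northcott N]
    (hw : w ^ 2 + w + 1 = 0) : N w = 1 := by
  obtain ⟨e, rfl⟩ : IsUnit w := IsUnit.of_mul_eq_one (-(w + 1)) (by linear_combination -hw)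
  exact abv_unit_eq_one e

lemma HeightLE.of_mul_sub_pow_three_eq [IsDomain O] [IsPrincipalIdealRing O] [IsFractionRing O K]
    [Northcott N] (hw : w ^ 2 + w + 1 = 0) (hθ : 2 * w + 1 ≠ 0) (hy : HeightLE N (T ^ 3) y)
    (hT : 0 ≤ T)
    (h : y * (x - algebraMap O K w) ^ 3 = (y + 1) * (x - algebraMap O K w ^ 2) ^ 3) :
    HeightLE N (4 * N (2 * w + 1) ^ 5 * T) x := by
  obtain ⟨α, β, hαβ, hyαβ, hα, hβ⟩ := hy.exists_isCoprime
  obtain ⟨p, r, hr, hpr, hx⟩ := exists_isCoprime_mul_algebraMap_eq (O := O) x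
  have hcross : α * (p - w * r) ^ 3 = (α + β) * (p - w ^ 2 * r) ^ 3 :=
    IsFractionRing.injective O K (by
      simp only [map_mul, map_pow, map_add, map_sub, ← hx, ← hyαβ]
      linear_combination (algebraMap O K β * algebraMap O K r ^ 3) * h)
  obtain ⟨z, hA, hB, hz⟩ := exists_cube_eq_mul_and_dvd hw hαβ hpr hcross
  set τ := N (2 * w + 1) with hτ
  have hτ1 : 1 ≤ τ := one_le_abv_of_ne_zero hθ
  have hzN : N z ≤ τ ^ 5 := by simpa [hτ] using abv_le_of_dvd (N := N) (pow_ne_zero 5 hθ) hz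
  have hA' := abv_le_of_pow_three_eq_mul hT (one_le_pow₀ hτ1) hA
    (by linarith [pow_nonneg hT 3]) hzN
  have hB' := abv_le_of_pow_three_eq_mul hT (one_le_pow₀ hτ1) hB
    ((N.add_le α β).trans (by linarith)) hzN
  have hsmall : ∀ {a b c : O}, (2 * w + 1) * a = b * (p - w ^ 2 * r) - c * (p - w * r) →
      N b = 1 → N c = 1 → N a ≤ 4 * τ ^ 5 * T := fun {a b c} ha hb hc => by
    refine (le_mul_of_one_le_left (N.nonneg a) hτ1).trans ?_
    rw [hτ, ← map_mul, ha, sub_eq_add_neg]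
    refine (N.add_le _ _).trans ?_
    rw [N.map_neg, map_mul, map_mul, hb, hc]
    linarith
  have hwN : N w = 1 := abv_eq_one_of_sq_add_self_add_one_eq_zero hw
  exact ⟨p, r, hr, hx,
    hsmall (b := w) (c := w ^ 2) (by linear_combination p * hw) hwN (by simp [hwN]),
    hsmall (b := 1) (c := 1) (by linear_combination r * hw) (map_one N) (map_one N)⟩

end CubeDescent

end Height

section PowerBound

variable {O : Type*} [CommRing O] [IsDomain O] {K : Type*} [Field K] [Algebra O K]
  {N : AbsoluteValue O ℝ} {b : ℝ} {m n : ℕ} {x y : K}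

lemma HeightLE.add_of_pow (hb : 2 ≤ b) (hx : HeightLE N (b ^ m) x) (hy : HeightLE N (b ^ n) y) :
    HeightLE N (b ^ (m + n + 1)) (x + y) := by
  refine (hx.add hy).mono ?_
  have : 0 ≤ b ^ m * b ^ n := by positivity
  rw [pow_succ, pow_add]
  nlinarith

lemma HeightLE.sub_of_pow (hb : 2 ≤ b) (hx : HeightLE N (b ^ m) x) (hy : HeightLE N (b ^ n) y) :
    HeightLE N (b ^ (m + n + 1)) (x - y) :=
  sub_eq_add_neg x y ▸ hx.add_of_pow hb hy.neg

lemma HeightLE.mul_of_pow (hx : HeightLE N (b ^ m) x) (hy : HeightLE N (b ^ n) y) :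
    HeightLE N (b ^ (m + n)) (x * y) :=
  pow_add b m n ▸ hx.mul hy

lemma HeightLE.div_of_pow [FaithfulSMul O K] (hx : HeightLE N (b ^ m) x)
    (hy : HeightLE N (b ^ n) y) : HeightLE N (b ^ (m + n)) (x / y) :=
  div_eq_mul_inv x y ▸ hx.mul_of_pow hy.inv

end PowerBound

/-- The affine Weierstrass curve `v² + k v = u³`. For `k ≠ 0` it is an elliptic curve with complex
multiplication by the Eisenstein integers, and every cubic `A X³ + B Y³ = m` maps to such a
curve. -/
def mordellCurve {K : Type*} [Field K] (k : K) : WeierstrassCurve.Affine K := ⟨0, 0, k, 0, 0⟩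

namespace mordellCurve

open WeierstrassCurve.Affine

section Basic

variable {K : Type*} [Field K] {k u v w : K}

lemma equation_iff : (mordellCurve k).Equation u v ↔ v ^ 2 + k * v = u ^ 3 := by
  simp [WeierstrassCurve.Affine.equation_iff, mordellCurve]

lemma nonsingular_iff : (mordellCurve k).Nonsingular u v ↔
    v ^ 2 + k * v = u ^ 3 ∧ (3 * u ^ 2 ≠ 0 ∨ 2 * v + k ≠ 0) := by
  have hsub : v - (-v - k) = 2 * v + k := by ring
  rw [WeierstrassCurve.Affine.nonsingular_iff, equation_iff, ← hsub, sub_ne_zero]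
  simp [mordellCurve, eq_comm]

lemma nonsingular_of_eq (hk : k ≠ 0) (h3 : (3 : K) ≠ 0) (h : v ^ 2 + k * v = u ^ 3) :
    (mordellCurve k).Nonsingular u v := by
  refine nonsingular_iff.2 ⟨h, ?_⟩
  by_contra! hsing
  have hu : u = 0 := by simpa [h3] using hsing.1
  subst hu
  refine pow_ne_zero 2 hk ?_
  linear_combination (-4) * h + (2 * v + k) * hsing.2

lemma eq_of_nonsingular (h : (mordellCurve k).Nonsingular u v) : v ^ 2 + k * v = u ^ 3 :=
  (nonsingular_iff.1 h).1

lemma nonsingular_mul_left (hw : w ^ 3 = 1) (h : (mordellCurve k).Nonsingular u v) :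
    (mordellCurve k).Nonsingular (w * u) v := by
  have hw0 : w ≠ 0 := by rintro rfl; simp at hw
  rw [nonsingular_iff] at h ⊢
  refine ⟨by rw [mul_pow, hw, one_mul, h.1], h.2.imp_left fun h3u => ?_⟩
  simp_all

lemma point_some_congr {u' v' : K} {h : (mordellCurve k).Nonsingular u v}
    {h' : (mordellCurve k).Nonsingular u' v'} (hu : u = u') (hv : v = v') :
    (Point.some u v h : (mordellCurve k).Point) = Point.some u' v' h' := by
  subst hu hv; rfl

lemma negY_eq (k u v : K) : (mordellCurve k).negY u v = -v - k := by
  simp [negY, mordellCurve]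

lemma pow_three_eq_one (hw : w ^ 2 + w + 1 = 0) : w ^ 3 = 1 := by
  linear_combination (w - 1) * hw

lemma sq_pow_three_eq_one (hw : w ^ 2 + w + 1 = 0) : (w ^ 2) ^ 3 = 1 := by
  linear_combination (w - 1) * (w ^ 3 + 1) * hw

lemma two_mul_add_one_sq (hw : w ^ 2 + w + 1 = 0) : (2 * w + 1) ^ 2 = -3 := by
  linear_combination 4 * hw

lemma two_mul_add_one_ne_zero (hw : w ^ 2 + w + 1 = 0) (h3 : (3 : K) ≠ 0) : 2 * w + 1 ≠ 0 := by
  intro h0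
  apply h3
  linear_combination two_mul_add_one_sq hw - (2 * w + 1) * h0

end Basic

section ComplexMultiplication

variable {K : Type*} [Field K] [DecidableEq K] {k u v w : K}

lemma slope_mul_left (hw : w ^ 3 = 1) {u₁ u₂ v₁ v₂ : K}
    (hxy : ¬(u₁ = u₂ ∧ v₁ = (mordellCurve k).negY u₂ v₂)) :
    (mordellCurve k).slope (w * u₁) (w * u₂) v₁ v₂
      = w ^ 2 * (mordellCurve k).slope u₁ u₂ v₁ v₂ := by
  have hw0 : w ≠ 0 := by rintro rfl; simp at hw
  rw [negY_eq] at hxy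
  rcases eq_or_ne u₁ u₂ with rfl | hu
  · have hv : v₁ ≠ -v₂ - k := fun h => hxy ⟨rfl, h⟩
    rw [slope_of_Y_ne rfl (by rwa [negY_eq]), slope_of_Y_ne rfl (by rwa [negY_eq]), negY_eq,
      negY_eq, ← mul_div_assoc]
    simp only [mordellCurve]
    ring
  · have hsub : u₁ - u₂ ≠ 0 := sub_ne_zero.2 hu
    rw [slope_of_X_ne hu, slope_of_X_ne (mul_right_injective₀ hw0 |>.ne hu), ← mul_sub]
    field_simp
    linear_combination -(v₁ - v₂) * hw

/-- Multiplication of the `u`-coordinate by a cube root of unity `w`, as a map on points. -/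
def mulPoint (k : K) (hw : w ^ 3 = 1) : (mordellCurve k).Point → (mordellCurve k).Point
  | .zero => .zero
  | .some u v h => .some (w * u) v (nonsingular_mul_left hw h)

lemma mulPoint_add (hw : w ^ 3 = 1) (P Q : (mordellCurve k).Point) :
    mulPoint k hw (P + Q) = mulPoint k hw P + mulPoint k hw Q := by
  have hw0 : w ≠ 0 := by rintro rfl; simp at hw
  rcases P with _ | ⟨u₁, v₁, h₁⟩
  · change mulPoint k hw (0 + Q) = 0 + mulPoint k hw Q
    rw [zero_add, zero_add]
  rcases Q with _ | ⟨u₂, v₂, h₂⟩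
  · change mulPoint k hw (_ + 0) = mulPoint k hw _ + 0
    rw [add_zero, add_zero]
  have hxy_iff : (w * u₁ = w * u₂ ∧ v₁ = (mordellCurve k).negY (w * u₂) v₂) ↔
      (u₁ = u₂ ∧ v₁ = (mordellCurve k).negY u₂ v₂) := by
    simp only [negY_eq, mul_right_inj' hw0]
  by_cases hxy : u₁ = u₂ ∧ v₁ = (mordellCurve k).negY u₂ v₂
  · obtain ⟨hX, hY⟩ := hxy_iff.2 hxy
    simp only [mulPoint, Point.add_of_Y_eq hxy.1 hxy.2, Point.add_of_Y_eq hX hY]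
    rfl
  · rw [Point.add_some hxy]
    simp only [mulPoint]
    rw [Point.add_some (mt hxy_iff.1 hxy)]
    apply point_some_congr <;> rw [slope_mul_left hw hxy] <;>
      generalize (mordellCurve k).slope u₁ u₂ v₁ v₂ = m
    · simp only [addX, mordellCurve]
      linear_combination -(w * m ^ 2) * hw
    · simp only [addY, negAddY, negY, addX, mordellCurve]
      linear_combination (m ^ 3 * (w ^ 3 + 1) - m * (2 * u₁ + u₂)) * hw

/-- `mulPoint` as an endomorphism of the group of points. -/
def mulPointHom (k : K) (hw : w ^ 3 = 1) : (mordellCurve k).Point →+ (mordellCurve k).Point :=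
  AddMonoidHom.mk' (mulPoint k hw) (mulPoint_add hw)

/-- The endomorphism `ω - ω²` of degree `3`, for a primitive cube root of unity `ω = w`; it is the
isogeny along which we descend. -/
def phi (k : K) (hw : w ^ 2 + w + 1 = 0) : (mordellCurve k).Point →+ (mordellCurve k).Point :=
  mulPointHom k (pow_three_eq_one hw) - mulPointHom k (sq_pow_three_eq_one hw)

/-- The line through `ω P` and `-ω² P` has slope `l = (2 v + k) / ((2 ω + 1) u)`. -/
lemma exists_slope_phi_some (hw : w ^ 2 + w + 1 = 0) (h3 : (3 : K) ≠ 0)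
    (h : (mordellCurve k).Nonsingular u v) (hu : u ≠ 0) :
    ∃ l u' v' h', phi k hw (.some u v h) = .some u' v' h' ∧ l * ((2 * w + 1) * u) = 2 * v + k ∧
      u' = l ^ 2 + u ∧ v' = -(l * (u' - w * u) + v) - k := by
  have hden : w * u - w ^ 2 * u = (2 * w + 1) * u := by linear_combination -u * hw
  have hden0 : (2 * w + 1) * u ≠ 0 := mul_ne_zero (two_mul_add_one_ne_zero hw h3) hu
  have hne : w * u ≠ w ^ 2 * u := sub_ne_zero.1 (hden ▸ hden0)
  have hval : phi k hw (.some u v h) = Point.some _ _ (nonsingular_mul_left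
      (pow_three_eq_one hw) h) - Point.some _ _ (nonsingular_mul_left (sq_pow_three_eq_one hw) h) :=
    rfl
  rw [hval, sub_eq_add_neg, Point.neg_some, Point.add_of_X_ne hne]
  refine ⟨(mordellCurve k).slope (w * u) (w ^ 2 * u) v
    ((mordellCurve k).negY (w ^ 2 * u) v), _, _, _, rfl, ?_, ?_, ?_⟩
  · rw [slope_of_X_ne hne, hden, div_mul_cancel₀ _ hden0, negY_eq]
    ring
  · simp only [addX, mordellCurve]
    linear_combination -u * hw
  · simp only [addY, negAddY, negY, mordellCurve]
    ring

lemma exists_phi_some (hw : w ^ 2 + w + 1 = 0) (h3 : (3 : K) ≠ 0)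
    (h : (mordellCurve k).Nonsingular u v) (hu : u ≠ 0) :
    ∃ u' v' h', phi k hw (.some u v h) = .some u' v' h' ∧
      u' * (3 * u ^ 2) = -(u ^ 3 + k ^ 2) ∧
      v' * ((2 * w + 1) * 3 * u ^ 3) = -(v - w ^ 2 * k) ^ 3 ∧
      (v' + k) * ((2 * w + 1) * 3 * u ^ 3) = -(v - w * k) ^ 3 := by
  obtain ⟨l, u', v', h', hphi, hl, hu', hv'⟩ := exists_slope_phi_some hw h3 h hu
  have he := eq_of_nonsingular h
  have hs := two_mul_add_one_sq hw
  have hw3 := pow_three_eq_one hw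
  have hl2 : l ^ 2 * (3 * u ^ 2) = -(2 * v + k) ^ 2 := by
    rw [← hl]; linear_combination (l ^ 2 * u ^ 2) * hs
  have hX : u' * (3 * u ^ 2) = -(u ^ 3 + k ^ 2) := by
    rw [hu']; linear_combination hl2 - 4 * he
  have hlX : l * (u' - w * u) * ((2 * w + 1) * 3 * u ^ 3)
      = (2 * v + k) * (-(u ^ 3 + k ^ 2) - 3 * w * u ^ 3) := by
    rw [← hX, ← hl]; ring
  have hY : v' * ((2 * w + 1) * 3 * u ^ 3) = -(v - w ^ 2 * k) ^ 3 := by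
    have hsplit : v' * ((2 * w + 1) * 3 * u ^ 3)
        = -((2 * v + k) * (-(u ^ 3 + k ^ 2) - 3 * w * u ^ 3))
          - (v + k) * ((2 * w + 1) * 3 * u ^ 3) := by
      rw [← hlX, hv']; ring
    rw [hsplit, ← he]
    linear_combination (-3 * k * v ^ 2) * hw + (3 * k ^ 2 * v * w - k ^ 3 * (w ^ 3 + 1)) * hw3
  refine ⟨u', v', h', hphi, hX, hY, ?_⟩
  linear_combination hY + (-3 * k * (2 * w + 1)) * he +
    (3 * k * v ^ 2 + 3 * k ^ 2 * v) * hw + (-3 * k ^ 2 * v * w + k ^ 3 * w ^ 3) * hw3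

/-- Writing `u = x s`, the curve equation gives `k = x³ - s³`; a preimage has first coordinate
`-(x² + x s + s²)`. -/
lemma mem_range_phi_of_eq_cube (hw : w ^ 2 + w + 1 = 0) (h3 : (3 : K) ≠ 0) (hk : k ≠ 0) {s : K}
    (h : (mordellCurve k).Nonsingular u v) (hs : s ≠ 0) (hv : v = s ^ 3) :
    Point.some u v h ∈ (phi k hw).range := by
  have he := eq_of_nonsingular h
  subst hv
  obtain ⟨x, rfl⟩ : ∃ x, u = x * s := ⟨u / s, by field_simp⟩
  have hkx : k = x ^ 3 - s ^ 3 := by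
    apply mul_left_cancel₀ (pow_ne_zero 3 hs)
    linear_combination he
  obtain ⟨U, hU⟩ : ∃ U, U = -(x ^ 2 + x * s + s ^ 2) := ⟨_, rfl⟩
  have hU0 : U ≠ 0 := by
    rintro rfl; apply hk; rw [hkx]; linear_combination (x - s) * hU
  have hns : (mordellCurve k).Nonsingular U (w ^ 2 * k + (2 * w + 1) * s * U) := by
    apply nonsingular_of_eq hk h3
    rw [hkx, hU]
    linear_combination (x ^ 2 + x * s + s ^ 2) ^ 2 *
      ((x - s) ^ 2 * (w ^ 2 - w + 1) + (x - s) * s * (2 - 4 * w) + 4 * s ^ 2) * hw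
  obtain ⟨u', v', h', hphi, hu', hv', -⟩ := exists_phi_some hw h3 hns hU0
  refine ⟨_, hphi.trans (point_some_congr ?_ ?_)⟩
  · apply mul_right_cancel₀ (mul_ne_zero h3 (pow_ne_zero 2 hU0))
    rw [hu', hkx, hU]; ring
  · apply mul_right_cancel₀ (mul_ne_zero (mul_ne_zero (two_mul_add_one_ne_zero hw h3) h3)
      (pow_ne_zero 3 hU0))
    rw [hv']
    linear_combination (-(2 * w + 1) * s ^ 3 * U ^ 3) * two_mul_add_one_sq hw

end ComplexMultiplication

section Kummer

variable {K : Type*} [Field K] [DecidableEq K] {k w : K}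

/-- The representative in `Kˣ` of the Kummer class of a point with second coordinate `v`. The class
of `(u, v)` is that of `v`, except at `(0, 0)`, where `v (v + k) = u³` forces the value `k²`, up to
cubes the inverse of `v + k`. -/
def kummerRep (k v : K) : K := if v = 0 then k ^ 2 else v

lemma kummerRep_zero (k : K) : kummerRep k 0 = k ^ 2 := if_pos rfl

lemma kummerRep_of_ne_zero {v : K} (hv : v ≠ 0) : kummerRep k v = v := if_neg hv

lemma kummerRep_ne_zero (hk : k ≠ 0) (v : K) : kummerRep k v ≠ 0 := by
  unfold kummerRep
  split_ifs with hv
  exacts [pow_ne_zero 2 hk, hv]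

lemma exists_kummerRep_mul_neg_eq_cube (hk : k ≠ 0) {u v : K} (h : v ^ 2 + k * v = u ^ 3) :
    ∃ s, kummerRep k v * kummerRep k (-v - k) = s ^ 3 := by
  rcases eq_or_ne v 0 with rfl | hv
  · refine ⟨-k, ?_⟩
    rw [kummerRep_zero, kummerRep_of_ne_zero (by simpa using hk)]
    ring
  rcases eq_or_ne (-v - k) 0 with hv' | hv'
  · refine ⟨-k, ?_⟩
    rw [hv', kummerRep_zero, kummerRep_of_ne_zero hv]
    linear_combination -k ^ 2 * hv'
  · refine ⟨-u, ?_⟩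
    rw [kummerRep_of_ne_zero hv, kummerRep_of_ne_zero hv']
    linear_combination -h

/-- Vieta's formulas for the cubic obtained by substituting `v = l u + n`. -/
lemma exists_line {u₁ v₁ u₂ v₂ : K} (h₁ : (mordellCurve k).Nonsingular u₁ v₁)
    (h₂ : (mordellCurve k).Nonsingular u₂ v₂)
    (hxy : ¬(u₁ = u₂ ∧ v₁ = (mordellCurve k).negY u₂ v₂)) :
    ∃ l n u₃ v₃ h₃, -(Point.some u₁ v₁ h₁ + Point.some u₂ v₂ h₂) = Point.some u₃ v₃ h₃ ∧
      v₁ = l * u₁ + n ∧ v₂ = l * u₂ + n ∧ v₃ = l * u₃ + n ∧ u₁ + u₂ + u₃ = l ^ 2 ∧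
      u₁ * u₂ + u₁ * u₃ + u₂ * u₃ = -(2 * l * n + k * l) ∧ u₁ * u₂ * u₃ = n ^ 2 + k * n := by
  have hpoly := addPolynomial_slope h₁.1 h₂.1 hxy
  rw [addPolynomial_eq, neg_inj, Cubic.prod_X_sub_C_eq, Cubic.toPoly_injective] at hpoly
  have hv₂ : v₂ = (mordellCurve k).slope u₁ u₂ v₁ v₂ * (u₂ - u₁) + v₁ := by
    rcases eq_or_ne u₁ u₂ with rfl | hu
    · rw [Y_eq_of_Y_ne h₁.1 h₂.1 rfl fun h => hxy ⟨rfl, h⟩]; ring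
    · rw [slope_of_X_ne hu, ← neg_sub u₁ u₂, mul_neg, div_mul_cancel₀ _ (sub_ne_zero.2 hu)]; ring
  set l := (mordellCurve k).slope u₁ u₂ v₁ v₂
  simp only [Cubic.ext_iff, mordellCurve, true_and] at hpoly
  obtain ⟨hsum, hpairs, hprod⟩ := hpoly
  refine ⟨l, v₁ - l * u₁, (mordellCurve k).addX u₁ u₂ l, (mordellCurve k).negAddY u₁ u₂ v₁ l,
    (nonsingular_neg _ _).1 (nonsingular_add h₁ h₂ hxy), ?_, by ring, by linear_combination hv₂, ?_,
    ?_, ?_, ?_⟩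
  · rw [Point.add_some hxy, Point.neg_some]
    exact point_some_congr rfl (negY_negY _ _)
  · rw [negAddY]; ring
  · simp only [mordellCurve]; linear_combination hsum
  · simp only [mordellCurve]; linear_combination -hpairs
  · simp only [mordellCurve]; linear_combination hprod

/-- A line `v = l u` through `(0, 0)` meets the curve again where the product of the two values of
`v` is `-k l³`. -/
lemma exists_kummerRep_prod_eq_cube_of_line_through_zero (hk : k ≠ 0) {l a b : K}
    (hab : a * b = -(k * l)) :
    ∃ s, kummerRep k 0 * kummerRep k (l * a) * kummerRep k (l * b) = s ^ 3 := by
  rcases eq_or_ne l 0 with rfl | hl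
  · exact ⟨k ^ 2, by simp only [zero_mul, kummerRep_zero]; ring⟩
  · have hab0 : a * b ≠ 0 := by rw [hab]; exact neg_ne_zero.2 (mul_ne_zero hk hl)
    refine ⟨-(k * l), ?_⟩
    rw [kummerRep_zero, kummerRep_of_ne_zero (mul_ne_zero hl (left_ne_zero_of_mul hab0)),
      kummerRep_of_ne_zero (mul_ne_zero hl (right_ne_zero_of_mul hab0))]
    linear_combination (k ^ 2 * l ^ 2) * hab

lemma exists_kummerRep_prod_eq_cube_of_line (hk : k ≠ 0) {l n u₁ u₂ u₃ : K}
    (hsum : u₁ + u₂ + u₃ = l ^ 2) (hpairs : u₁ * u₂ + u₁ * u₃ + u₂ * u₃ = -(2 * l * n + k * l))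
    (hprod : u₁ * u₂ * u₃ = n ^ 2 + k * n) :
    ∃ s, kummerRep k (l * u₁ + n) * kummerRep k (l * u₂ + n) * kummerRep k (l * u₃ + n)
      = s ^ 3 := by
  rcases eq_or_ne n 0 with rfl | hn
  · simp only [add_zero]
    have hzero : u₁ * u₂ * u₃ = 0 := by rw [hprod]; ring
    rcases mul_eq_zero.1 hzero with h | rfl
    · rcases mul_eq_zero.1 h with rfl | rfl
      · rw [mul_zero l]
        exact exists_kummerRep_prod_eq_cube_of_line_through_zero hk (by linear_combination hpairs)
      · rw [mul_zero l, mul_comm (kummerRep k (l * u₁))]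
        exact exists_kummerRep_prod_eq_cube_of_line_through_zero hk (by linear_combination hpairs)
    · rw [mul_zero l, mul_comm, ← mul_assoc]
      exact exists_kummerRep_prod_eq_cube_of_line_through_zero hk (by linear_combination hpairs)
  · have hvvv : (l * u₁ + n) * (l * u₂ + n) * (l * u₃ + n) = n ^ 3 := by
      linear_combination (l * n ^ 2) * hsum + (l ^ 2 * n) * hpairs + l ^ 3 * hprod
    have hne : (l * u₁ + n) * (l * u₂ + n) * (l * u₃ + n) ≠ 0 := hvvv ▸ pow_ne_zero 3 hn
    refine ⟨n, ?_⟩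
    rw [kummerRep_of_ne_zero (left_ne_zero_of_mul (left_ne_zero_of_mul hne)),
      kummerRep_of_ne_zero (right_ne_zero_of_mul (left_ne_zero_of_mul hne)),
      kummerRep_of_ne_zero (right_ne_zero_of_mul hne), hvvv]

/-- The Kummer class of a point, as a map. -/
def kummerFun (hk : k ≠ 0) : (mordellCurve k).Point → UnitsModCubes K
  | .zero => 0
  | .some _ v _ => cubeClass (kummerRep_ne_zero hk v)

lemma kummerFun_neg (hk : k ≠ 0) (P : (mordellCurve k).Point) :
    kummerFun hk (-P) = -kummerFun hk P := by
  rcases P with _ | ⟨u, v, h⟩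
  · exact neg_zero.symm
  · rw [eq_neg_iff_add_eq_zero, add_comm, Point.neg_some]
    simp only [kummerFun, negY_eq]
    rw [← cubeClass_mul, cubeClass_eq_zero_iff]
    exact exists_kummerRep_mul_neg_eq_cube hk (eq_of_nonsingular h)

lemma kummerFun_add (hk : k ≠ 0) (P Q : (mordellCurve k).Point) :
    kummerFun hk (P + Q) = kummerFun hk P + kummerFun hk Q := by
  rcases P with _ | ⟨u₁, v₁, h₁⟩
  · change kummerFun hk (0 + Q) = 0 + kummerFun hk Q
    rw [zero_add, zero_add]
  rcases Q with _ | ⟨u₂, v₂, h₂⟩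
  · change kummerFun hk (_ + 0) = kummerFun hk _ + 0
    rw [add_zero, add_zero]
  by_cases hxy : u₁ = u₂ ∧ v₁ = (mordellCurve k).negY u₂ v₂
  · have hneg : Point.some u₁ v₁ h₁ = -Point.some u₂ v₂ h₂ := by
      rw [Point.neg_some]; exact point_some_congr hxy.1 hxy.2
    rw [hneg, neg_add_cancel, kummerFun_neg, neg_add_cancel]
    rfl
  · obtain ⟨l, n, u₃, v₃, h₃, hsum, hv₁, hv₂, hv₃, he₁, he₂, he₃⟩ := exists_line h₁ h₂ hxy
    rw [← neg_neg (Point.some u₁ v₁ h₁ + _), hsum, kummerFun_neg, eq_comm, eq_neg_iff_add_eq_zero]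
    simp only [kummerFun]
    rw [← cubeClass_mul, ← cubeClass_mul, cubeClass_eq_zero_iff, hv₁, hv₂, hv₃]
    exact exists_kummerRep_prod_eq_cube_of_line hk he₁ he₂ he₃

/-- The Kummer homomorphism attached to the isogeny `phi`. -/
def kummerHom (hk : k ≠ 0) : (mordellCurve k).Point →+ UnitsModCubes K :=
  AddMonoidHom.mk' (kummerFun hk) (kummerFun_add hk)

lemma ker_kummerHom_le_range_phi (hw : w ^ 2 + w + 1 = 0) (h3 : (3 : K) ≠ 0) (hk : k ≠ 0) :
    (kummerHom hk).ker ≤ (phi k hw).range := by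
  rintro (_ | ⟨u, v, h⟩) hP
  · exact zero_mem _
  obtain ⟨s, hs⟩ := (cubeClass_eq_zero_iff (kummerRep_ne_zero hk v)).1 hP
  have hs0 : s ≠ 0 := by
    rintro rfl; exact kummerRep_ne_zero hk v (by simpa using hs)
  rcases eq_or_ne v 0 with rfl | hv
  · rw [kummerRep_zero] at hs
    rw [← neg_mem_iff, Point.neg_some]
    have hks : -k / s ≠ 0 := div_ne_zero (neg_ne_zero.2 hk) hs0
    refine mem_range_phi_of_eq_cube hw h3 hk _ hks ?_
    rw [negY_eq, div_pow, ← hs]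
    field_simp
    ring
  · rw [kummerRep_of_ne_zero hv] at hs
    exact mem_range_phi_of_eq_cube hw h3 hk h hs0 hs

end Kummer

section FiniteIndex

variable {O : Type*} [CommRing O] [IsDomain O] [IsPrincipalIdealRing O]

lemma exists_dvd_sq_mul_cube_of_mul_eq_cube {k α β e : O} {ε : Oˣ} (he : e ≠ 0)
    (hco : IsCoprime α β) (h : α * ((α + k * β) * ε) = e ^ 3) :
    ∃ d c, α = d * c ^ 3 ∧ d ∣ k ^ 2 := by
  have hα : α ≠ 0 := left_ne_zero_of_mul (h ▸ pow_ne_zero 3 he)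
  obtain ⟨d, c, hdc, hd⟩ := exists_powerFree_decomposition three_ne_zero hα
  refine ⟨d, c, hdc, dvd_pow_of_prime_dvd (left_ne_zero_of_mul (hdc ▸ hα)) hd fun p hp hpd => ?_⟩
  by_contra hpk
  have hpα : p ∣ α := hdc ▸ hpd.mul_right _
  have hpβ : ¬p ∣ β := fun hpβ => hp.not_isUnit (hco.isUnit_of_dvd' hpα hpβ)
  have hpm : ¬p ∣ (α + k * β) * ε := by
    rw [Units.dvd_mul_right, dvd_add_right hpα, hp.dvd_mul]
    exact not_or.2 ⟨hpk, hpβ⟩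
  exact not_dvd_of_mul_eq_pow three_ne_zero hp he (hd p hp) hpm (by rw [← hdc, h]) hpd

lemma exists_dvd_sq_of_mul_mul_eq_cube {k α β γ : O} (hγ : γ ≠ 0) (hco : IsCoprime α β)
    (h : α * (α + k * β) * β = γ ^ 3) :
    ∃ D b c, D ∣ k ^ 2 ∧ b ≠ 0 ∧ α * b ^ 3 = D * c ^ 3 * β := by
  have hβ : β ≠ 0 := right_ne_zero_of_mul (h ▸ pow_ne_zero 3 hγ)
  have hcop : IsCoprime (α * (α + k * β)) β := hco.mul_left (IsCoprime.add_mul_right_left hco k)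
  obtain ⟨e, ε, he⟩ := exists_associated_pow_of_mul_eq_pow' hcop h
  obtain ⟨b, δ, hb⟩ := exists_associated_pow_of_mul_eq_pow' hcop.symm ((mul_comm _ _).trans h)
  have he0 : e ≠ 0 := by
    rintro rfl
    exact left_ne_zero_of_mul (h ▸ pow_ne_zero 3 hγ) (by simp [← he])
  obtain ⟨d, c, rfl, hd⟩ := exists_dvd_sq_mul_cube_of_mul_eq_cube (ε := ε⁻¹) he0 hco
    (by rw [← mul_assoc, ← he, Units.mul_inv_cancel_right])
  refine ⟨d * ↑δ⁻¹, b, c, Units.mul_right_dvd.2 hd, by rintro rfl; simp [← hb] at hβ, ?_⟩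
  rw [← hb]
  linear_combination -(d * c ^ 3 * b ^ 3) * δ.inv_mul

/-- The Kummer class of a point over the fraction field is ramified only at primes dividing `k`. -/
lemma exists_dvd_sq_kummerRep {K : Type*} [Field K] [DecidableEq K] [Algebra O K]
    [IsFractionRing O K] {k : O} {u v : K} (h : v ^ 2 + algebraMap O K k * v = u ^ 3) :
    ∃ D s, D ∣ k ^ 2 ∧ kummerRep (algebraMap O K k) v = algebraMap O K D * s ^ 3 := by
  set A := algebraMap O K
  rcases eq_or_ne v 0 with rfl | hv
  · exact ⟨k ^ 2, 1, dvd_rfl, by rw [kummerRep_zero]; simp [A]⟩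
  rw [kummerRep_of_ne_zero hv]
  rcases eq_or_ne u 0 with rfl | hu
  · refine ⟨-k, 1, neg_dvd.2 (dvd_pow_self k two_ne_zero), mul_left_cancel₀ hv ?_⟩
    rw [map_neg]
    linear_combination h
  obtain ⟨α, β, hβ, hco, rfl⟩ : ∃ α β : O, β ≠ 0 ∧ IsCoprime α β ∧ A α / A β = v :=
    ⟨_, _, nonZeroDivisors.coe_ne_zero _, (IsFractionRing.num_den_reduced O v).isCoprime,
      IsFractionRing.mk'_num_den' O v⟩
  have hAβ : A β ≠ 0 := by simpa [A] using hβ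
  have hcube : A (α * (α + k * β) * β) = (u * A β) ^ 3 := by
    rw [mul_pow, ← h]
    simp only [map_mul, map_add]
    field_simp
  obtain ⟨γ, hγ⟩ := IsIntegrallyClosed.exists_algebraMap_eq_of_isIntegral_pow three_pos
    (hcube ▸ isIntegral_algebraMap : IsIntegral O ((u * A β) ^ 3))
  have hγ0 : γ ≠ 0 := by
    rintro rfl
    exact mul_ne_zero hu hAβ (by rw [← hγ, map_zero])
  obtain ⟨D, b, c, hD, hb, hDbc⟩ := exists_dvd_sq_of_mul_mul_eq_cube hγ0 hco
    (FaithfulSMul.algebraMap_injective O K (by rw [map_pow, hγ]; exact hcube))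
  have hAb : A b ≠ 0 := by simpa [A] using hb
  refine ⟨D, A c / A b, hD, ?_⟩
  have hDbc' := congrArg A hDbc
  simp only [map_mul, map_pow] at hDbc'
  field_simp
  linear_combination hDbc'

lemma index_range_phi_ne_zero_and_le {K : Type*} [Field K] [DecidableEq K] [Algebra O K]
    [IsFractionRing O K] {w : K} (hw : w ^ 2 + w + 1 = 0) (h3 : (3 : K) ≠ 0) {k : O} (hk : k ≠ 0)
    (hfin : {D : O | D ∣ k ^ 2}.Finite) :
    (phi (algebraMap O K k) hw).range.index ≠ 0 ∧
      (phi (algebraMap O K k) hw).range.index ≤ {D : O | D ∣ k ^ 2}.ncard := by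
  have hAk : algebraMap O K k ≠ 0 := by simpa using hk
  let cls : O → UnitsModCubes K := fun D =>
    if hD : algebraMap O K D = 0 then 0 else cubeClass hD
  have hsub : ((kummerHom hAk).range : Set (UnitsModCubes K)) ⊆ cls '' {D : O | D ∣ k ^ 2} := by
    rintro _ ⟨_ | ⟨u, v, h⟩, rfl⟩
    · refine ⟨1, one_dvd _, ?_⟩
      simp only [cls, map_one, one_ne_zero, dif_neg, not_false_eq_true]
      exact (cubeClass_eq_zero_iff _).2 ⟨1, (one_pow 3).symm⟩
    · obtain ⟨D, s, hD, hDs⟩ := exists_dvd_sq_kummerRep (eq_of_nonsingular h)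
      have hAD : algebraMap O K D ≠ 0 :=
        left_ne_zero_of_mul (hDs ▸ kummerRep_ne_zero hAk v)
      refine ⟨D, hD, ?_⟩
      simp only [cls, hAD, dif_neg, not_false_eq_true]
      exact (cubeClass_eq_of_eq_mul_cube (kummerRep_ne_zero hAk v) hAD hDs).symm
  have hle : (kummerHom hAk).ker.index ≤ {D : O | D ∣ k ^ 2}.ncard := by
    rw [AddSubgroup.index_ker]
    exact (Set.ncard_le_ncard hsub (hfin.image cls)).trans (Set.ncard_image_le hfin)
  have hne : (kummerHom hAk).ker.index ≠ 0 := by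
    have : Finite (kummerHom hAk).range := (hfin.image cls).subset hsub
    rw [AddSubgroup.index_ker]
    exact Nat.card_pos.ne'
  have hdvd := AddSubgroup.index_dvd_of_le (ker_kummerHom_le_range_phi hw h3 hAk)
  exact ⟨ne_zero_of_dvd_ne_zero hne hdvd, (Nat.le_of_dvd (Nat.pos_of_ne_zero hne) hdvd).trans hle⟩

end FiniteIndex

section PointHeight

variable {O : Type*} [CommRing O] {K : Type*} [Field K] [Algebra O K]
  {N : AbsoluteValue O ℝ} {T : ℝ} {k : K} {w : O}

/-- The coordinate `u` of a point of `v² + k v = u³`, with junk value `0` at infinity. -/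
def uCoord : (mordellCurve k).Point → K
  | .zero => 0
  | .some u _ _ => u

/-- The coordinate `v` of a point of `v² + k v = u³`, with junk value `0` at infinity. The height
of a point is measured by `v / k`, which does not change when the curve is rescaled. -/
def vCoord : (mordellCurve k).Point → K
  | .zero => 0
  | .some _ v _ => v

lemma vCoord_eq_of_uCoord_eq_zero {P : (mordellCurve k).Point} (hP : uCoord P = 0) :
    vCoord P = 0 ∨ vCoord P = -k := by
  rcases P with _ | ⟨u, v, h⟩
  · exact .inl rfl
  · obtain rfl : u = 0 := hP
    have hv : v * (v + k) = 0 := by linear_combination eq_of_nonsingular h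
    exact (mul_eq_zero.1 hv).imp_right eq_neg_of_add_eq_zero_left

lemma eq_or_eq_neg_of_uCoord_eq {P Q : (mordellCurve k).Point} (hP : P ≠ 0) (hQ : Q ≠ 0)
    (h : uCoord P = uCoord Q) : P = Q ∨ P = -Q := by
  obtain _ | ⟨u, v, hu⟩ := P
  · exact (hP rfl).elim
  obtain _ | ⟨u', v', hu'⟩ := Q
  · exact (hQ rfl).elim
  obtain rfl : u = u' := h
  have hv : (v - v') * (v + v' + k) = 0 := by
    linear_combination eq_of_nonsingular hu - eq_of_nonsingular hu'
  refine (mul_eq_zero.1 hv).imp (fun h => point_some_congr rfl (sub_eq_zero.1 h)) fun h => ?_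
  rw [Point.neg_some]
  exact point_some_congr rfl (by rw [negY_eq]; linear_combination h)

lemma map_sq_add_self_add_one (hw : w ^ 2 + w + 1 = 0) :
    algebraMap O K w ^ 2 + algebraMap O K w + 1 = 0 := by
  simpa using congrArg (algebraMap O K) hw

lemma card_filter_vCoord_le_three [DecidableEq K] (S : Finset (mordellCurve k).Point)
    (hS : 0 ∉ S) (v : K) : (S.filter fun P => vCoord P = v).card ≤ 3 := by
  have hinj : Set.InjOn uCoord (S.filter fun P => vCoord P = v : Set (mordellCurve k).Point) := by
    rintro (_ | ⟨u, v, h⟩) hP (_ | ⟨u', v', h'⟩) hQ hPQ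
    · rfl
    · exact (hS (Finset.mem_filter.1 hP).1).elim
    · exact (hS (Finset.mem_filter.1 hQ).1).elim
    · exact point_some_congr hPQ
        ((Finset.mem_filter.1 hP).2.trans (Finset.mem_filter.1 hQ).2.symm)
  rw [← Finset.card_image_of_injOn hinj]
  have hsub : (S.filter fun P => vCoord P = v).image uCoord ⊆
      (Polynomial.nthRoots 3 (v ^ 2 + k * v)).toFinset := by
    intro x hx
    obtain ⟨_ | ⟨u, v, h⟩, hP, rfl⟩ := Finset.mem_image.1 hx
    · exact (hS (Finset.mem_filter.1 hP).1).elim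
    · obtain ⟨-, rfl⟩ := Finset.mem_filter.1 hP
      rw [Multiset.mem_toFinset, Polynomial.mem_nthRoots three_pos]
      exact (eq_of_nonsingular h).symm
  exact (Finset.card_le_card hsub).trans
    ((Multiset.toFinset_card_le _).trans (Polynomial.card_nthRoots _ _))

lemma card_le_of_heightLE [FaithfulSMul O K] [Northcott N] {c : ℝ} (hk : k ≠ 0)
    (hc : ({α : O | N α ≤ T}.ncard : ℝ) ≤ c * T ^ 2) (S : Finset (mordellCurve k).Point)
    (hS : ∀ P ∈ S, HeightLE N T (vCoord P / k)) : (S.card : ℝ) ≤ 3 * (c * T ^ 2) ^ 2 + 1 := by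
  classical
  obtain ⟨hfin, hcard⟩ := HeightLE.finite_and_ncard_le (K := K) hc
  have hmaps : ∀ P ∈ S.erase 0, vCoord P / k ∈ hfin.toFinset := fun P hP => by
    simpa using hS P (Finset.mem_of_mem_erase hP)
  have herase : (S.erase 0).card ≤ 3 * hfin.toFinset.card :=
    Finset.card_le_mul_card_image_of_maps_to hmaps 3 fun x _ => by
      simpa only [div_eq_iff hk] using
        card_filter_vCoord_le_three (S.erase 0) (Finset.notMem_erase 0 S) (x * k)
  rw [Set.ncard_eq_toFinset_card _ hfin] at hcard
  have hS1 : S.card ≤ (S.erase 0).card + 1 := Nat.sub_le_iff_le_add.1 Finset.pred_card_le_card_erase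
  calc (S.card : ℝ) ≤ 3 * hfin.toFinset.card + 1 := by exact_mod_cast hS1.trans (by gcongr)
    _ ≤ 3 * (c * T ^ 2) ^ 2 + 1 := by gcongr

lemma one_le_abv_two_mul_add_one [IsDomain O] [Northcott N] (hw : w ^ 2 + w + 1 = 0)
    (h3 : (3 : K) ≠ 0) : 1 ≤ N (2 * w + 1) := by
  refine one_le_abv_of_ne_zero fun h0 => two_mul_add_one_ne_zero (map_sq_add_self_add_one hw) h3 ?_
  simpa only [map_add, map_mul, map_ofNat, map_one, map_zero] using congrArg (algebraMap O K) h0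

section Isogeny

variable [IsDomain O] [IsPrincipalIdealRing O] [IsFractionRing O K] [DecidableEq K] [Northcott N]

lemma heightLE_of_heightLE_phi (hw : w ^ 2 + w + 1 = 0) (h3 : (3 : K) ≠ 0) (hk : k ≠ 0)
    (hT : 1 ≤ T) (P : (mordellCurve k).Point)
    (h : HeightLE N (T ^ 3) (vCoord (phi k (map_sq_add_self_add_one hw) P) / k)) :
    HeightLE N (4 * N (2 * w + 1) ^ 5 * T) (vCoord P / k) := by
  have hτ : 1 ≤ N (2 * w + 1) := one_le_abv_two_mul_add_one hw h3
  by_cases hu : uCoord P = 0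
  · have h1 : (1 : ℝ) ≤ 4 * N (2 * w + 1) ^ 5 * T := by nlinarith [one_le_pow₀ hτ (n := 5)]
    have hone : HeightLE N (4 * N (2 * w + 1) ^ 5 * T) (1 : K) := by
      simpa using HeightLE.of_abv_le (K := K) (N := N) ((map_one N).trans_le h1) h1
    rcases vCoord_eq_of_uCoord_eq_zero hu with h0 | h0
    · rw [h0, zero_div, ← map_zero (algebraMap O K)]
      exact .of_abv_le ((map_zero N).trans_le (by linarith)) h1
    · rw [h0, neg_div, div_self hk]
      exact hone.neg
  obtain _ | ⟨u, v, hns⟩ := P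
  · exact (hu rfl).elim
  have hwK := map_sq_add_self_add_one (K := K) hw
  obtain ⟨u', v', h', hphi, -, hv', hv'k⟩ := exists_phi_some hwK h3 hns hu
  rw [hphi] at h
  refine h.of_mul_sub_pow_three_eq hw ?_ (by linarith) ?_
  · rintro h0
    norm_num [h0] at hτ
  have hc : (2 * algebraMap O K w + 1) * 3 * u ^ 3 ≠ 0 :=
    mul_ne_zero (mul_ne_zero (two_mul_add_one_ne_zero hwK h3) h3) (pow_ne_zero 3 hu)
  have hcross : v' * (v - algebraMap O K w * k) ^ 3 =
      (v' + k) * (v - algebraMap O K w ^ 2 * k) ^ 3 := mul_right_cancel₀ hc (by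
    linear_combination (v - algebraMap O K w * k) ^ 3 * hv' -
      (v - algebraMap O K w ^ 2 * k) ^ 3 * hv'k)
  simp only [vCoord]
  field_simp
  linear_combination hcross

lemma heightLE_of_heightLE_iterate_phi (hw : w ^ 2 + w + 1 = 0) (h3 : (3 : K) ≠ 0) (hk : k ≠ 0)
    (n : ℕ) {S : ℝ} (hS : 1 ≤ S) (P : (mordellCurve k).Point)
    (h : HeightLE N ((4 * N (2 * w + 1) ^ 5) ^ 2 * S ^ 3 ^ n)
      (vCoord ((phi k (map_sq_add_self_add_one hw))^[n] P) / k)) :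
    HeightLE N ((4 * N (2 * w + 1) ^ 5) ^ 2 * S) (vCoord P / k) := by
  set M := 4 * N (2 * w + 1) ^ 5 with hM
  have hM1 : 1 ≤ M := by
    have := one_le_pow₀ (one_le_abv_two_mul_add_one (N := N) hw h3) (n := 5)
    linarith
  induction n generalizing P with
  | zero => simpa using h
  | succ n ih =>
    have hS1 : 1 ≤ S ^ 3 ^ n := one_le_pow₀ hS
    refine ih P ((heightLE_of_heightLE_phi hw h3 hk (T := M * S ^ 3 ^ n) (by nlinarith) _
      ?_).mono (by rw [← hM]; exact le_of_eq (by ring)))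
    rw [Function.iterate_succ_apply'] at h
    refine h.mono ?_
    rw [pow_succ 3 n, pow_mul S, mul_pow M]
    gcongr
    norm_num

end Isogeny

end PointHeight

section PointCount

variable {O : Type*} [CommRing O] [IsDomain O] {K : Type*} [Field K] [Algebra O K] [DecidableEq K]
  {N : AbsoluteValue O ℝ} {k : K} {b : ℝ} {n : ℕ}

lemma heightLE_vCoord_sub [FaithfulSMul O K] (hb : 2 ≤ b) {P Q : (mordellCurve k).Point}
    (hPQ : uCoord P ≠ uCoord Q) (hP : P ≠ 0) (hQ : Q ≠ 0) (hk : HeightLE N b k)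
    (hu : HeightLE N b (uCoord P)) (hv : HeightLE N b (vCoord P))
    (hu' : HeightLE N b (uCoord Q)) (hv' : HeightLE N b (vCoord Q)) :
    HeightLE N (b ^ 35) (vCoord (P - Q) / k) := by
  obtain _ | ⟨u, v, h⟩ := P
  · exact (hP rfl).elim
  obtain _ | ⟨u', v', h'⟩ := Q
  · exact (hQ rfl).elim
  rw [← pow_one b] at hk hu hv hu' hv'
  simp only [vCoord, uCoord] at hPQ hu hv hu' hv'
  rw [sub_eq_add_neg, Point.neg_some, Point.add_of_X_ne hPQ]
  simp only [vCoord]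
  set l := (mordellCurve k).slope u u' v ((mordellCurve k).negY u' v') with hl
  have hslope : HeightLE N (b ^ 8) l := by
    rw [hl, slope_of_X_ne hPQ, negY_eq, show v - (-v' - k) = v + v' + k by ring]
    exact ((hv.add_of_pow hb hv').add_of_pow hb hk).div_of_pow (hu.sub_of_pow hb hu')
  have hY : (mordellCurve k).addY u u' v l = -(l * (l * l - u - u' - u) + v) - k := by
    simp only [addX, addY, negAddY, negY, mordellCurve]
    ring
  rw [hY]
  exact ((((hslope.mul_of_pow ((((hslope.mul_of_pow hslope).sub_of_pow hb hu).sub_of_pow hb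
    hu').sub_of_pow hb hu)).add_of_pow hb hv).neg.sub_of_pow hb hk).div_of_pow hk)

/-- `P` is a nonzero point with both coordinates of height at most `H`. -/
def CoordHeightLE (N : AbsoluteValue O ℝ) (H : ℝ) (P : (mordellCurve k).Point) : Prop :=
  P ≠ 0 ∧ HeightLE N H (uCoord P) ∧ HeightLE N H (vCoord P)

variable [IsPrincipalIdealRing O] [IsFractionRing O K] [Northcott N] {w : O} {c H : ℝ}

/-- Subtracting a fixed point of the coset and dividing by `φⁿ` takes the `3ⁿ`-th root of the
height. -/
lemma card_le_of_sub_mem_range_iterate_phi (hw : w ^ 2 + w + 1 = 0) (h3 : (3 : K) ≠ 0)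
    (hk : k ≠ 0) (hkH : HeightLE N H k) (hc : ∀ T ≥ 1, ({α : O | N α ≤ T}.ncard : ℝ) ≤ c * T ^ 2)
    (hH : 1 ≤ H) {s : ℝ} (hs : 1 ≤ s) (hsH : s ^ 3 ^ n = (2 * H) ^ 35)
    (S : Finset (mordellCurve k).Point) (hS : ∀ P ∈ S, CoordHeightLE N H P)
    (hcoset : ∀ P ∈ S, ∀ Q ∈ S,
      P - Q ∈ Set.range ((phi k (map_sq_add_self_add_one hw))^[n])) :
    (S.card : ℝ) ≤ 3 * (c * ((4 * N (2 * w + 1) ^ 5) ^ 2 * s) ^ 2) ^ 2 + 3 := by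
  obtain rfl | ⟨P₀, hP₀⟩ := S.eq_empty_or_nonempty
  · simp only [Finset.card_empty, Nat.cast_zero]
    positivity
  have hM : 1 ≤ (4 * N (2 * w + 1) ^ 5) ^ 2 := by
    have := one_le_pow₀ (one_le_abv_two_mul_add_one (N := N) hw h3) (n := 5)
    exact one_le_pow₀ (by linarith)
  choose! W hW using fun P hP => hcoset P hP P₀ hP₀
  set S' := S \ {P₀, -P₀}
  have hinj : Set.InjOn W S' := fun P hP Q hQ hPQ => sub_left_inj.1
    ((hW P (Finset.mem_sdiff.1 hP).1).symm.trans (hPQ ▸ hW Q (Finset.mem_sdiff.1 hQ).1))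
  have hheight : ∀ Q ∈ S'.image W,
      HeightLE N ((4 * N (2 * w + 1) ^ 5) ^ 2 * s) (vCoord Q / k) := by
    refine Finset.forall_mem_image.2 fun P hP => ?_
    obtain ⟨hPS, hPP₀⟩ := Finset.mem_sdiff.1 hP
    obtain ⟨h0, hu, hv⟩ := hS P hPS
    obtain ⟨h0', hu', hv'⟩ := hS P₀ hP₀
    refine heightLE_of_heightLE_iterate_phi hw h3 hk n hs _ ?_
    rw [hW P hPS, hsH]
    have hHb : H ≤ 2 * H := by linarith
    refine (heightLE_vCoord_sub (by linarith) (fun h => hPP₀ ?_) h0 h0' (hkH.mono hHb)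
      (hu.mono hHb) (hv.mono hHb) (hu'.mono hHb) (hv'.mono hHb)).mono
      (le_mul_of_one_le_left (by positivity) hM)
    simpa only [Finset.mem_insert, Finset.mem_singleton] using
      eq_or_eq_neg_of_uCoord_eq h0 h0' h
  have hcard := card_le_of_heightLE hk (hc _ (by nlinarith)) _ hheight
  rw [Finset.card_image_of_injOn hinj] at hcard
  have hS' : S.card ≤ S'.card + 2 := Finset.card_le_card_sdiff_add_card.trans
    (Nat.add_le_add_left Finset.card_le_two _)
  calc (S.card : ℝ) ≤ S'.card + 2 := by exact_mod_cast hS'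
    _ ≤ _ := by linarith

end PointCount

section PointBound

variable {O : Type*} [CommRing O] [IsDomain O] [IsPrincipalIdealRing O] {K : Type*} [Field K]
  [Algebra O K] [IsFractionRing O K] {N : AbsoluteValue O ℝ} [Northcott N]
  {w : O} {ε : ℝ}

lemma exists_index_range_phi_le [DecidableEq K] (hw : w ^ 2 + w + 1 = 0) (h3 : (3 : K) ≠ 0)
    (hε : 0 < ε) : ∃ C : ℝ, 0 < C ∧ ∀ H ≥ 1, ∀ k : O, k ≠ 0 → N k ≤ H →
      (phi (algebraMap O K k) (map_sq_add_self_add_one hw)).range.index ≠ 0 ∧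
      ((phi (algebraMap O K k) (map_sq_add_self_add_one hw)).range.index : ℝ) ≤ C * H ^ ε := by
  obtain ⟨C, hC, hdvd⟩ := exists_ncard_dvd_le_mul_rpow N (half_pos hε)
  refine ⟨C, hC, fun H hH k hk hkH => ?_⟩
  obtain ⟨hfin, hcard⟩ := hdvd (k ^ 2) (pow_ne_zero 2 hk)
  obtain ⟨hne, hle⟩ := index_range_phi_ne_zero_and_le (map_sq_add_self_add_one hw) h3 hk hfin
  refine ⟨hne, ?_⟩
  calc ((phi (algebraMap O K k) (map_sq_add_self_add_one hw)).range.index : ℝ)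
      ≤ C * N (k ^ 2) ^ (ε / 2) := le_trans (by exact_mod_cast hle) hcard
    _ ≤ C * (H ^ 2) ^ (ε / 2) := by
        rw [map_pow]
        have := N.nonneg k
        gcongr
    _ = C * H ^ ε := by rw [← Real.rpow_natCast_mul (by linarith)]; congr 2; push_cast; ring

lemma exists_index_range_phi_pow_le [DecidableEq K] (n : ℕ) (hw : w ^ 2 + w + 1 = 0)
    (h3 : (3 : K) ≠ 0) (hε : 0 < ε) : ∃ C : ℝ, 0 < C ∧ ∀ H ≥ 1, ∀ k : O, k ≠ 0 → N k ≤ H →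
      ∀ f : AddMonoid.End (mordellCurve (algebraMap O K k)).Point,
      f = phi (algebraMap O K k) (map_sq_add_self_add_one hw) →
      (AddMonoidHom.range (f ^ n)).index ≠ 0 ∧
      ((AddMonoidHom.range (f ^ n)).index : ℝ) ≤ C * H ^ ε := by
  obtain ⟨C, hC, hindex⟩ := exists_index_range_phi_le (N := N) hw h3
    (show 0 < ε / (n + 1) by positivity)
  refine ⟨C ^ n, by positivity, fun H hH k hk hkH f hf => ?_⟩
  obtain ⟨hne, hle⟩ := hindex H hH k hk hkH
  subst hf
  have hdvd := index_range_pow_dvd (phi (algebraMap O K k) (map_sq_add_self_add_one hw)) n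
  refine ⟨fun h => pow_ne_zero n hne (Nat.eq_zero_of_zero_dvd (h ▸ hdvd)), ?_⟩
  calc _ ≤ ((phi (algebraMap O K k) (map_sq_add_self_add_one hw)).range.index : ℝ) ^ n := by
        exact_mod_cast Nat.le_of_dvd (pos_of_ne_zero (pow_ne_zero n hne)) hdvd
    _ ≤ (C * H ^ (ε / (n + 1))) ^ n := by gcongr
    _ = C ^ n * H ^ (ε / (n + 1) * n) := by rw [mul_pow, ← Real.rpow_mul_natCast (by linarith)]
    _ ≤ C ^ n * H ^ ε := by
        gcongr
        rw [div_mul_eq_mul_div, div_le_iff₀ (by positivity)]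
        nlinarith

theorem exists_card_coordHeightLE_le (hw : w ^ 2 + w + 1 = 0) (h3 : (3 : K) ≠ 0) {c : ℝ}
    (hc : ∀ T ≥ 1, ({α : O | N α ≤ T}.ncard : ℝ) ≤ c * T ^ 2) (hε : 0 < ε) :
    ∃ C : ℝ, 0 < C ∧ ∀ H ≥ 1, ∀ k : O, k ≠ 0 → N k ≤ H →
      ∀ S : Finset (mordellCurve (algebraMap O K k)).Point, (∀ P ∈ S, CoordHeightLE N H P) →
      (S.card : ℝ) ≤ C * H ^ ε := by
  classical
  obtain ⟨n, hn⟩ := pow_unbounded_of_one_lt (140 / (ε / 2)) (show (1 : ℝ) < 3 by norm_num)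
  rw [div_lt_comm₀ (half_pos hε) (by positivity)] at hn
  obtain ⟨C, hC, hindex⟩ := exists_index_range_phi_pow_le (N := N) n hw h3 (half_pos hε)
  set M := 4 * N (2 * w + 1) ^ 5
  refine ⟨C * (3 * c ^ 2 * M ^ 8 * 2 ^ (ε / 2) + 3), by positivity, fun H hH k hk hkH S hS => ?_⟩
  obtain ⟨hne, hle⟩ := hindex H hH k hk hkH _ rfl
  have hk' : algebraMap O K k ≠ 0 := by simpa using hk
  set s := (2 * H) ^ ((35 : ℝ) / 3 ^ n) with hs
  have hs1 : 1 ≤ s := Real.one_le_rpow (by linarith) (by positivity)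
  have hsH : s ^ 3 ^ n = (2 * H) ^ 35 := by
    rw [hs, ← Real.rpow_mul_natCast (by linarith), Nat.cast_pow, Nat.cast_ofNat,
      div_mul_cancel₀ _ (by positivity)]
    exact Real.rpow_natCast _ 35
  have hs4 : s ^ 4 ≤ 2 ^ (ε / 2) * H ^ (ε / 2) := by
    rw [← Real.mul_rpow zero_le_two (by linarith), hs, ← Real.rpow_mul_natCast (by linarith)]
    refine Real.rpow_le_rpow_of_exponent_le (by linarith) (le_trans (le_of_eq ?_) hn.le)
    push_cast
    ring
  have hcoset := card_le_index_mul _ hne S (M := 3 * (c * (M ^ 2 * s) ^ 2) ^ 2 + 3)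
    (by positivity) fun S' hS' hdiff => card_le_of_sub_mem_range_iterate_phi hw h3 hk'
      (.of_abv_le hkH hH) hc hH hs1 hsH S' (fun P hP => hS P (hS' hP)) hdiff
  have hHε : 1 ≤ H ^ (ε / 2) := Real.one_le_rpow hH (by positivity)
  have hfibre : 3 * (c * (M ^ 2 * s) ^ 2) ^ 2 + 3 ≤
      (3 * c ^ 2 * M ^ 8 * 2 ^ (ε / 2) + 3) * H ^ (ε / 2) := by
    have := mul_le_mul_of_nonneg_left hs4 (show 0 ≤ 3 * c ^ 2 * M ^ 8 by positivity)
    linarith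
  calc (S.card : ℝ) ≤ _ := hcoset
    _ ≤ C * H ^ (ε / 2) * ((3 * c ^ 2 * M ^ 8 * 2 ^ (ε / 2) + 3) * H ^ (ε / 2)) := by gcongr
    _ = C * (3 * c ^ 2 * M ^ 8 * 2 ^ (ε / 2) + 3) * (H ^ (ε / 2) * H ^ (ε / 2)) := by ring
    _ = _ := by rw [← Real.rpow_add (by linarith), add_halves]

end PointBound

end mordellCurve

section IntegerAbsoluteValue

/-- The usual absolute value on `ℤ`, with real values. -/
noncomputable def intAbv : AbsoluteValue ℤ ℝ :=
  (AbsoluteValue.abs (S := ℝ)).comp (f := Int.castRingHom ℝ) Int.cast_injective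

/-- The finite set of integers of absolute value at most `T`. -/
noncomputable def intBall (T : ℝ) : Finset ℤ := Finset.Icc (-⌊T⌋) ⌊T⌋

lemma mem_intBall {T : ℝ} {x : ℤ} : x ∈ intBall T ↔ |(x : ℝ)| ≤ T := by
  rw [intBall, Finset.mem_Icc, abs_le, neg_le (a := T), neg_le (a := ⌊T⌋), Int.le_floor,
    Int.le_floor, Int.cast_neg]

lemma card_intBall_le {T : ℝ} (hT : 0 ≤ T) : ((intBall T).card : ℝ) ≤ 2 * T + 1 := by
  have h0 : 0 ≤ ⌊T⌋ := Int.floor_nonneg.2 hT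
  have hcast : (((⌊T⌋ + 1 - -⌊T⌋).toNat : ℤ) : ℝ) = 2 * ⌊T⌋ + 1 := by
    rw [Int.toNat_of_nonneg (by omega)]
    push_cast
    ring
  rw [intBall, Int.card_Icc, ← Int.cast_natCast (R := ℝ), hcast]
  linarith [Int.floor_le T]

lemma card_intBall_erase_zero_le {T : ℝ} (hT : 0 ≤ T) :
    (((intBall T).erase 0).card : ℝ) ≤ 2 * T := by
  have hmem : (0 : ℤ) ∈ intBall T := mem_intBall.2 (by simpa using hT)
  have hcard : (((intBall T).erase 0).card : ℝ) + 1 = (intBall T).card := by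
    exact_mod_cast Finset.card_erase_add_one hmem
  linarith [card_intBall_le hT]

lemma finite_setOf_abs_le (T : ℝ) : {x : ℤ | |(x : ℝ)| ≤ T}.Finite :=
  (intBall T).finite_toSet.subset fun _ hx => mem_intBall.2 hx

lemma ncard_setOf_abs_le {T : ℝ} (hT : 0 ≤ T) :
    ({x : ℤ | |(x : ℝ)| ≤ T}.ncard : ℝ) ≤ 2 * T + 1 := by
  have hset : {x : ℤ | |(x : ℝ)| ≤ T} = intBall T := Set.ext fun _ => mem_intBall.symm
  rw [hset, Set.ncard_coe_finset]
  exact card_intBall_le hT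

instance : Northcott intAbv := ⟨finite_setOf_abs_le⟩

end IntegerAbsoluteValue

section EisensteinIntegers

lemma norm_add_mul_sq {z : ℂ} (hz : z ^ 2 + z + 1 = 0) (a b : ℝ) :
    ‖(a : ℂ) + b * z‖ ^ 2 = a ^ 2 - a * b + b ^ 2 := by
  have hre : z.re * z.re - z.im * z.im + z.re + 1 = 0 := by
    simpa [pow_two] using congrArg Complex.re hz
  have him : z.im * (2 * z.re + 1) = 0 := by
    have := congrArg Complex.im hz
    simp only [pow_two, Complex.add_im, Complex.mul_im, Complex.one_im, Complex.zero_im] at this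
    linear_combination this
  have him0 : z.im ≠ 0 := fun h0 => by
    rw [h0] at hre
    nlinarith [sq_nonneg (z.re + 1 / 2)]
  have hre' : 2 * z.re + 1 = 0 := (mul_eq_zero.1 him).resolve_left him0
  rw [← Complex.normSq_eq_norm_sq, Complex.normSq_apply]
  simp only [Complex.add_re, Complex.mul_re, Complex.add_im, Complex.mul_im, Complex.ofReal_re,
    Complex.ofReal_im]
  linear_combination (-b ^ 2) * hre + (a * b + b ^ 2 * z.re) * hre'

variable {R : Type*} [CommRing R] {w : R}

lemma exists_eq_add_mul_of_mem_adjoin (hw : w ^ 2 + w + 1 = 0) {x : R}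
    (hx : x ∈ Algebra.adjoin ℤ {w}) : ∃ a b : ℤ, x = a + b * w := by
  induction hx using Algebra.adjoin_induction with
  | mem x hx => exact ⟨0, 1, by rw [Set.mem_singleton_iff.1 hx]; simp⟩
  | algebraMap r => exact ⟨r, 0, by simp⟩
  | add x y _ _ hx hy =>
    obtain ⟨a, b, rfl⟩ := hx
    obtain ⟨a', b', rfl⟩ := hy
    exact ⟨a + a', b + b', by push_cast; ring⟩
  | mul x y _ _ hx hy =>
    obtain ⟨a, b, rfl⟩ := hx
    obtain ⟨a', b', rfl⟩ := hy
    refine ⟨a * a' - b * b', a * b' + a' * b - b * b', ?_⟩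
    push_cast
    linear_combination ((b : R) * b') * hw

lemma abs_le_of_norm_add_mul_le {z : ℂ} (hz : z ^ 2 + z + 1 = 0) {a b T : ℝ}
    (h : ‖(a : ℂ) + b * z‖ ≤ T) : |a| ≤ 2 * T ∧ |b| ≤ 2 * T := by
  have hT := (norm_nonneg _).trans h
  have hsq : a ^ 2 - a * b + b ^ 2 ≤ T ^ 2 := by
    rw [← norm_add_mul_sq hz]
    gcongr
  constructor <;> refine abs_le_of_sq_le_sq ?_ (by linarith)
  · nlinarith [sq_nonneg (a - 2 * b)]
  · nlinarith [sq_nonneg (b - 2 * a)]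

variable (σ : R →+* ℂ)

lemma setOf_norm_le_subset (hw : w ^ 2 + w + 1 = 0) (htop : Algebra.adjoin ℤ {w} = ⊤) (T : ℝ) :
    {x : R | ‖σ x‖ ≤ T} ⊆ (fun s : ℤ × ℤ => (s.1 : R) + s.2 * w) ''
      ({x : ℤ | |(x : ℝ)| ≤ 2 * T} ×ˢ {x : ℤ | |(x : ℝ)| ≤ 2 * T}) := by
  intro x hx
  obtain ⟨a, b, rfl⟩ := exists_eq_add_mul_of_mem_adjoin hw (htop ▸ Algebra.mem_top (x := x))
  have hσw : σ w ^ 2 + σ w + 1 = 0 := by simpa using congrArg σ hw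
  refine ⟨(a, b), abs_le_of_norm_add_mul_le hσw ?_, rfl⟩
  simpa using hx

lemma finite_setOf_norm_le (hw : w ^ 2 + w + 1 = 0) (htop : Algebra.adjoin ℤ {w} = ⊤) (T : ℝ) :
    {x : R | ‖σ x‖ ≤ T}.Finite :=
  (((finite_setOf_abs_le _).prod (finite_setOf_abs_le _)).image _).subset
    (setOf_norm_le_subset σ hw htop T)

lemma ncard_setOf_norm_le (hw : w ^ 2 + w + 1 = 0) (htop : Algebra.adjoin ℤ {w} = ⊤) {T : ℝ}
    (hT : 1 ≤ T) : ({x : R | ‖σ x‖ ≤ T}.ncard : ℝ) ≤ 25 * T ^ 2 := by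
  have hfin := (finite_setOf_abs_le (2 * T)).prod (finite_setOf_abs_le (2 * T))
  calc ({x : R | ‖σ x‖ ≤ T}.ncard : ℝ)
      ≤ {x : ℤ | |(x : ℝ)| ≤ 2 * T}.ncard * {x : ℤ | |(x : ℝ)| ≤ 2 * T}.ncard := by
        rw [← Nat.cast_mul, ← Set.ncard_prod]
        exact_mod_cast (Set.ncard_le_ncard (setOf_norm_le_subset σ hw htop T)
          (hfin.image _)).trans (Set.ncard_image_le hfin)
    _ ≤ (5 * T) * (5 * T) := by
        have := ncard_setOf_abs_le (T := 2 * T) (by linarith)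
        gcongr <;> linarith
    _ = 25 * T ^ 2 := by ring

open NumberField in
lemma exists_eisenstein_abv (K : Type*) [Field K] [NumberField K] [IsCyclotomicExtension {3} ℚ K] :
    ∃ (N : AbsoluteValue (𝓞 K) ℝ) (w : 𝓞 K), w ^ 2 + w + 1 = 0 ∧ Northcott N ∧
    (∀ T ≥ 1, ({α | N α ≤ T}.ncard : ℝ) ≤ 25 * T ^ 2) ∧ ∀ n : ℤ, N n = intAbv n := by
  have hζ := IsCyclotomicExtension.zeta_spec 3 ℚ K
  have hw : hζ.toInteger ^ 2 + hζ.toInteger + 1 = 0 := by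
    have := hζ.toInteger_isPrimitiveRoot.geom_sum_eq_zero (by norm_num)
    simp only [Finset.sum_range_succ, Finset.sum_range_zero] at this
    linear_combination this
  have htop : Algebra.adjoin ℤ {hζ.toInteger} = ⊤ :=
    hζ.integralPowerBasis_gen ▸ hζ.integralPowerBasis.adjoin_gen_eq_top
  let σ : 𝓞 K →+* ℂ :=
    (IsAlgClosed.lift (R := ℚ) : K →ₐ[ℚ] ℂ).toRingHom.comp
      (algebraMap (𝓞 K) K)
  have hσ : Function.Injective σ := (RingHom.injective
    (IsAlgClosed.lift (R := ℚ) : K →ₐ[ℚ] ℂ).toRingHom).comp (IsFractionRing.injective (𝓞 K) K)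
  refine ⟨(NormedField.toAbsoluteValue ℂ).comp hσ, hζ.toInteger, hw,
    ⟨finite_setOf_norm_le σ hw htop⟩, fun T hT => ncard_setOf_norm_le σ hw htop hT, fun n => ?_⟩
  exact (congrArg norm (map_intCast σ n)).trans (Complex.norm_intCast n)

end EisensteinIntegers

section DiagonalCubic

lemma sq_add_mul_eq_pow_three_of_diagonalCubic {F : Type*} [CommRing F] {A B m X Y : F}
    (h : A * X ^ 3 + B * Y ^ 3 = m) :
    (-(A ^ 2 * B * X ^ 3)) ^ 2 + A * B * m * -(A ^ 2 * B * X ^ 3) = (-(A * B * X * Y)) ^ 3 := by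
  rw [← h]
  ring

lemma eq_of_diagonalCubic {A B m : ℚ} (hB : B ≠ 0) {p p' : ℚ × ℚ}
    (h : A * p.1 ^ 3 + B * p.2 ^ 3 = m) (h' : A * p'.1 ^ 3 + B * p'.2 ^ 3 = m)
    (h1 : p.1 ^ 3 = p'.1 ^ 3) : p = p' := by
  have hodd : Odd 3 := ⟨1, rfl⟩
  have h2 : p.2 ^ 3 = p'.2 ^ 3 := mul_left_cancel₀ hB (by linear_combination h - h' - A * h1)
  exact Prod.ext (hodd.pow_injective h1) (hodd.pow_injective h2)

lemma HeightLE.of_rat {O : Type*} [CommRing O] [CharZero O] {K : Type*} [Field K] [CharZero K]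
    [Algebra O K] {N : AbsoluteValue O ℝ} (hN : ∀ n : ℤ, N n = intAbv n) {T : ℝ} {x : ℚ}
    (h : HeightLE intAbv T x) : HeightLE N T (x : K) := by
  obtain ⟨α, β, hβ, hx, hα, hβT⟩ := h
  refine ⟨α, β, Int.cast_ne_zero.2 hβ, ?_, (hN α).trans_le hα, (hN β).trans_le hβT⟩
  rw [map_intCast, map_intCast]
  exact_mod_cast congrArg (Rat.cast : ℚ → K) hx

lemma heightLE_diagonalCubic {O : Type*} [CommRing O] [IsDomain O] {K : Type*} [Field K]
    [Algebra O K] {N : AbsoluteValue O ℝ} {H : ℝ} {A B X Y : K} (hH : 1 ≤ H)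
    (hA : HeightLE N H A) (hB : HeightLE N H B) (hX : HeightLE N H X) (hY : HeightLE N H Y) :
    HeightLE N (H ^ 6) (-(A * B * X * Y)) ∧ HeightLE N (H ^ 6) (-(A ^ 2 * B * X ^ 3)) := by
  rw [← pow_one H] at hA hB hX hY
  refine ⟨((((hA.mul_of_pow hB).mul_of_pow hX).mul_of_pow hY).mono
    (pow_le_pow_right₀ hH (by norm_num))).neg, ?_⟩
  rw [pow_two, pow_three]
  exact (((hA.mul_of_pow hA).mul_of_pow hB).mul_of_pow (hX.mul_of_pow (hX.mul_of_pow hX))).neg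

open mordellCurve in
lemma exists_point_of_diagonalCubic {K : Type*} [Field K] {A B m X Y k : K} (hk : k ≠ 0)
    (h3 : (3 : K) ≠ 0) (hkm : k = A * B * m) (h : A * X ^ 3 + B * Y ^ 3 = m) :
    ∃ P : (mordellCurve k).Point,
      P ≠ 0 ∧ uCoord P = -(A * B * X * Y) ∧ vCoord P = -(A ^ 2 * B * X ^ 3) :=
  ⟨.some _ _ (nonsingular_of_eq hk h3 (hkm ▸ sq_add_mul_eq_pow_three_of_diagonalCubic h)),
    WeierstrassCurve.Affine.Point.some_ne_zero _, rfl, rfl⟩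

open mordellCurve in
lemma exists_finset_point_of_diagonalCubic {O : Type*} [CommRing O] [IsDomain O] [CharZero O]
    {K : Type*} [Field K] [CharZero K] [Algebra O K] {N : AbsoluteValue O ℝ}
    (hN : ∀ n : ℤ, N n = intAbv n) {H : ℝ} (hH : 1 ≤ H) {A B m : ℤ} (hA : A ≠ 0) (hB : B ≠ 0)
    (hm : m ≠ 0) (hAH : |(A : ℝ)| ≤ H) (hBH : |(B : ℝ)| ≤ H) (S : Finset (ℚ × ℚ))
    (hS : ∀ p ∈ S, (A : ℚ) * p.1 ^ 3 + (B : ℚ) * p.2 ^ 3 = m ∧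
      HeightLE intAbv H p.1 ∧ HeightLE intAbv H p.2) :
    ∃ S' : Finset (mordellCurve (algebraMap O K ((A * B * m : ℤ) : O))).Point,
      S'.card = S.card ∧ ∀ P ∈ S', CoordHeightLE N (H ^ 6) P := by
  classical
  have hk : algebraMap O K ((A * B * m : ℤ) : O) = (A : K) * B * m := by simp
  have hA' : (A : K) ≠ 0 := Int.cast_ne_zero.2 hA
  have hB' : (B : K) ≠ 0 := Int.cast_ne_zero.2 hB
  have hk0 : algebraMap O K ((A * B * m : ℤ) : O) ≠ 0 :=
    hk ▸ mul_ne_zero (mul_ne_zero hA' hB') (Int.cast_ne_zero.2 hm)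
  have hcast (n : ℤ) (hn : |(n : ℝ)| ≤ H) : HeightLE N H (n : K) := by
    simpa using HeightLE.of_abv_le (K := K) ((hN n).trans_le hn) hH
  have hpoint (p : ℚ × ℚ) (hp : p ∈ S) :=
    exists_point_of_diagonalCubic (X := (p.1 : K)) (Y := (p.2 : K)) hk0 three_ne_zero hk
      (by exact_mod_cast congrArg (Rat.cast : ℚ → K) (hS p hp).1)
  choose! P hP0 hPu hPv using hpoint
  have hinj : Set.InjOn P S := fun p hp p' hp' h => by
    have hv := (hPv p hp).symm.trans ((congrArg vCoord h).trans (hPv p' hp'))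
    have hcube : (p.1 : K) ^ 3 = (p'.1 : K) ^ 3 :=
      mul_left_cancel₀ (mul_ne_zero (pow_ne_zero 2 hA') hB') (by linear_combination -hv)
    exact eq_of_diagonalCubic (Int.cast_ne_zero.2 hB) (hS p hp).1 (hS p' hp').1
      (by exact_mod_cast hcube)
  refine ⟨S.image P, Finset.card_image_of_injOn hinj, Finset.forall_mem_image.2 fun p hp => ?_⟩
  obtain ⟨hu, hv⟩ := heightLE_diagonalCubic hH (hcast A hAH) (hcast B hBH)
    (.of_rat hN (hS p hp).2.1) (.of_rat hN (hS p hp).2.2)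
  exact ⟨hP0 p hp, hPu p hp ▸ hu, hPv p hp ▸ hv⟩

open mordellCurve NumberField in
theorem exists_card_diagonalCubic_le {ε : ℝ} (hε : 0 < ε) : ∃ C : ℝ, 0 < C ∧ ∀ H ≥ 1,
    ∀ A B m : ℤ, A ≠ 0 → B ≠ 0 → m ≠ 0 → |(A : ℝ)| ≤ H → |(B : ℝ)| ≤ H → |(m : ℝ)| ≤ H →
      ∀ S : Finset (ℚ × ℚ), (∀ p ∈ S, (A : ℚ) * p.1 ^ 3 + (B : ℚ) * p.2 ^ 3 = m ∧
        HeightLE intAbv H p.1 ∧ HeightLE intAbv H p.2) → (S.card : ℝ) ≤ C * H ^ ε := by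
  classical
  let K := CyclotomicField 3 ℚ
  have : IsCyclotomicExtension {3} ℚ K := CyclotomicField.isCyclotomicExtension 3 ℚ
  have : IsPrincipalIdealRing (𝓞 K) := IsCyclotomicExtension.Rat.three_pid K
  obtain ⟨N, w, hw, hfin, hcount, hN⟩ := exists_eisenstein_abv K
  obtain ⟨C, hC, hpoints⟩ := exists_card_coordHeightLE_le (K := K) hw three_ne_zero hcount
    (show 0 < ε / 6 by positivity)
  refine ⟨C, hC, fun H hH A B m hA hB hm hAH hBH hmH S hS => ?_⟩
  have hk0 : ((A * B * m : ℤ) : 𝓞 K) ≠ 0 := by exact_mod_cast mul_ne_zero (mul_ne_zero hA hB) hm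
  have hkH : N ((A * B * m : ℤ) : 𝓞 K) ≤ H ^ 6 := by
    rw [hN, map_mul, map_mul]
    calc |(A : ℝ)| * |(B : ℝ)| * |(m : ℝ)| ≤ H * H * H := by gcongr
      _ = H ^ 3 := by ring
      _ ≤ H ^ 6 := pow_le_pow_right₀ hH (by norm_num)
  obtain ⟨S', hS'card, hS'⟩ :=
    exists_finset_point_of_diagonalCubic (K := K) hN hH hA hB hm hAH hBH S hS
  have hcard := hpoints (H ^ 6) (one_le_pow₀ hH) _ hk0 hkH S' hS'
  rw [hS'card, ← Real.rpow_natCast_mul (by linarith)] at hcard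
  convert hcard using 3
  push_cast
  ring

end DiagonalCubic

section Congruences

variable {a₁ a₂ q κ x₁ x₂ y₁ y₂ z₁ z₂ t : ℤ}

lemma sq_mul_form_eq (a₁ a₂ κ x₁ x₂ y₁ y₂ : ℤ) :
    a₂ ^ 2 * (18 * (a₁ * x₁ ^ 2 * y₁ ^ 3 + a₂ * x₂ ^ 2 * y₂ ^ 3)) =
      9 * κ * a₁ * x₂ * y₁ ^ 2 * (5 * κ ^ 2 * a₁ * a₂ * x₁ * y₁ + a₂ ^ 2 * x₁ * y₂ +
        κ ^ 5 * a₁ ^ 2 * x₂ * y₁ + 5 * κ ^ 3 * a₁ * a₂ * x₂ * y₂) +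
      a₁ * y₁ * ((2 * a₂ * x₁ * y₁ + κ ^ 3 * a₁ * x₂ * y₁ + 3 * κ * a₂ * x₂ * y₂) *
        (9 * y₁ * (a₂ * x₁ - κ ^ 3 * a₁ * x₂) -
          6 * κ * (3 * x₂ * (κ ^ 2 * a₁ * y₁ + a₂ * y₂)))) +
      2 * ((3 * x₂ * (κ ^ 2 * a₁ * y₁ + a₂ * y₂)) ^ 2 * (κ ^ 2 * a₁ * y₁ + a₂ * y₂)) := by
  ring

lemma Congs.pow_three_dvd (h : Congs a₁ a₂ q κ x₁ x₂ y₁ y₂) (hq : IsCoprime q a₂) :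
    q ^ 3 ∣ 18 * (a₁ * x₁ ^ 2 * y₁ ^ 3 + a₂ * x₂ ^ 2 * y₂ ^ 3) := by
  obtain ⟨h1, h2, -, h3, h4⟩ := h
  have hcop : IsCoprime (q ^ 3) (a₂ ^ 2) := hq.pow
  have h2' := h2.mul_left (3 * x₂)
  refine hcop.dvd_of_dvd_mul_left ?_
  rw [sq_mul_form_eq _ _ κ, pow_succ]
  rw [pow_succ] at h4
  exact dvd_add (dvd_add (h4.mul_left _) ((mul_dvd_mul h3
    (dvd_sub (h1.mul_left _) (h2'.mul_left _))).mul_left _))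
    ((mul_dvd_mul (pow_dvd_pow_of_dvd h2' 2) h2).mul_left _)

lemma Congs.sq_dvd_of_common_factor (h : Congs a₁ a₂ q κ x₁ x₂ (t * z₁) (t * z₂)) (ht : t ≠ 0)
    (htq : t ∣ q) (hta : IsCoprime t a₂) (htκ : IsCoprime t κ) :
    t ^ 2 ∣ 18 * (a₁ * x₁ ^ 2 * z₁ ^ 3 + a₂ * x₂ ^ 2 * z₂ ^ 3) := by
  obtain ⟨h1, -, -, h3, h4⟩ := h
  have hu : t ∣ a₂ * x₁ - κ ^ 3 * a₁ * x₂ := htq.trans h1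
  have hc3 : t ∣ 2 * a₂ * x₁ * z₁ + κ ^ 3 * a₁ * x₂ * z₁ + 3 * κ * a₂ * x₂ * z₂ := by
    refine Int.dvd_of_mul_dvd_mul_left ht ?_
    rw [← sq]
    exact ((pow_dvd_pow_of_dvd htq 2).trans h3).trans (dvd_of_eq (by ring))
  have hc4 : t ^ 2 ∣ 5 * κ ^ 2 * a₁ * a₂ * x₁ * z₁ + a₂ ^ 2 * x₁ * z₂ +
      κ ^ 5 * a₁ ^ 2 * x₂ * z₁ + 5 * κ ^ 3 * a₁ * a₂ * x₂ * z₂ := by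
    refine Int.dvd_of_mul_dvd_mul_left ht ?_
    rw [← pow_succ']
    exact ((pow_dvd_pow_of_dvd htq 3).trans h4).trans (dvd_of_eq (by ring))
  have hw : t ∣ 3 * x₂ * (κ ^ 2 * a₁ * z₁ + a₂ * z₂) := by
    refine htκ.dvd_of_dvd_mul_left ?_
    exact (dvd_sub hc3 (hu.mul_left (2 * z₁))).trans (dvd_of_eq (by ring))
  have hcop : IsCoprime (t ^ 2) (a₂ ^ 2) := hta.pow
  refine hcop.dvd_of_dvd_mul_left ?_
  rw [sq_mul_form_eq _ _ κ]
  refine dvd_add (dvd_add (hc4.mul_left _) (Dvd.dvd.mul_left ?_ _))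
    (((pow_dvd_pow_of_dvd hw 2).mul_right _).mul_left _)
  rw [sq]
  exact mul_dvd_mul hc3 (dvd_sub (hu.mul_left _) (hw.mul_left _))

lemma isCoprime_of_squarefree_mul {a b : ℤ} (h : Squarefree (a * b)) : IsCoprime a b :=
  (IsRelPrime.of_squarefree_mul h).isCoprime

theorem Congs.pow_three_mul_sq_dvd (h : Congs a₁ a₂ q κ x₁ x₂ y₁ y₂) (hq : Squarefree q)
    (hqa : IsCoprime q a₂) (hκ : IsCoprime κ q) (htq : t ∣ q) (hty₁ : t ∣ y₁) (hty₂ : t ∣ y₂) :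
    q ^ 3 * t ^ 2 ∣ 18 * (a₁ * x₁ ^ 2 * y₁ ^ 3 + a₂ * x₂ ^ 2 * y₂ ^ 3) := by
  have ht : t ≠ 0 := ne_zero_of_dvd_ne_zero hq.ne_zero htq
  obtain ⟨z₁, rfl⟩ := hty₁
  obtain ⟨z₂, rfl⟩ := hty₂
  have ht5 : t ^ 5 ∣ 18 * (a₁ * x₁ ^ 2 * (t * z₁) ^ 3 + a₂ * x₂ ^ 2 * (t * z₂) ^ 3) := by
    have hz := mul_dvd_mul_left (t ^ 3) (h.sq_dvd_of_common_factor ht htq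
      (hqa.of_isCoprime_of_dvd_left htq) (hκ.symm.of_isCoprime_of_dvd_left htq))
    exact (dvd_of_eq (by ring)).trans (hz.trans (dvd_of_eq (by ring)))
  obtain ⟨q₀, rfl⟩ := htq
  have hcop : IsCoprime (t ^ 5) (q₀ ^ 3) := (isCoprime_of_squarefree_mul hq).pow
  rw [show (t * q₀) ^ 3 * t ^ 2 = t ^ 5 * q₀ ^ 3 by ring]
  exact hcop.mul_dvd ht5
    ((pow_dvd_pow_of_dvd (dvd_mul_left q₀ t) 3).trans (h.pow_three_dvd hqa))

end Congruences

/-- The greatest common divisor of three integers. -/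
def gcd₃ (q y₁ y₂ : ℤ) : ℕ := Int.gcd q (Int.gcd y₁ y₂)

section GcdThree

variable {d q y₁ y₂ q' y₁' y₂' : ℤ}

lemma gcd₃_dvd_left : (gcd₃ q y₁ y₂ : ℤ) ∣ q := Int.gcd_dvd_left ..

lemma gcd₃_dvd_middle : (gcd₃ q y₁ y₂ : ℤ) ∣ y₁ :=
  (Int.gcd_dvd_right ..).trans (Int.gcd_dvd_left ..)

lemma gcd₃_dvd_right : (gcd₃ q y₁ y₂ : ℤ) ∣ y₂ :=
  (Int.gcd_dvd_right ..).trans (Int.gcd_dvd_right ..)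

lemma dvd_gcd₃ (h : d ∣ q) (h₁ : d ∣ y₁) (h₂ : d ∣ y₂) : d ∣ gcd₃ q y₁ y₂ :=
  Int.dvd_coe_gcd h (Int.dvd_coe_gcd h₁ h₂)

lemma gcd₃_pos (hq : 0 < q) : 0 < gcd₃ q y₁ y₂ := Int.gcd_pos_of_ne_zero_left _ hq.ne'

lemma gcd₃_mul_right {c : ℤ} (hc : 0 ≤ c) :
    (gcd₃ (q * c) (y₁ * c) (y₂ * c) : ℤ) = gcd₃ q y₁ y₂ * c := by
  rw [gcd₃, Int.gcd_mul_right, Nat.cast_mul, Int.natAbs_of_nonneg hc, Int.gcd_mul_right,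
    Nat.cast_mul, Int.natAbs_of_nonneg hc, gcd₃]

lemma eq_of_gcd₃_eq (hq : 0 < q) (hq' : 0 < q') (ht : gcd₃ q y₁ y₂ = gcd₃ q' y₁' y₂')
    (h₁ : y₁ * q' = y₁' * q) (h₂ : y₂ * q' = y₂' * q) : q = q' ∧ y₁ = y₁' ∧ y₂ = y₂' := by
  have hmul : (gcd₃ q y₁ y₂ : ℤ) * q' = gcd₃ q y₁ y₂ * q := by
    rw [← gcd₃_mul_right hq'.le, h₁, h₂, mul_comm q q', gcd₃_mul_right hq.le, ← ht]
  have hqq : q = q' := (mul_left_cancel₀ (mod_cast (gcd₃_pos hq).ne') hmul).symm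
  subst hqq
  exact ⟨rfl, mul_right_cancel₀ hq.ne' h₁, mul_right_cancel₀ hq.ne' h₂⟩

end GcdThree

section SquareRootsModulo

variable {q q₀ κ κ' κ₀ a₁ a₂ y₁ y₂ : ℤ}

lemma dvd_add_of_squarefree_of_mul_gcd_eq (hq : Squarefree q₀) (h : q₀ ∣ (κ - κ₀) * (κ + κ₀))
    {e : ℤ} (he : q₀ = Int.gcd (κ - κ₀) q₀ * e) : e ∣ κ + κ₀ := by
  have hcop : IsCoprime (Int.gcd (κ - κ₀) q₀ : ℤ) e := isCoprime_of_squarefree_mul (he ▸ hq)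
  have heq₀ : e ∣ q₀ := Dvd.intro_left _ he.symm
  have hsub : IsCoprime e (κ - κ₀) := IsRelPrime.isCoprime fun d hde hd =>
    hcop.isUnit_of_dvd' (Int.dvd_coe_gcd hd (hde.trans heq₀)) hde
  exact hsub.dvd_of_dvd_mul_left (heq₀.trans h)

lemma dvd_sub_of_gcd_sub_eq (hq : Squarefree q₀) (h : q₀ ∣ (κ - κ₀) * (κ + κ₀))
    (h' : q₀ ∣ (κ' - κ₀) * (κ' + κ₀)) (hgcd : Int.gcd (κ - κ₀) q₀ = Int.gcd (κ' - κ₀) q₀) :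
    q₀ ∣ κ - κ' := by
  obtain ⟨e, he⟩ : (Int.gcd (κ - κ₀) q₀ : ℤ) ∣ q₀ := Int.gcd_dvd_right ..
  have hsub : (Int.gcd (κ - κ₀) q₀ : ℤ) ∣ κ - κ' := by
    have hd' : (Int.gcd (κ - κ₀) q₀ : ℤ) ∣ κ' - κ₀ := hgcd ▸ Int.gcd_dvd_left ..
    simpa using dvd_sub (Int.gcd_dvd_left ..) hd'
  have hadd : e ∣ κ - κ' := by
    simpa using dvd_sub (dvd_add_of_squarefree_of_mul_gcd_eq hq h he)
      (dvd_add_of_squarefree_of_mul_gcd_eq hq h' (hgcd ▸ he))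
  have hcop : IsCoprime (Int.gcd (κ - κ₀) q₀ : ℤ) e := isCoprime_of_squarefree_mul (he ▸ hq)
  exact (dvd_of_eq he).trans (hcop.mul_dvd hsub hadd)

lemma card_le_of_dvd_sub_mul_add {t : ℕ} (ht : 0 < t) (hs : Squarefree (t * q₀)) {S : Finset ℤ}
    (hS : ∀ κ ∈ S, 0 ≤ κ ∧ κ < t * q₀ ∧ q₀ ∣ (κ - κ₀) * (κ + κ₀)) :
    S.card ≤ t * (t * q₀).natAbs.divisors.card := by
  have htq : IsCoprime (t : ℤ) q₀ := isCoprime_of_squarefree_mul hs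
  have hs₀ : Squarefree q₀ := hs.squarefree_of_dvd (dvd_mul_left _ _)
  have ht' : (0 : ℤ) < t := by exact_mod_cast ht
  have hcard : (Finset.Ico (0 : ℤ) t ×ˢ (t * q₀).natAbs.divisors).card =
      t * (t * q₀).natAbs.divisors.card := by simp [Finset.card_product]
  rw [← hcard]
  refine Finset.card_le_card_of_injOn (fun κ => (κ % t, Int.gcd (κ - κ₀) q₀)) ?_ ?_
  · intro κ _
    refine Finset.mem_coe.2 (Finset.mem_product.2 ⟨Finset.mem_Ico.2
      ⟨Int.emod_nonneg _ ht'.ne', Int.emod_lt_of_pos _ ht'⟩, Nat.mem_divisors.2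
      ⟨Int.natCast_dvd.1 ((Int.gcd_dvd_right ..).trans (dvd_mul_left _ _)),
        Int.natAbs_ne_zero.2 hs.ne_zero⟩⟩)
  · intro κ hκ κ' hκ' heq
    obtain ⟨hmod, hgcd⟩ := Prod.mk.inj heq
    obtain ⟨h0, hlt, hd⟩ := hS κ hκ
    obtain ⟨h0', hlt', hd'⟩ := hS κ' hκ'
    have hdvd : t * q₀ ∣ κ - κ' :=
      htq.mul_dvd (Int.ModEq.dvd (Int.ModEq.symm hmod)) (dvd_sub_of_gcd_sub_eq hs₀ hd hd' hgcd)
    exact sub_eq_zero.1 (Int.eq_zero_of_abs_lt_dvd hdvd (abs_lt.2 ⟨by linarith, by linarith⟩))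

lemma isCoprime_of_mul_gcd₃_eq (hs : Squarefree q) (hq₂ : IsCoprime q a₂)
    (h : q ∣ κ ^ 2 * a₁ * y₁ + a₂ * y₂) (hq₀ : q = gcd₃ q y₁ y₂ * q₀) : IsCoprime q₀ y₁ := by
  have hq₀q : q₀ ∣ q := Dvd.intro_left _ hq₀.symm
  have hcop : IsCoprime (gcd₃ q y₁ y₂ : ℤ) q₀ := isCoprime_of_squarefree_mul (hq₀ ▸ hs)
  refine IsRelPrime.isCoprime fun d hd hdy₁ => hcop.isUnit_of_dvd'
    (dvd_gcd₃ (hd.trans hq₀q) hdy₁ ?_) hd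
  refine (hq₂.of_isCoprime_of_dvd_left (hd.trans hq₀q)).dvd_of_dvd_mul_left ?_
  exact (dvd_add_right (hdy₁.mul_left _)).1 ((hd.trans hq₀q).trans h)

lemma card_sqrt_mod_le (hq : 0 < q) (hs : Squarefree q) (hq₁ : IsCoprime q a₁)
    (hq₂ : IsCoprime q a₂) {S : Finset ℤ}
    (hS : ∀ κ ∈ S, 0 ≤ κ ∧ κ < q ∧ q ∣ κ ^ 2 * a₁ * y₁ + a₂ * y₂) :
    S.card ≤ gcd₃ q y₁ y₂ * q.natAbs.divisors.card := by
  rcases S.eq_empty_or_nonempty with rfl | ⟨κ₀, hκ₀⟩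
  · simp
  obtain ⟨q₀, hq₀⟩ : (gcd₃ q y₁ y₂ : ℤ) ∣ q := gcd₃_dvd_left
  have hq₀q : q₀ ∣ q := Dvd.intro_left _ hq₀.symm
  have hy₁ := isCoprime_of_mul_gcd₃_eq hs hq₂ (hS κ₀ hκ₀).2.2 hq₀
  have hcard := card_le_of_dvd_sub_mul_add (q₀ := q₀) (κ₀ := κ₀) (S := S)
    (gcd₃_pos (y₁ := y₁) (y₂ := y₂) hq) (hq₀ ▸ hs) fun κ hκ => by
      obtain ⟨h0, hlt, hd⟩ := hS κ hκ
      refine ⟨h0, hq₀ ▸ hlt, ((hq₁.of_isCoprime_of_dvd_left hq₀q).mul_right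
        hy₁).dvd_of_dvd_mul_left ?_⟩
      exact (hq₀q.trans (dvd_sub hd (hS κ₀ hκ₀).2.2)).trans (dvd_of_eq (by ring))
  rwa [← hq₀] at hcard

end SquareRootsModulo

lemma exists_card_divisors_le {δ : ℝ} (hδ : 0 < δ) :
    ∃ C : ℝ, 0 < C ∧ ∀ q : ℤ, q ≠ 0 → (q.natAbs.divisors.card : ℝ) ≤ C * |(q : ℝ)| ^ δ := by
  obtain ⟨C, hC, hbound⟩ := exists_ncard_dvd_le_mul_rpow intAbv hδ
  refine ⟨C, hC, fun q hq => ?_⟩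
  obtain ⟨hfin, hcard⟩ := hbound q hq
  refine le_trans ?_ hcard
  rw [← Set.ncard_coe_finset]
  exact_mod_cast Set.ncard_le_ncard_of_injOn (Nat.cast : ℕ → ℤ)
    (fun d hd => Int.natCast_dvd.2 (Nat.dvd_of_mem_divisors hd)) Nat.cast_injective.injOn hfin

/-- A triple `(g, q, κ)`, where `g = (x₁, x₂, y₁, y₂)` and the residue class `κ` modulo `q` is
encoded by an integer. -/
@[ext]
structure GeneratorTriple where
  (x₁ x₂ y₁ y₂ q κ : ℤ)

namespace GeneratorTriple

/-- The greatest common divisor of `q`, `y₁` and `y₂`. -/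
def content (s : GeneratorTriple) : ℕ := gcd₃ s.q s.y₁ s.y₂

/-- The pair `(y₁/q, y₂/q)`, a rational point of the diagonal cubic attached to `x₁`, `x₂`, the
content and the cofactor of the triple. -/
def ratio (s : GeneratorTriple) : ℚ × ℚ := (s.y₁ / s.q, s.y₂ / s.q)

lemma eq_of_ratio_eq {s s' : GeneratorTriple} (hq : 0 < s.q) (hq' : 0 < s'.q)
    (hc : s.content = s'.content) (hr : s.ratio = s'.ratio) :
    s.q = s'.q ∧ s.y₁ = s'.y₁ ∧ s.y₂ = s'.y₂ := by
  have hq0 : (s.q : ℚ) ≠ 0 := Int.cast_ne_zero.2 hq.ne'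
  have hq0' : (s'.q : ℚ) ≠ 0 := Int.cast_ne_zero.2 hq'.ne'
  obtain ⟨h₁, h₂⟩ := Prod.mk.inj hr
  rw [div_eq_div_iff hq0 hq0'] at h₁ h₂
  exact eq_of_gcd₃_eq hq hq' hc (by exact_mod_cast h₁) (by exact_mod_cast h₂)

lemma heightLE_ratio {s : GeneratorTriple} {H : ℝ} (hq0 : s.q ≠ 0) (hq : |(s.q : ℝ)| ≤ H)
    (h₁ : |(s.y₁ : ℝ)| ≤ H) (h₂ : |(s.y₂ : ℝ)| ≤ H) :
    HeightLE intAbv H s.ratio.1 ∧ HeightLE intAbv H s.ratio.2 :=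
  have hq' : (s.q : ℚ) ≠ 0 := Int.cast_ne_zero.2 hq0
  ⟨⟨s.y₁, s.q, hq0, div_mul_cancel₀ _ hq', h₁, hq⟩, ⟨s.y₂, s.q, hq0, div_mul_cancel₀ _ hq', h₂, hq⟩⟩

end GeneratorTriple

/-- The coefficients `a₁, a₂` and the sizes `X₁, X₂, Y₁, Y₂, Y₃, R` that delimit the triples being
counted. -/
structure GeneratorBox where
  (a₁ a₂ : ℤ)
  (X₁ X₂ Y₁ Y₂ Y₃ R : ℝ)

namespace GeneratorBox

/-- The form `a₁x₁²y₁³ + a₂x₂²y₂³`. -/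
def form (P : GeneratorBox) (s : GeneratorTriple) : ℤ :=
  P.a₁ * s.x₁ ^ 2 * s.y₁ ^ 3 + P.a₂ * s.x₂ ^ 2 * s.y₂ ^ 3

/-- The triples `(g, q, κ)` counted by the theorem: `(q, κ)` is admissible, with `κ` the least
nonnegative representative of its class, and `g` is nondegenerate, satisfies the congruences and
lies in the dilation by `R` of the box of sides `X₁, X₂, Y₁, Y₂`. -/
structure Contains (P : GeneratorBox) (s : GeneratorTriple) : Prop where
  squarefree : Squarefree s.q
  half_lt_q : P.Y₃ / 2 < s.q
  q_le : (s.q : ℝ) ≤ P.Y₃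
  coprime : IsCoprime s.q (P.a₁ * P.a₂)
  κ_nonneg : 0 ≤ s.κ
  κ_lt : s.κ < s.q
  κ_coprime : IsCoprime s.κ s.q
  form_ne_zero : P.form s ≠ 0
  congs : Congs P.a₁ P.a₂ s.q s.κ s.x₁ s.x₂ s.y₁ s.y₂
  abs_x₁_le : |(s.x₁ : ℝ)| ≤ P.R * P.X₁
  abs_x₂_le : |(s.x₂ : ℝ)| ≤ P.R * P.X₂
  abs_y₁_le : |(s.y₁ : ℝ)| ≤ P.R * P.Y₁
  abs_y₂_le : |(s.y₂ : ℝ)| ≤ P.R * P.Y₂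

/-- The parameters are of moderate size relative to `B`: the sides of the box lie in `[1, B]` and
both terms of the form are `O(B)` on the undilated box. -/
structure IsModerate (P : GeneratorBox) (B : ℝ) : Prop where
  two_le : 2 ≤ B
  a₁_ne_zero : P.a₁ ≠ 0
  a₂_ne_zero : P.a₂ ≠ 0
  X₁_mem : P.X₁ ∈ Set.Icc 1 B
  X₂_mem : P.X₂ ∈ Set.Icc 1 B
  Y₁_mem : P.Y₁ ∈ Set.Icc 1 B
  Y₂_mem : P.Y₂ ∈ Set.Icc 1 B
  Y₃_mem : P.Y₃ ∈ Set.Icc 1 B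
  abs_a₁_mul_le : |(P.a₁ : ℝ)| * (P.X₁ ^ 2 * P.Y₁ ^ 3) ≤ 32 * B
  abs_a₂_mul_le : |(P.a₂ : ℝ)| * (P.X₂ ^ 2 * P.Y₂ ^ 3) ≤ 32 * B
  R_pos : 0 < P.R

/-- The integer `m` in the factorisation `18 (a₁x₁²y₁³ + a₂x₂²y₂³) = q³ t² m`, where `t` is the
content. -/
def cofactor (P : GeneratorBox) (s : GeneratorTriple) : ℤ :=
  18 * P.form s / (s.q ^ 3 * (s.content : ℤ) ^ 2)

namespace Contains

variable {P : GeneratorBox} {s : GeneratorTriple} {B : ℝ}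

lemma q_pos (h : P.Contains s) (hY : 0 < P.Y₃) : 0 < s.q := by
  have := h.half_lt_q
  exact_mod_cast (show (0 : ℝ) < s.q by linarith)

lemma content_pos (h : P.Contains s) (hY : 0 < P.Y₃) : 0 < s.content := gcd₃_pos (h.q_pos hY)

lemma content_le (h : P.Contains s) (hY : 0 < P.Y₃) : (s.content : ℝ) ≤ P.Y₃ := by
  refine le_trans ?_ h.q_le
  exact_mod_cast Int.le_of_dvd (h.q_pos hY) gcd₃_dvd_left

lemma form_eq_mul_cofactor (h : P.Contains s) :
    18 * P.form s = s.q ^ 3 * (s.content : ℤ) ^ 2 * P.cofactor s :=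
  (Int.mul_ediv_cancel' (h.congs.pow_three_mul_sq_dvd h.squarefree h.coprime.of_mul_right_right
    h.κ_coprime gcd₃_dvd_left gcd₃_dvd_middle gcd₃_dvd_right)).symm

lemma cofactor_ne_zero (h : P.Contains s) : P.cofactor s ≠ 0 := fun h0 =>
  h.form_ne_zero (by simpa [h0] using h.form_eq_mul_cofactor)

lemma ratio_mem_cubic (h : P.Contains s) :
    ((18 * P.a₁ * s.x₁ ^ 2 : ℤ) : ℚ) * s.ratio.1 ^ 3 +
      ((18 * P.a₂ * s.x₂ ^ 2 : ℤ) : ℚ) * s.ratio.2 ^ 3 =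
        (((s.content : ℤ) ^ 2 * P.cofactor s : ℤ) : ℚ) := by
  have hq : (s.q : ℚ) ≠ 0 := Int.cast_ne_zero.2 h.squarefree.ne_zero
  have hform := congrArg (Int.cast : ℤ → ℚ) h.form_eq_mul_cofactor
  simp only [form, GeneratorTriple.ratio] at hform ⊢
  push_cast at hform ⊢
  field_simp
  linear_combination hform

lemma abs_form_le (h : P.Contains s) (hP : P.IsModerate B) :
    |(P.form s : ℝ)| ≤ 64 * B * P.R ^ 5 := by
  have h₁ := h.abs_x₁_le
  have h₂ := h.abs_x₂_le
  have h₃ := h.abs_y₁_le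
  have h₄ := h.abs_y₂_le
  have ha₁ := hP.abs_a₁_mul_le
  have ha₂ := hP.abs_a₂_mul_le
  have hR := hP.R_pos
  rw [form]
  push_cast
  refine (abs_add_le _ _).trans ?_
  simp only [abs_mul, abs_pow]
  calc |(P.a₁ : ℝ)| * |(s.x₁ : ℝ)| ^ 2 * |(s.y₁ : ℝ)| ^ 3 +
        |(P.a₂ : ℝ)| * |(s.x₂ : ℝ)| ^ 2 * |(s.y₂ : ℝ)| ^ 3
      ≤ |(P.a₁ : ℝ)| * (P.R * P.X₁) ^ 2 * (P.R * P.Y₁) ^ 3 +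
        |(P.a₂ : ℝ)| * (P.R * P.X₂) ^ 2 * (P.R * P.Y₂) ^ 3 := by gcongr
    _ = (|(P.a₁ : ℝ)| * (P.X₁ ^ 2 * P.Y₁ ^ 3) + |(P.a₂ : ℝ)| * (P.X₂ ^ 2 * P.Y₂ ^ 3)) *
        P.R ^ 5 := by ring
    _ ≤ (32 * B + 32 * B) * P.R ^ 5 := by gcongr
    _ = 64 * B * P.R ^ 5 := by ring

lemma abs_cofactor_le (h : P.Contains s) (hP : P.IsModerate B) :
    |(P.cofactor s : ℝ)| ≤ 9216 * B * P.R ^ 5 / P.Y₃ ^ 3 / (s.content : ℝ) ^ 2 := by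
  have hY : 0 < P.Y₃ := zero_lt_one.trans_le hP.Y₃_mem.1
  have hq : (0 : ℝ) < s.q := by exact_mod_cast h.q_pos hY
  have ht : (0 : ℝ) < s.content := by exact_mod_cast h.content_pos hY
  have hform : 18 * |(P.form s : ℝ)| =
      (s.q : ℝ) ^ 3 * (s.content : ℝ) ^ 2 * |(P.cofactor s : ℝ)| := by
    have hcast := congrArg (fun n : ℤ => |(n : ℝ)|) h.form_eq_mul_cofactor
    push_cast at hcast
    rwa [abs_mul, abs_mul, abs_of_pos (by positivity : 0 < (s.q : ℝ) ^ 3 * (s.content : ℝ) ^ 2),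
      abs_of_pos (by norm_num : (0 : ℝ) < 18)] at hcast
  have hhalf : (P.Y₃ / 2) ^ 3 * ((s.content : ℝ) ^ 2 * |(P.cofactor s : ℝ)|) ≤
      (s.q : ℝ) ^ 3 * ((s.content : ℝ) ^ 2 * |(P.cofactor s : ℝ)|) := by
    have := h.half_lt_q
    gcongr
  rw [div_div, le_div_iff₀ (by positivity)]
  linarith [h.abs_form_le hP]

end Contains

end GeneratorBox

lemma card_le_sum_of_card_fiber_le {α β : Type*} [DecidableEq β] {S : Finset α} {T : Finset β}
    {f : α → β} (hf : ∀ s ∈ S, f s ∈ T) {c : β → ℝ}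
    (hc : ∀ b ∈ T, ((S.filter fun s => f s = b).card : ℝ) ≤ c b) : (S.card : ℝ) ≤ ∑ b ∈ T, c b := by
  rw [Finset.card_eq_sum_card_fiberwise hf, Nat.cast_sum]
  exact Finset.sum_le_sum hc

lemma card_le_card_mul_of_card_fiber_le {α β : Type*} [DecidableEq β] {S : Finset α}
    {T : Finset β} {f : α → β} (hf : ∀ s ∈ S, f s ∈ T) {c : ℝ}
    (hc : ∀ b ∈ T, ((S.filter fun s => f s = b).card : ℝ) ≤ c) : (S.card : ℝ) ≤ T.card * c := by
  simpa using card_le_sum_of_card_fiber_le hf hc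

namespace GeneratorBox

variable {P : GeneratorBox} {B D H M N : ℝ} {x₁ x₂ m : ℤ} {t : ℕ} {S : Finset GeneratorTriple}

lemma card_le_of_ratio_eq (hY : 0 < P.Y₃) (hD0 : 0 ≤ D)
    (hD : ∀ q : ℤ, 0 < q → (q : ℝ) ≤ P.Y₃ → (q.natAbs.divisors.card : ℝ) ≤ D) {r : ℚ × ℚ}
    (hS : ∀ s ∈ S, P.Contains s ∧ s.x₁ = x₁ ∧ s.x₂ = x₂ ∧ s.content = t ∧ s.ratio = r) :
    (S.card : ℝ) ≤ t * D := by
  classical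
  rcases S.eq_empty_or_nonempty with rfl | ⟨s₀, hs₀⟩
  · simpa using mul_nonneg t.cast_nonneg hD0
  obtain ⟨h₀, -, -, ht, hr⟩ := hS s₀ hs₀
  have heq : ∀ s ∈ S, s₀.q = s.q ∧ s₀.y₁ = s.y₁ ∧ s₀.y₂ = s.y₂ := fun s hs =>
    have hs' := hS s hs
    GeneratorTriple.eq_of_ratio_eq (h₀.q_pos hY) (hs'.1.q_pos hY) (ht.trans hs'.2.2.2.1.symm)
      (hr.trans hs'.2.2.2.2.symm)
  have hinj : Set.InjOn GeneratorTriple.κ S := fun s hs s' hs' hκ => by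
    obtain ⟨hq, h₁, h₂⟩ := heq s hs
    obtain ⟨hq', h₁', h₂'⟩ := heq s' hs'
    exact GeneratorTriple.ext ((hS s hs).2.1.trans (hS s' hs').2.1.symm)
      ((hS s hs).2.2.1.trans (hS s' hs').2.2.1.symm) (h₁.symm.trans h₁') (h₂.symm.trans h₂')
      (hq.symm.trans hq') hκ
  have hcard : S.card ≤ t * s₀.q.natAbs.divisors.card := by
    rw [← Finset.card_image_of_injOn hinj, ← ht]
    refine card_sqrt_mod_le (h₀.q_pos hY) h₀.squarefree h₀.coprime.of_mul_right_left
      h₀.coprime.of_mul_right_right (Finset.forall_mem_image.2 fun s hs => ?_)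
    obtain ⟨hq, h₁, h₂⟩ := heq s hs
    have hs' := (hS s hs).1
    exact hq ▸ h₁ ▸ h₂ ▸ ⟨hs'.κ_nonneg, hs'.κ_lt, hs'.congs.2.1⟩
  calc (S.card : ℝ) ≤ t * s₀.q.natAbs.divisors.card := by exact_mod_cast hcard
    _ ≤ t * D := by gcongr; exact hD _ (h₀.q_pos hY) h₀.q_le

/-- `N` bounds, for all relevant `x₁, x₂` and all `k` of size at most `M`, the number of rational
points of height at most `H` on the diagonal cubic `18a₁x₁²X³ + 18a₂x₂²Y³ = k`. -/
def CubicPointBound (P : GeneratorBox) (M H N : ℝ) : Prop :=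
  ∀ x₁ x₂ k : ℤ, x₁ ≠ 0 → x₂ ≠ 0 → k ≠ 0 → |(x₁ : ℝ)| ≤ P.R * P.X₁ → |(x₂ : ℝ)| ≤ P.R * P.X₂ →
    |(k : ℝ)| ≤ M → ∀ T : Finset (ℚ × ℚ), (∀ p ∈ T,
      ((18 * P.a₁ * x₁ ^ 2 : ℤ) : ℚ) * p.1 ^ 3 + ((18 * P.a₂ * x₂ ^ 2 : ℤ) : ℚ) * p.2 ^ 3 = k ∧
        HeightLE intAbv H p.1 ∧ HeightLE intAbv H p.2) → (T.card : ℝ) ≤ N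

lemma card_le_of_cofactor_eq (hY : 0 < P.Y₃) (hD0 : 0 ≤ D)
    (hD : ∀ q : ℤ, 0 < q → (q : ℝ) ≤ P.Y₃ → (q.natAbs.divisors.card : ℝ) ≤ D)
    (hH₁ : P.R * P.Y₁ ≤ H) (hH₂ : P.R * P.Y₂ ≤ H) (hH₃ : P.Y₃ ≤ H) (hN : P.CubicPointBound M H N)
    (hx₁ : x₁ ≠ 0) (hx₂ : x₂ ≠ 0) (ht : 0 < t) (hm : m ≠ 0) (hx₁X : |(x₁ : ℝ)| ≤ P.R * P.X₁)
    (hx₂X : |(x₂ : ℝ)| ≤ P.R * P.X₂) (hmM : (t : ℝ) ^ 2 * |(m : ℝ)| ≤ M)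
    (hS : ∀ s ∈ S, P.Contains s ∧ s.x₁ = x₁ ∧ s.x₂ = x₂ ∧ s.content = t ∧ P.cofactor s = m) :
    (S.card : ℝ) ≤ N * (t * D) := by
  classical
  have hcard : ((S.image GeneratorTriple.ratio).card : ℝ) ≤ N := by
    refine hN x₁ x₂ ((t : ℤ) ^ 2 * m) hx₁ hx₂ (mul_ne_zero (by positivity) hm) hx₁X hx₂X
      (by push_cast; rwa [abs_mul, abs_of_nonneg (by positivity)]) _
      (Finset.forall_mem_image.2 fun s hs => ?_)
    obtain ⟨h, rfl, rfl, rfl, rfl⟩ := hS s hs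
    have hq : (0 : ℝ) < s.q := by exact_mod_cast h.q_pos hY
    exact ⟨h.ratio_mem_cubic, GeneratorTriple.heightLE_ratio h.squarefree.ne_zero
      ((abs_of_pos hq).trans_le (h.q_le.trans hH₃)) (h.abs_y₁_le.trans hH₁)
      (h.abs_y₂_le.trans hH₂)⟩
  refine (card_le_card_mul_of_card_fiber_le (T := S.image GeneratorTriple.ratio)
    (fun s hs => Finset.mem_image_of_mem _ hs) (c := t * D) fun r _ =>
      card_le_of_ratio_eq hY hD0 hD (x₁ := x₁) (x₂ := x₂) (r := r) fun s hs => ?_).trans ?_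
  · obtain ⟨hsS, hr⟩ := Finset.mem_filter.1 hs
    obtain ⟨h, h₁, h₂, h₃, -⟩ := hS s hsS
    exact ⟨h, h₁, h₂, h₃, hr⟩
  · gcongr

lemma card_le_of_content_eq (hP : P.IsModerate B) (hD0 : 0 ≤ D)
    (hD : ∀ q : ℤ, 0 < q → (q : ℝ) ≤ P.Y₃ → (q.natAbs.divisors.card : ℝ) ≤ D)
    (hH₁ : P.R * P.Y₁ ≤ H) (hH₂ : P.R * P.Y₂ ≤ H) (hH₃ : P.Y₃ ≤ H) (hN0 : 0 ≤ N)
    (hN : P.CubicPointBound (9216 * B * P.R ^ 5 / P.Y₃ ^ 3) H N)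
    (hx₁ : x₁ ≠ 0) (hx₂ : x₂ ≠ 0) (ht : 0 < t) (hx₁X : |(x₁ : ℝ)| ≤ P.R * P.X₁)
    (hx₂X : |(x₂ : ℝ)| ≤ P.R * P.X₂)
    (hS : ∀ s ∈ S, P.Contains s ∧ s.x₁ = x₁ ∧ s.x₂ = x₂ ∧ s.content = t) :
    (S.card : ℝ) ≤ 2 * (9216 * B * P.R ^ 5 / P.Y₃ ^ 3) * D * N * (t : ℝ)⁻¹ := by
  have hY : 0 < P.Y₃ := zero_lt_one.trans_le hP.Y₃_mem.1
  have hB : 0 < B := zero_lt_two.trans_le hP.two_le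
  have hR := hP.R_pos
  have ht' : (0 : ℝ) < t := by exact_mod_cast ht
  set M := 9216 * B * P.R ^ 5 / P.Y₃ ^ 3
  have hcard : (S.card : ℝ) ≤ ((intBall (M / (t : ℝ) ^ 2)).erase 0).card * (N * (t * D)) := by
    refine card_le_card_mul_of_card_fiber_le (f := P.cofactor) (fun s hs => ?_) fun m hm => ?_
    · obtain ⟨h, -, -, rfl⟩ := hS s hs
      exact Finset.mem_erase.2 ⟨h.cofactor_ne_zero, mem_intBall.2 (h.abs_cofactor_le hP)⟩
    · obtain ⟨hm0, hmM⟩ := Finset.mem_erase.1 hm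
      refine card_le_of_cofactor_eq hY hD0 hD hH₁ hH₂ hH₃ hN hx₁ hx₂ ht hm0 hx₁X hx₂X ?_
        fun s hs => ?_
      · rw [mul_comm, ← le_div_iff₀ (by positivity)]
        exact mem_intBall.1 hmM
      · obtain ⟨hsS, hsm⟩ := Finset.mem_filter.1 hs
        obtain ⟨h, h₁, h₂, h₃⟩ := hS s hsS
        exact ⟨h, h₁, h₂, h₃, hsm⟩
  calc (S.card : ℝ) ≤ (2 * (M / (t : ℝ) ^ 2)) * (N * (t * D)) := by
        refine hcard.trans ?_
        gcongr
        exact card_intBall_erase_zero_le (by positivity)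
    _ = 2 * M * D * N * (t : ℝ)⁻¹ := by field_simp

lemma card_le_of_cubicPointBound (hP : P.IsModerate B) (hD0 : 0 ≤ D)
    (hD : ∀ q : ℤ, 0 < q → (q : ℝ) ≤ P.Y₃ → (q.natAbs.divisors.card : ℝ) ≤ D)
    (hH₁ : P.R * P.Y₁ ≤ H) (hH₂ : P.R * P.Y₂ ≤ H) (hH₃ : P.Y₃ ≤ H) (hN0 : 0 ≤ N)
    (hN : P.CubicPointBound (9216 * B * P.R ^ 5 / P.Y₃ ^ 3) H N)
    (hS : ∀ s ∈ S, P.Contains s ∧ s.x₁ ≠ 0 ∧ s.x₂ ≠ 0) :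
    (S.card : ℝ) ≤ 8 * 9216 * (P.X₁ * P.X₂ * B * P.R ^ 7 / P.Y₃ ^ 3) * D * N *
      (1 + Real.log P.Y₃) := by
  classical
  have hY : 0 < P.Y₃ := zero_lt_one.trans_le hP.Y₃_mem.1
  have hX₁ : 0 < P.X₁ := zero_lt_one.trans_le hP.X₁_mem.1
  have hX₂ : 0 < P.X₂ := zero_lt_one.trans_le hP.X₂_mem.1
  have hB : 0 < B := zero_lt_two.trans_le hP.two_le
  have hR := hP.R_pos
  have hcard := card_le_sum_of_card_fiber_le (S := S) (T := (intBall (P.R * P.X₁)).erase 0 ×ˢ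
    (intBall (P.R * P.X₂)).erase 0 ×ˢ Finset.Icc 1 ⌊P.Y₃⌋₊) (f := fun s => (s.x₁, s.x₂, s.content))
    (c := fun p => 2 * (9216 * B * P.R ^ 5 / P.Y₃ ^ 3) * D * N * (p.2.2 : ℝ)⁻¹)
    (fun s hs => by
      obtain ⟨h, h₁, h₂⟩ := hS s hs
      simp only [Finset.mem_product, Finset.mem_erase, mem_intBall, Finset.mem_Icc]
      exact ⟨⟨h₁, h.abs_x₁_le⟩, ⟨h₂, h.abs_x₂_le⟩, h.content_pos hY,
        Nat.le_floor (h.content_le hY)⟩)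
    (by
      rintro ⟨x₁, x₂, t⟩ hp
      simp only [Finset.mem_product, Finset.mem_erase, mem_intBall, Finset.mem_Icc] at hp
      obtain ⟨⟨h₁, hX₁⟩, ⟨h₂, hX₂⟩, ht, -⟩ := hp
      refine card_le_of_content_eq hP hD0 hD hH₁ hH₂ hH₃ hN0 hN h₁ h₂ ht hX₁ hX₂ fun s hs => ?_
      obtain ⟨hsS, heq⟩ := Finset.mem_filter.1 hs
      simp only [Prod.mk.injEq] at heq
      exact ⟨(hS s hsS).1, heq⟩)
  have hharm : ∑ t ∈ Finset.Icc 1 ⌊P.Y₃⌋₊, (t : ℝ)⁻¹ ≤ 1 + Real.log P.Y₃ := by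
    simpa [harmonic_eq_sum_Icc] using harmonic_floor_le_one_add_log P.Y₃ hP.Y₃_mem.1
  simp only [Finset.sum_product, Finset.sum_const, nsmul_eq_mul, ← Finset.mul_sum] at hcard
  refine hcard.trans ?_
  calc 2 * (9216 * B * P.R ^ 5 / P.Y₃ ^ 3) * D * N * (((intBall (P.R * P.X₁)).erase 0).card *
        (((intBall (P.R * P.X₂)).erase 0).card * ∑ t ∈ Finset.Icc 1 ⌊P.Y₃⌋₊, (t : ℝ)⁻¹))
      ≤ 2 * (9216 * B * P.R ^ 5 / P.Y₃ ^ 3) * D * N * (2 * (P.R * P.X₁) *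
          (2 * (P.R * P.X₂) * (1 + Real.log P.Y₃))) := by
        gcongr <;> exact card_intBall_erase_zero_le (by positivity)
    _ = 8 * 9216 * (P.X₁ * P.X₂ * B * P.R ^ 7 / P.Y₃ ^ 3) * D * N * (1 + Real.log P.Y₃) := by ring

end GeneratorBox

lemma one_add_log_le {x B δ : ℝ} (hx : 0 < x) (hxB : x ≤ B) (hB : 1 ≤ B) (hδ : 0 < δ) :
    1 + Real.log x ≤ (1 + δ⁻¹) * B ^ δ := by
  have hlog : Real.log x ≤ B ^ δ / δ := (Real.log_le_rpow_div hx.le hδ).trans (by gcongr)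
  calc 1 + Real.log x ≤ B ^ δ + B ^ δ / δ := add_le_add (Real.one_le_rpow hB hδ.le) hlog
    _ = (1 + δ⁻¹) * B ^ δ := by ring

namespace GeneratorBox

variable {P : GeneratorBox} {B : ℝ}

lemma IsModerate.R_mul_le_sq (hP : P.IsModerate B) (hRB : P.R ≤ B) {Z : ℝ}
    (hZ : Z ∈ Set.Icc 1 B) : P.R * Z ≤ B ^ 2 := by
  have h₀ : 0 ≤ B := zero_le_two.trans hP.two_le
  have h₁ : 0 ≤ Z := zero_le_one.trans hZ.1
  calc P.R * Z ≤ B * B := by gcongr; exact hZ.2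
    _ = B ^ 2 := (sq B).symm

lemma abs_le_of_abs_mul_le {a X Y : ℝ} (hX : 1 ≤ X) (hY : 1 ≤ Y)
    (h : |a| * (X ^ 2 * Y ^ 3) ≤ 32 * B) : |a| ≤ 32 * B :=
  (le_mul_of_one_le_right (abs_nonneg a)
    (one_le_mul_of_one_le_of_one_le (one_le_pow₀ hX) (one_le_pow₀ hY))).trans h

lemma abs_coeff_le (hB : 2 ≤ B) {a x : ℤ} (ha : |(a : ℝ)| ≤ 32 * B) (hx : |(x : ℝ)| ≤ B ^ 2) :
    |((18 * a * x ^ 2 : ℤ) : ℝ)| ≤ B ^ 20 := by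
  have : 0 < B := zero_lt_two.trans_le hB
  push_cast
  rw [abs_mul, abs_mul, abs_pow, abs_of_pos (by norm_num : (0 : ℝ) < 18)]
  calc 18 * |(a : ℝ)| * |(x : ℝ)| ^ 2 ≤ 18 * (32 * B) * (B ^ 2) ^ 2 := by gcongr
    _ = 576 * B ^ 5 := by ring
    _ ≤ 2 ^ 15 * B ^ 5 := by gcongr; norm_num
    _ ≤ B ^ 15 * B ^ 5 := by gcongr
    _ = B ^ 20 := by ring

lemma IsModerate.cofactor_bound_le (hP : P.IsModerate B) (hRB : P.R ≤ B) :
    9216 * B * P.R ^ 5 / P.Y₃ ^ 3 ≤ B ^ 20 := by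
  have hB := hP.two_le
  have : 0 < B := zero_lt_two.trans_le hB
  have hR := hP.R_pos
  calc 9216 * B * P.R ^ 5 / P.Y₃ ^ 3 ≤ 9216 * B * P.R ^ 5 :=
        div_le_self (by positivity) (one_le_pow₀ hP.Y₃_mem.1)
    _ ≤ 2 ^ 14 * B * B ^ 5 := by gcongr; norm_num
    _ ≤ B ^ 14 * B * B ^ 5 := by gcongr
    _ = B ^ 20 := by ring

lemma exists_cubicPointBound {ε : ℝ} (hε : 0 < ε) :
    ∃ C : ℝ, 0 < C ∧ ∀ (P : GeneratorBox) (B : ℝ), P.IsModerate B → P.R ≤ B →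
      P.CubicPointBound (9216 * B * P.R ^ 5 / P.Y₃ ^ 3) (B ^ 20) (C * B ^ ε) := by
  obtain ⟨C, hC, hcubic⟩ := exists_card_diagonalCubic_le (ε := ε / 20) (by positivity)
  refine ⟨C, hC, fun P B hP hRB x₁ x₂ k hx₁ hx₂ hk hx₁X hx₂X hkM T hT => ?_⟩
  have hB := hP.two_le
  have hB1 : 1 ≤ B := one_le_two.trans hB
  have hpow : (B ^ 20) ^ (ε / 20) = B ^ ε := by
    rw [← Real.rpow_natCast, ← Real.rpow_mul (zero_le_one.trans hB1)]
    congr 1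
    push_cast
    ring
  rw [← hpow]
  refine hcubic (B ^ 20) (one_le_pow₀ hB1) (18 * P.a₁ * x₁ ^ 2) (18 * P.a₂ * x₂ ^ 2) k
    (mul_ne_zero (mul_ne_zero (by norm_num) hP.a₁_ne_zero) (pow_ne_zero 2 hx₁))
    (mul_ne_zero (mul_ne_zero (by norm_num) hP.a₂_ne_zero) (pow_ne_zero 2 hx₂)) hk ?_ ?_
    (hkM.trans (hP.cofactor_bound_le hRB)) T hT
  · exact abs_coeff_le hB (abs_le_of_abs_mul_le hP.X₁_mem.1 hP.Y₁_mem.1 hP.abs_a₁_mul_le)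
      (hx₁X.trans (hP.R_mul_le_sq hRB hP.X₁_mem))
  · exact abs_coeff_le hB (abs_le_of_abs_mul_le hP.X₂_mem.1 hP.Y₂_mem.1 hP.abs_a₂_mul_le)
      (hx₂X.trans (hP.R_mul_le_sq hRB hP.X₂_mem))

lemma exists_card_le_of_ne_zero {ε : ℝ} (hε : 0 < ε) :
    ∃ C : ℝ, 0 < C ∧ ∀ (P : GeneratorBox) (B : ℝ), P.IsModerate B → P.R ≤ B →
      ∀ S : Finset GeneratorTriple, (∀ s ∈ S, P.Contains s ∧ s.x₁ ≠ 0 ∧ s.x₂ ≠ 0) →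
        (S.card : ℝ) ≤ C * (P.X₁ * P.X₂ * B * P.R ^ 7 / P.Y₃ ^ 3) * B ^ ε := by
  have hε' : 0 < ε / 3 := by positivity
  obtain ⟨C₁, hC₁, hpoints⟩ := exists_cubicPointBound hε'
  obtain ⟨C₂, hC₂, hdivisors⟩ := exists_card_divisors_le hε'
  refine ⟨8 * 9216 * C₁ * C₂ * (1 + (ε / 3)⁻¹), by positivity, fun P B hP hRB S hS => ?_⟩
  have hB1 : 1 ≤ B := one_le_two.trans hP.two_le
  have hB : 0 < B := zero_lt_one.trans_le hB1
  have hY : 0 < P.Y₃ := zero_lt_one.trans_le hP.Y₃_mem.1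
  have hR := hP.R_pos
  have hX₁ : 0 < P.X₁ := zero_lt_one.trans_le hP.X₁_mem.1
  have hX₂ : 0 < P.X₂ := zero_lt_one.trans_le hP.X₂_mem.1
  have hsq : B ^ 2 ≤ B ^ 20 := pow_le_pow_right₀ hB1 (by norm_num)
  have hD : ∀ q : ℤ, 0 < q → (q : ℝ) ≤ P.Y₃ →
      (q.natAbs.divisors.card : ℝ) ≤ C₂ * B ^ (ε / 3) := fun q hq hqY => by
    have hq' : (0 : ℝ) < q := by exact_mod_cast hq
    refine (hdivisors q hq.ne').trans ?_
    rw [abs_of_pos hq']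
    gcongr
    exact hqY.trans hP.Y₃_mem.2
  have hcube : B ^ ε = B ^ (ε / 3) * B ^ (ε / 3) * B ^ (ε / 3) := by
    rw [← Real.rpow_add hB, ← Real.rpow_add hB]
    congr 1
    ring
  refine (card_le_of_cubicPointBound hP (by positivity) hD
    ((hP.R_mul_le_sq hRB hP.Y₁_mem).trans hsq) ((hP.R_mul_le_sq hRB hP.Y₂_mem).trans hsq)
    (hP.Y₃_mem.2.trans (le_self_pow₀ hB1 (by norm_num))) (by positivity) (hpoints P B hP hRB)
    hS).trans ?_
  rw [hcube]
  calc _ ≤ 8 * 9216 * (P.X₁ * P.X₂ * B * P.R ^ 7 / P.Y₃ ^ 3) * (C₂ * B ^ (ε / 3)) *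
        (C₁ * B ^ (ε / 3)) * ((1 + (ε / 3)⁻¹) * B ^ (ε / 3)) := by
        gcongr
        exact one_add_log_le hY hP.Y₃_mem.2 hB1 hε'
    _ = _ := by ring

end GeneratorBox

lemma card_le_of_forall_dvd_sub {q : ℤ} {K T : ℝ} (hK : 0 < K) (hKq : K ≤ q) (hT : 0 ≤ T)
    {S : Finset ℤ} (hS : ∀ z ∈ S, |(z : ℝ)| ≤ T) (hmod : ∀ z ∈ S, ∀ z' ∈ S, q ∣ z' - z) :
    (S.card : ℝ) ≤ 2 * T / K + 1 := by
  rcases S.eq_empty_or_nonempty with rfl | hne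
  · simp only [Finset.card_empty, Nat.cast_zero]
    positivity
  have hq : (0 : ℝ) < q := hK.trans_le hKq
  have hq0 : 0 < q := by exact_mod_cast hq
  set z₀ := S.min' hne
  have hquot : ∀ z ∈ S, 0 ≤ (z - z₀) / q ∧ q * ((z - z₀) / q) = z - z₀ := fun z hz =>
    ⟨Int.ediv_nonneg (sub_nonneg.2 (S.min'_le z hz)) hq0.le,
      Int.mul_ediv_cancel' (hmod z₀ (S.min'_mem hne) z hz)⟩
  have hcard : S.card ≤ (Finset.Icc 0 ⌊2 * T / K⌋).card := by
    refine Finset.card_le_card_of_injOn (fun z => (z - z₀) / q) (fun z hz => ?_)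
      fun z hz z' hz' h => ?_
    · obtain ⟨hw0, hw⟩ := hquot z hz
      have hdiam : (q : ℝ) * ((z - z₀) / q : ℤ) ≤ 2 * T := by
        have hcast : (q : ℝ) * ((z - z₀) / q : ℤ) = z - z₀ := by exact_mod_cast hw
        linarith [(abs_le.1 (hS z hz)).2, (abs_le.1 (hS z₀ (S.min'_mem hne))).1]
      refine Finset.mem_coe.2 (Finset.mem_Icc.2 ⟨hw0, Int.le_floor.2 ((le_div_iff₀' hK).2 ?_)⟩)
      exact (mul_le_mul_of_nonneg_right hKq (by exact_mod_cast hw0)).trans hdiam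
    · have hw := (hquot z hz).2
      rw [show (z - z₀) / q = (z' - z₀) / q from h, (hquot z' hz').2] at hw
      exact (sub_left_inj.1 hw).symm
  have hfloor : (0 : ℝ) ≤ 2 * T / K := by positivity
  rw [Int.card_Icc, sub_zero, Int.toNat_add (Int.floor_nonneg.2 hfloor) zero_le_one] at hcard
  calc (S.card : ℝ) ≤ (⌊2 * T / K⌋.toNat : ℝ) + 1 := by exact_mod_cast hcard
    _ ≤ 2 * T / K + 1 := by
      gcongr
      exact Nat.floor_le hfloor

namespace GeneratorBox

section DivisibleCoordinate

variable {P : GeneratorBox} {s : GeneratorTriple} {S : Finset GeneratorTriple}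
  {x y z : GeneratorTriple → ℤ} {X Y Z : ℝ}

lemma Contains.q_mem_Icc (h : P.Contains s) (hY₃ : 0 < P.Y₃) : s.q ∈ Finset.Icc 1 ⌊P.Y₃⌋ :=
  Finset.mem_Icc.2 ⟨h.q_pos hY₃, Int.le_floor.2 h.q_le⟩

lemma Contains.κ_mem_Ico (h : P.Contains s) : s.κ ∈ Finset.Ico 0 ⌊P.Y₃⌋ :=
  Finset.mem_Ico.2 ⟨h.κ_nonneg, h.κ_lt.trans_le (Int.le_floor.2 h.q_le)⟩

lemma Contains.ediv_q_mem (h : P.Contains s) (hY₃ : 0 < P.Y₃) {n : ℤ} (hn : n ≠ 0)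
    (hq : s.q ∣ n) (hX : |(n : ℝ)| ≤ X) : n / s.q ∈ (intBall (2 * X / P.Y₃)).erase 0 := by
  obtain ⟨w, rfl⟩ := hq
  have hhalf := h.half_lt_q
  rw [Int.mul_ediv_cancel_left _ (h.q_pos hY₃).ne']
  refine Finset.mem_erase.2 ⟨right_ne_zero_of_mul hn, mem_intBall.2 ((le_div_iff₀' hY₃).2 ?_)⟩
  push_cast at hX
  rw [abs_mul] at hX
  have hle : P.Y₃ / 2 * |(w : ℝ)| ≤ |(s.q : ℝ)| * |(w : ℝ)| := by
    gcongr
    exact hhalf.le.trans (le_abs_self _)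
  linarith

lemma card_Icc_one_floor_le (hX : 0 ≤ X) : ((Finset.Icc 1 ⌊X⌋).card : ℝ) ≤ X := by
  rw [Int.card_Icc, add_sub_cancel_right]
  exact Nat.floor_le hX

lemma card_Ico_zero_floor_le (hX : 0 ≤ X) : ((Finset.Ico 0 ⌊X⌋).card : ℝ) ≤ X := by
  rw [Int.card_Ico, sub_zero]
  exact Nat.floor_le hX

lemma card_le_of_injOn_of_dvd_sub (hY₃ : 0 < P.Y₃) (hZ : 0 ≤ Z) (hS : ∀ s ∈ S, P.Contains s)
    (hz : ∀ s ∈ S, |(z s : ℝ)| ≤ Z) (hq : ∀ s ∈ S, ∀ s' ∈ S, s.q = s'.q)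
    (hmod : ∀ s ∈ S, ∀ s' ∈ S, s.q ∣ z s' - z s) (hinj : Set.InjOn z (S : Set GeneratorTriple)) :
    (S.card : ℝ) ≤ 4 * Z / P.Y₃ + 1 := by
  rcases S.eq_empty_or_nonempty with rfl | ⟨s₀, hs₀⟩
  · simp only [Finset.card_empty, Nat.cast_zero]
    positivity
  rw [← Finset.card_image_of_injOn hinj, show 4 * Z / P.Y₃ = 2 * Z / (P.Y₃ / 2) by ring]
  exact card_le_of_forall_dvd_sub (half_pos hY₃) (hS s₀ hs₀).half_lt_q.le hZ
    (Finset.forall_mem_image.2 hz) (Finset.forall_mem_image.2 fun s hs =>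
      Finset.forall_mem_image.2 fun s' hs' => hq s₀ hs₀ s hs ▸ hmod s hs s' hs')

-- Writing `x = qw`, there are `Y₃²` choices of `(q, κ)`, `O(X / Y₃)` of `w` and `O(Y)` of `y`;
-- then `z` is confined to a single class modulo `q`.
lemma card_le_of_q_dvd (hY₃ : 0 < P.Y₃) (hX : 0 ≤ X) (hY : 0 ≤ Y) (hZ : 0 ≤ Z)
    (hS : ∀ s ∈ S, P.Contains s) (hx : ∀ s ∈ S, x s ≠ 0 ∧ s.q ∣ x s ∧ |(x s : ℝ)| ≤ X)
    (hy : ∀ s ∈ S, y s ≠ 0 ∧ |(y s : ℝ)| ≤ Y) (hz : ∀ s ∈ S, |(z s : ℝ)| ≤ Z)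
    (hmod : ∀ s ∈ S, ∀ s' ∈ S, s.q = s'.q → s.κ = s'.κ → y s = y s' → s.q ∣ z s' - z s)
    (hinj : Set.InjOn (fun s => (s.q, s.κ, x s, y s, z s)) (S : Set GeneratorTriple)) :
    (S.card : ℝ) ≤ 8 * X * Y * P.Y₃ * (4 * Z / P.Y₃ + 1) := by
  classical
  have hcard := card_le_card_mul_of_card_fiber_le (S := S)
    (T := Finset.Icc 1 ⌊P.Y₃⌋ ×ˢ Finset.Ico 0 ⌊P.Y₃⌋ ×ˢ (intBall (2 * X / P.Y₃)).erase 0 ×ˢ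
      (intBall Y).erase 0) (f := fun s => (s.q, s.κ, x s / s.q, y s)) (c := 4 * Z / P.Y₃ + 1)
    (fun s hs => by
      simp only [Finset.mem_product]
      obtain ⟨hx0, hqx, hxX⟩ := hx s hs
      exact ⟨(hS s hs).q_mem_Icc hY₃, (hS s hs).κ_mem_Ico, (hS s hs).ediv_q_mem hY₃ hx0 hqx hxX,
        Finset.mem_erase.2 ⟨(hy s hs).1, mem_intBall.2 (hy s hs).2⟩⟩)
    (fun b _ => by
      set F := S.filter fun s => (s.q, s.κ, x s / s.q, y s) = b
      have hF : ∀ s ∈ F, s ∈ S := fun s hs => (Finset.mem_filter.1 hs).1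
      have heq : ∀ s ∈ F, ∀ s' ∈ F, s.q = s'.q ∧ s.κ = s'.κ ∧ x s = x s' ∧ y s = y s' :=
        fun s hs s' hs' => by
          have h := (Finset.mem_filter.1 hs).2.trans (Finset.mem_filter.1 hs').2.symm
          simp only [Prod.mk.injEq] at h
          obtain ⟨hq, hκ, hw, hy⟩ := h
          exact ⟨hq, hκ, (Int.ediv_left_inj (hx s (hF s hs)).2.1 (hq ▸ (hx s' (hF s' hs')).2.1)).1
            (hw.trans (by rw [hq])), hy⟩
      refine card_le_of_injOn_of_dvd_sub hY₃ hZ (fun s hs => hS s (hF s hs))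
        (fun s hs => hz s (hF s hs)) (fun s hs s' hs' => (heq s hs s' hs').1)
        (fun s hs s' hs' => ?_) fun s hs s' hs' hzz => ?_
      · obtain ⟨hq, hκ, -, hy⟩ := heq s hs s' hs'
        exact hmod s (hF s hs) s' (hF s' hs') hq hκ hy
      · obtain ⟨hq, hκ, hx, hy⟩ := heq s hs s' hs'
        exact hinj (hF s hs) (hF s' hs') (by simp only [hq, hκ, hx, hy, hzz]))
  refine hcard.trans ?_
  simp only [Finset.card_product, Nat.cast_mul]
  calc _ ≤ P.Y₃ * (P.Y₃ * (2 * (2 * X / P.Y₃) * (2 * Y))) * (4 * Z / P.Y₃ + 1) := by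
        gcongr
        · exact card_Icc_one_floor_le hY₃.le
        · exact card_Ico_zero_floor_le hY₃.le
        · exact card_intBall_erase_zero_le (by positivity)
        · exact card_intBall_erase_zero_le hY
    _ = _ := by field_simp; ring

end DivisibleCoordinate

/-- The range of parameters of the theorem. Here `β = B^{1/180}`, which makes every exponent of the
theorem an integer: `1/5 + 1/60 = 39/180`, `1/5 + 1/90 = 38/180` and `1/5 - 1/90 = 34/180`. -/
structure IsBalanced (P : GeneratorBox) (β : ℝ) : Prop where
  one_le : 1 ≤ β
  two_le_pow : 2 ≤ β ^ 180
  a₁_ne_zero : P.a₁ ≠ 0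
  a₂_ne_zero : P.a₂ ≠ 0
  X₁_mem : P.X₁ ∈ Set.Icc 1 (β ^ 39)
  X₂_mem : P.X₂ ∈ Set.Icc 1 (β ^ 39)
  Y₁_mem : P.Y₁ ∈ Set.Icc 1 (β ^ 38)
  Y₂_mem : P.Y₂ ∈ Set.Icc 1 (β ^ 38)
  Y₃_mem : P.Y₃ ∈ Set.Icc (β ^ 34) (β ^ 38)
  abs_a₁_mul_le : |(P.a₁ : ℝ)| * (P.X₁ ^ 2 * P.Y₁ ^ 3) ≤ 32 * β ^ 180
  abs_a₂_mul_le : |(P.a₂ : ℝ)| * (P.X₂ ^ 2 * P.Y₂ ^ 3) ≤ 32 * β ^ 180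
  R_pos : 0 < P.R

/-- The factor `(Y₁Y₂)^{-3/2}`. -/
noncomputable def weight (P : GeneratorBox) : ℝ := (P.Y₁ * P.Y₂) ^ (-(3 : ℝ) / 2)

/-- The bound `(Y₁Y₂)^{-3/2} Y₃^{-3} R⁷ B²` of the theorem, without the factor `B^ε`. -/
noncomputable def mainTerm (P : GeneratorBox) (β : ℝ) : ℝ :=
  P.weight * P.R ^ 7 * β ^ 360 / P.Y₃ ^ 3

namespace IsBalanced

variable {P : GeneratorBox} {β : ℝ}

lemma pos (h : P.IsBalanced β) : 0 < β := zero_lt_one.trans_le h.one_le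

lemma X₁_pos (h : P.IsBalanced β) : 0 < P.X₁ := zero_lt_one.trans_le h.X₁_mem.1

lemma X₂_pos (h : P.IsBalanced β) : 0 < P.X₂ := zero_lt_one.trans_le h.X₂_mem.1

lemma Y₁_pos (h : P.IsBalanced β) : 0 < P.Y₁ := zero_lt_one.trans_le h.Y₁_mem.1

lemma Y₂_pos (h : P.IsBalanced β) : 0 < P.Y₂ := zero_lt_one.trans_le h.Y₂_mem.1

lemma one_le_Y₃ (h : P.IsBalanced β) : 1 ≤ P.Y₃ := (one_le_pow₀ h.one_le).trans h.Y₃_mem.1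

lemma Y₃_pos (h : P.IsBalanced β) : 0 < P.Y₃ := zero_lt_one.trans_le h.one_le_Y₃

lemma isModerate (h : P.IsBalanced β) : P.IsModerate (β ^ 180) where
  two_le := h.two_le_pow
  a₁_ne_zero := h.a₁_ne_zero
  a₂_ne_zero := h.a₂_ne_zero
  X₁_mem := Set.Icc_subset_Icc_right (pow_le_pow_right₀ h.one_le (by norm_num)) h.X₁_mem
  X₂_mem := Set.Icc_subset_Icc_right (pow_le_pow_right₀ h.one_le (by norm_num)) h.X₂_mem
  Y₁_mem := Set.Icc_subset_Icc_right (pow_le_pow_right₀ h.one_le (by norm_num)) h.Y₁_mem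
  Y₂_mem := Set.Icc_subset_Icc_right (pow_le_pow_right₀ h.one_le (by norm_num)) h.Y₂_mem
  Y₃_mem := ⟨h.one_le_Y₃, h.Y₃_mem.2.trans (pow_le_pow_right₀ h.one_le (by norm_num))⟩
  abs_a₁_mul_le := h.abs_a₁_mul_le
  abs_a₂_mul_le := h.abs_a₂_mul_le
  R_pos := h.R_pos

lemma weight_pos (h : P.IsBalanced β) : 0 < P.weight :=
  Real.rpow_pos_of_pos (mul_pos h.Y₁_pos h.Y₂_pos) _

lemma mainTerm_pos (h : P.IsBalanced β) : 0 < P.mainTerm β := by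
  have := h.weight_pos
  have := h.R_pos
  have := h.Y₃_pos
  have := h.pos
  unfold mainTerm
  positivity

lemma weight_sq_mul (h : P.IsBalanced β) : P.weight ^ 2 * (P.Y₁ * P.Y₂) ^ 3 = 1 := by
  have hY := mul_pos h.Y₁_pos h.Y₂_pos
  rw [weight, ← Real.rpow_natCast, ← Real.rpow_mul hY.le, ← Real.rpow_natCast, ← Real.rpow_add hY]
  norm_num

lemma one_le_weight_mul (h : P.IsBalanced β) : 1 ≤ P.weight * β ^ 114 := by
  have hβ := h.pos
  have hw := h.weight_pos
  have h₁ := h.Y₁_pos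
  have h₂ := h.Y₂_pos
  refine le_of_pow_le_pow_left₀ two_ne_zero (by positivity) ?_
  calc (1 : ℝ) ^ 2 = P.weight ^ 2 * (P.Y₁ * P.Y₂) ^ 3 := by rw [h.weight_sq_mul, one_pow]
    _ ≤ P.weight ^ 2 * (β ^ 38 * β ^ 38) ^ 3 := by
      gcongr
      exacts [h.Y₁_mem.2, h.Y₂_mem.2]
    _ = (P.weight * β ^ 114) ^ 2 := by ring

lemma X₁_mul_X₂_le (h : P.IsBalanced β) : P.X₁ * P.X₂ ≤ 32 * β ^ 180 * P.weight := by
  have hβ := h.pos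
  have hw := h.weight_pos
  have hX₂ := h.X₂_pos
  have hY₂ := h.Y₂_pos
  have hle : ∀ {a : ℤ} {t : ℝ}, a ≠ 0 → |(a : ℝ)| * t ≤ 32 * β ^ 180 → 0 ≤ t →
      t ≤ 32 * β ^ 180 := fun ha h ht =>
    (le_mul_of_one_le_left ht (by exact_mod_cast Int.one_le_abs ha)).trans h
  have h₁ : P.X₁ ^ 2 * P.Y₁ ^ 3 ≤ 32 * β ^ 180 :=
    hle h.a₁_ne_zero h.abs_a₁_mul_le (by have := h.Y₁_pos; positivity)
  have h₂ : P.X₂ ^ 2 * P.Y₂ ^ 3 ≤ 32 * β ^ 180 :=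
    hle h.a₂_ne_zero h.abs_a₂_mul_le (by positivity)
  refine le_of_pow_le_pow_left₀ two_ne_zero (by positivity) ?_
  calc (P.X₁ * P.X₂) ^ 2 = (P.X₁ * P.X₂) ^ 2 * (P.weight ^ 2 * (P.Y₁ * P.Y₂) ^ 3) := by
        rw [h.weight_sq_mul, mul_one]
    _ = P.weight ^ 2 * ((P.X₁ ^ 2 * P.Y₁ ^ 3) * (P.X₂ ^ 2 * P.Y₂ ^ 3)) := by ring
    _ ≤ P.weight ^ 2 * ((32 * β ^ 180) * (32 * β ^ 180)) := by gcongr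
    _ = (32 * β ^ 180 * P.weight) ^ 2 := by ring

end IsBalanced

variable {P : GeneratorBox} {β X Y Z : ℝ}

lemma IsBalanced.pow_280_le (h : P.IsBalanced β) : β ^ 280 ≤ P.weight * (P.Y₃ * β ^ 360) := by
  have hβ := h.pos
  have hw := h.weight_pos
  calc β ^ 280 ≤ β ^ 280 * (P.weight * β ^ 114) :=
        le_mul_of_one_le_right (by positivity) h.one_le_weight_mul
    _ = P.weight * (β ^ 34 * β ^ 360) := by ring
    _ ≤ P.weight * (P.Y₃ * β ^ 360) := by
      gcongr
      exact h.Y₃_mem.1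

-- Here and in the next lemma the factor lost to `Y₃ ≤ 2RX` comes back as a power of `R`.
lemma IsBalanced.sq_mul_le_mainTerm (h : P.IsBalanced β) (hX : X ∈ Set.Icc 1 (β ^ 39))
    (hY : Y ∈ Set.Icc 1 (β ^ 38)) (hRX : P.Y₃ ≤ 2 * (P.R * X)) :
    8 * P.R ^ 2 * X * Y * P.Y₃ ≤ 256 * P.mainTerm β := by
  have hX0 : 0 < X := zero_lt_one.trans_le hX.1
  have hY0 : 0 < Y := zero_lt_one.trans_le hY.1
  have hR := h.R_pos
  have hY₃ := h.Y₃_pos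
  have hβ := h.pos
  have hw := h.weight_pos
  have hXY : X ^ 6 * Y ≤ P.weight * (P.Y₃ * β ^ 360) := by
    calc X ^ 6 * Y ≤ (β ^ 39) ^ 6 * β ^ 38 := by gcongr; exacts [hX.2, hY.2]
      _ = β ^ 272 := by ring
      _ ≤ β ^ 280 := pow_le_pow_right₀ h.one_le (by norm_num)
      _ ≤ _ := h.pow_280_le
  have hmul : X ^ 5 * P.Y₃ * (X * Y * P.Y₃ ^ 4) ≤
      X ^ 5 * P.Y₃ * (32 * P.weight * P.R ^ 5 * β ^ 360) := by
    calc X ^ 5 * P.Y₃ * (X * Y * P.Y₃ ^ 4) = X ^ 6 * Y * P.Y₃ ^ 5 := by ring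
      _ ≤ P.weight * (P.Y₃ * β ^ 360) * (2 * (P.R * X)) ^ 5 := by gcongr
      _ = X ^ 5 * P.Y₃ * (32 * P.weight * P.R ^ 5 * β ^ 360) := by ring
  rw [mainTerm, ← mul_div_assoc, le_div_iff₀ (by positivity)]
  calc 8 * P.R ^ 2 * X * Y * P.Y₃ * P.Y₃ ^ 3 = 8 * P.R ^ 2 * (X * Y * P.Y₃ ^ 4) := by ring
    _ ≤ 8 * P.R ^ 2 * (32 * P.weight * P.R ^ 5 * β ^ 360) := by
      gcongr ?_ * ?_
      exact le_of_mul_le_mul_left hmul (by positivity)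
    _ = 256 * (P.weight * P.R ^ 7 * β ^ 360) := by ring

lemma IsBalanced.cube_mul_le_mainTerm (h : P.IsBalanced β) (hX : X ∈ Set.Icc 1 (β ^ 39))
    (hY : Y ∈ Set.Icc 1 (β ^ 38)) (hZ : Z ∈ Set.Icc 1 (β ^ 38)) (hRX : P.Y₃ ≤ 2 * (P.R * X)) :
    32 * P.R ^ 3 * X * Y * Z ≤ 512 * P.mainTerm β := by
  have hX0 : 0 < X := zero_lt_one.trans_le hX.1
  have hY0 : 0 < Y := zero_lt_one.trans_le hY.1
  have hZ0 : 0 < Z := zero_lt_one.trans_le hZ.1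
  have hR := h.R_pos
  have hY₃ := h.Y₃_pos
  have hβ := h.pos
  have hw := h.weight_pos
  have hXYZ : X ^ 5 * Y * Z ≤ P.weight * (P.Y₃ * β ^ 360) := by
    calc X ^ 5 * Y * Z ≤ (β ^ 39) ^ 5 * β ^ 38 * β ^ 38 := by gcongr; exacts [hX.2, hY.2, hZ.2]
      _ = β ^ 271 := by ring
      _ ≤ β ^ 280 := pow_le_pow_right₀ h.one_le (by norm_num)
      _ ≤ _ := h.pow_280_le
  have hmul : X ^ 4 * P.Y₃ * (X * Y * Z * P.Y₃ ^ 3) ≤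
      X ^ 4 * P.Y₃ * (16 * P.weight * P.R ^ 4 * β ^ 360) := by
    calc X ^ 4 * P.Y₃ * (X * Y * Z * P.Y₃ ^ 3) = X ^ 5 * Y * Z * P.Y₃ ^ 4 := by ring
      _ ≤ P.weight * (P.Y₃ * β ^ 360) * (2 * (P.R * X)) ^ 4 := by gcongr
      _ = X ^ 4 * P.Y₃ * (16 * P.weight * P.R ^ 4 * β ^ 360) := by ring
  rw [mainTerm, ← mul_div_assoc, le_div_iff₀ (by positivity)]
  calc 32 * P.R ^ 3 * X * Y * Z * P.Y₃ ^ 3 = 32 * P.R ^ 3 * (X * Y * Z * P.Y₃ ^ 3) := by ring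
    _ ≤ 32 * P.R ^ 3 * (16 * P.weight * P.R ^ 4 * β ^ 360) := by
      gcongr ?_ * ?_
      exact le_of_mul_le_mul_left hmul (by positivity)
    _ = 512 * (P.weight * P.R ^ 7 * β ^ 360) := by ring

variable {x y z : GeneratorTriple → ℤ} {S : Finset GeneratorTriple}

lemma IsBalanced.card_le_of_q_dvd (h : P.IsBalanced β) (hX : X ∈ Set.Icc 1 (β ^ 39))
    (hY : Y ∈ Set.Icc 1 (β ^ 38)) (hZ : Z ∈ Set.Icc 1 (β ^ 38)) (hS : ∀ s ∈ S, P.Contains s)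
    (hx : ∀ s ∈ S, x s ≠ 0 ∧ s.q ∣ x s ∧ |(x s : ℝ)| ≤ P.R * X)
    (hy : ∀ s ∈ S, y s ≠ 0 ∧ |(y s : ℝ)| ≤ P.R * Y) (hz : ∀ s ∈ S, |(z s : ℝ)| ≤ P.R * Z)
    (hmod : ∀ s ∈ S, ∀ s' ∈ S, s.q = s'.q → s.κ = s'.κ → y s = y s' → s.q ∣ z s' - z s)
    (hinj : Set.InjOn (fun s => (s.q, s.κ, x s, y s, z s)) (S : Set GeneratorTriple)) :
    (S.card : ℝ) ≤ 768 * P.mainTerm β := by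
  have hX0 : 0 < X := zero_lt_one.trans_le hX.1
  have hY0 : 0 < Y := zero_lt_one.trans_le hY.1
  have hZ0 : 0 < Z := zero_lt_one.trans_le hZ.1
  have hR := h.R_pos
  have hY₃ := h.Y₃_pos
  rcases S.eq_empty_or_nonempty with rfl | ⟨s, hs⟩
  · simpa using h.mainTerm_pos.le
  have hRX : P.Y₃ ≤ 2 * (P.R * X) := by
    obtain ⟨hx0, hqx, hxX⟩ := hx s hs
    have hle : (s.q : ℝ) ≤ |(x s : ℝ)| := by
      exact_mod_cast Int.le_of_dvd (abs_pos.2 hx0) ((dvd_abs _ _).2 hqx)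
    linarith [(hS s hs).half_lt_q]
  calc (S.card : ℝ) ≤ 8 * (P.R * X) * (P.R * Y) * P.Y₃ * (4 * (P.R * Z) / P.Y₃ + 1) :=
        GeneratorBox.card_le_of_q_dvd hY₃ (by positivity) (by positivity) (by positivity) hS hx hy
          hz hmod hinj
    _ = 32 * P.R ^ 3 * X * Y * Z + 8 * P.R ^ 2 * X * Y * P.Y₃ := by field_simp; ring
    _ ≤ 768 * P.mainTerm β := by
      linarith [h.cube_mul_le_mainTerm hX hY hZ hRX, h.sq_mul_le_mainTerm hX hY hRX]

lemma Contains.q_dvd_x₂ {s : GeneratorTriple} (h : P.Contains s) (hx : s.x₁ = 0) :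
    s.q ∣ s.x₂ := by
  have hdvd := h.congs.1
  rw [hx, mul_zero, zero_sub, dvd_neg] at hdvd
  exact (h.κ_coprime.symm.pow_right.mul_right h.coprime.of_mul_right_left).dvd_of_dvd_mul_left hdvd

lemma Contains.q_dvd_x₁ {s : GeneratorTriple} (h : P.Contains s) (hx : s.x₂ = 0) :
    s.q ∣ s.x₁ := by
  have hdvd := h.congs.1
  rw [hx, mul_zero, sub_zero] at hdvd
  exact h.coprime.of_mul_right_right.dvd_of_dvd_mul_left hdvd

lemma Contains.q_dvd_y₁_sub {s s' : GeneratorTriple} (h : P.Contains s) (h' : P.Contains s')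
    (hq : s.q = s'.q) (hκ : s.κ = s'.κ) (hy : s.y₂ = s'.y₂) : s.q ∣ s'.y₁ - s.y₁ := by
  have hdvd := h'.congs.2.1
  rw [← hq, ← hκ, ← hy] at hdvd
  exact ((h.κ_coprime.symm.pow_right (n := 2)).mul_right
    h.coprime.of_mul_right_left).dvd_of_dvd_mul_left
      ((dvd_sub hdvd h.congs.2.1).trans (dvd_of_eq (by ring)))

lemma Contains.q_dvd_y₂_sub {s s' : GeneratorTriple} (h : P.Contains s) (h' : P.Contains s')
    (hq : s.q = s'.q) (hκ : s.κ = s'.κ) (hy : s.y₁ = s'.y₁) : s.q ∣ s'.y₂ - s.y₂ := by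
  have hdvd := h'.congs.2.1
  rw [← hq, ← hκ, ← hy] at hdvd
  exact h.coprime.of_mul_right_right.dvd_of_dvd_mul_left
    ((dvd_sub hdvd h.congs.2.1).trans (dvd_of_eq (by ring)))

lemma IsBalanced.card_le_of_x₁_eq_zero (h : P.IsBalanced β)
    (hS : ∀ s ∈ S, P.Contains s ∧ s.x₁ = 0) : (S.card : ℝ) ≤ 768 * P.mainTerm β := by
  refine h.card_le_of_q_dvd (x := GeneratorTriple.x₂) (y := GeneratorTriple.y₂)
    (z := GeneratorTriple.y₁) h.X₂_mem h.Y₂_mem h.Y₁_mem (fun s hs => (hS s hs).1)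
    (fun s hs => ?_) (fun s hs => ?_) (fun s hs => (hS s hs).1.abs_y₁_le)
    (fun s hs s' hs' => (hS s hs).1.q_dvd_y₁_sub (hS s' hs').1) fun s hs s' hs' heq => ?_
  · obtain ⟨hc, hx⟩ := hS s hs
    exact ⟨fun h0 => hc.form_ne_zero (by simp [form, hx, h0]), hc.q_dvd_x₂ hx, hc.abs_x₂_le⟩
  · obtain ⟨hc, hx⟩ := hS s hs
    exact ⟨fun h0 => hc.form_ne_zero (by simp [form, hx, h0]), hc.abs_y₂_le⟩
  · simp only [Prod.mk.injEq] at heq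
    obtain ⟨hq, hκ, hx₂, hy₂, hy₁⟩ := heq
    exact GeneratorTriple.ext ((hS s hs).2.trans (hS s' hs').2.symm) hx₂ hy₁ hy₂ hq hκ

lemma IsBalanced.card_le_of_x₂_eq_zero (h : P.IsBalanced β)
    (hS : ∀ s ∈ S, P.Contains s ∧ s.x₂ = 0) : (S.card : ℝ) ≤ 768 * P.mainTerm β := by
  refine h.card_le_of_q_dvd (x := GeneratorTriple.x₁) (y := GeneratorTriple.y₁)
    (z := GeneratorTriple.y₂) h.X₁_mem h.Y₁_mem h.Y₂_mem (fun s hs => (hS s hs).1)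
    (fun s hs => ?_) (fun s hs => ?_) (fun s hs => (hS s hs).1.abs_y₂_le)
    (fun s hs s' hs' => (hS s hs).1.q_dvd_y₂_sub (hS s' hs').1) fun s hs s' hs' heq => ?_
  · obtain ⟨hc, hx⟩ := hS s hs
    exact ⟨fun h0 => hc.form_ne_zero (by simp [form, hx, h0]), hc.q_dvd_x₁ hx, hc.abs_x₁_le⟩
  · obtain ⟨hc, hx⟩ := hS s hs
    exact ⟨fun h0 => hc.form_ne_zero (by simp [form, hx, h0]), hc.abs_y₁_le⟩
  · simp only [Prod.mk.injEq] at heq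
    obtain ⟨hq, hκ, hx₁, hy₁, hy₂⟩ := heq
    exact GeneratorTriple.ext hx₁ ((hS s hs).2.trans (hS s' hs').2.symm) hy₁ hy₂ hq hκ

end GeneratorBox

/-- The triple `(g, q, κ)` as a nested tuple, with `g = (x₁, x₂, y₁, y₂)`. -/
def GeneratorTriple.equivProd : GeneratorTriple ≃ (ℤ × ℤ × ℤ × ℤ) × ℤ × ℤ where
  toFun s := ((s.x₁, s.x₂, s.y₁, s.y₂), s.q, s.κ)
  invFun t := ⟨t.1.1, t.1.2.1, t.1.2.2.1, t.1.2.2.2, t.2.1, t.2.2⟩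
  left_inv _ := rfl
  right_inv _ := rfl

namespace GeneratorBox

/-- The tuples obeying the size conditions of `Contains`, the congruences being ignored. -/
noncomputable def ambientFinset (P : GeneratorBox) : Finset ((ℤ × ℤ × ℤ × ℤ) × ℤ × ℤ) :=
  (intBall (P.R * P.X₁) ×ˢ intBall (P.R * P.X₂) ×ˢ intBall (P.R * P.Y₁) ×ˢ
    intBall (P.R * P.Y₂)) ×ˢ Finset.Icc 1 ⌊P.Y₃⌋ ×ˢ Finset.Ico 0 ⌊P.Y₃⌋

variable {P : GeneratorBox} {β : ℝ} {S : Finset GeneratorTriple}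

lemma Contains.equivProd_mem_ambientFinset {s : GeneratorTriple} (h : P.Contains s)
    (hY₃ : 0 < P.Y₃) : s.equivProd ∈ P.ambientFinset := by
  simp only [ambientFinset, Finset.mem_product, mem_intBall]
  exact ⟨⟨h.abs_x₁_le, h.abs_x₂_le, h.abs_y₁_le, h.abs_y₂_le⟩, h.q_mem_Icc hY₃, h.κ_mem_Ico⟩

lemma finite_setOf_contains (hY₃ : 0 < P.Y₃) : {s | P.Contains s}.Finite :=
  Set.Finite.of_injOn (fun _ hs => Finset.mem_coe.2 (hs.equivProd_mem_ambientFinset hY₃))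
    GeneratorTriple.equivProd.injective.injOn P.ambientFinset.finite_toSet

lemma IsBalanced.card_ambientFinset_le (h : P.IsBalanced β) (hR : 1 ≤ P.R) :
    (P.ambientFinset.card : ℝ) ≤
      81 * P.R ^ 4 * (P.X₁ * P.X₂) * (P.Y₁ * P.Y₂) * P.Y₃ ^ 2 := by
  have hball : ∀ {T : ℝ}, 1 ≤ T → ((intBall (P.R * T)).card : ℝ) ≤ 3 * (P.R * T) := fun hT => by
    linarith [card_intBall_le (zero_le_one.trans (one_le_mul_of_one_le_of_one_le hR hT)),
      one_le_mul_of_one_le_of_one_le hR hT]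
  have := h.R_pos
  have hX₁ := h.X₁_pos
  have hX₂ := h.X₂_pos
  have hY₁ := h.Y₁_pos
  have hY₂ := h.Y₂_pos
  have hY₃ := h.Y₃_pos
  simp only [ambientFinset, Finset.card_product, Nat.cast_mul]
  calc _ ≤ 3 * (P.R * P.X₁) * (3 * (P.R * P.X₂) * (3 * (P.R * P.Y₁) * (3 * (P.R * P.Y₂)))) *
        (P.Y₃ * P.Y₃) := by
        gcongr
        exacts [hball h.X₁_mem.1, hball h.X₂_mem.1, hball h.Y₁_mem.1, hball h.Y₂_mem.1,
          card_Icc_one_floor_le hY₃.le, card_Ico_zero_floor_le hY₃.le]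
    _ = _ := by ring

lemma IsBalanced.card_le_of_pow_le_R (h : P.IsBalanced β) (hR : β ^ 180 ≤ P.R)
    (hS : ∀ s ∈ S, P.Contains s) : (S.card : ℝ) ≤ 2592 * P.mainTerm β := by
  have hβ := h.pos
  have hR₀ := h.R_pos
  have hw := h.weight_pos
  have hY₁ := h.Y₁_pos
  have hY₂ := h.Y₂_pos
  have hY₃ := h.Y₃_pos
  have hYR : P.Y₁ * P.Y₂ * P.Y₃ ^ 5 ≤ P.R ^ 3 * β ^ 180 := by
    calc P.Y₁ * P.Y₂ * P.Y₃ ^ 5 ≤ β ^ 38 * β ^ 38 * (β ^ 38) ^ 5 := by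
          gcongr
          exacts [h.Y₁_mem.2, h.Y₂_mem.2, h.Y₃_mem.2]
      _ = β ^ 266 := by ring
      _ ≤ β ^ 720 := pow_le_pow_right₀ h.one_le (by norm_num)
      _ = (β ^ 180) ^ 3 * β ^ 180 := by ring
      _ ≤ P.R ^ 3 * β ^ 180 := by gcongr
  have hcard : S.card ≤ P.ambientFinset.card :=
    Finset.card_le_card_of_injOn GeneratorTriple.equivProd
      (fun s hs => (hS s hs).equivProd_mem_ambientFinset hY₃)
      GeneratorTriple.equivProd.injective.injOn
  refine (Nat.cast_le.2 hcard).trans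
    ((h.card_ambientFinset_le ((one_le_pow₀ h.one_le).trans hR)).trans ?_)
  rw [mainTerm, ← mul_div_assoc, le_div_iff₀ (by positivity)]
  calc 81 * P.R ^ 4 * (P.X₁ * P.X₂) * (P.Y₁ * P.Y₂) * P.Y₃ ^ 2 * P.Y₃ ^ 3
      = 81 * P.R ^ 4 * (P.X₁ * P.X₂ * (P.Y₁ * P.Y₂ * P.Y₃ ^ 5)) := by ring
    _ ≤ 81 * P.R ^ 4 * (32 * β ^ 180 * P.weight * (P.R ^ 3 * β ^ 180)) := by
      gcongr ?_ * ?_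
      exact mul_le_mul h.X₁_mul_X₂_le hYR (by positivity) (by positivity)
    _ = 2592 * (P.weight * P.R ^ 7 * β ^ 360) := by ring

lemma IsBalanced.mul_div_le_mainTerm (h : P.IsBalanced β) :
    P.X₁ * P.X₂ * β ^ 180 * P.R ^ 7 / P.Y₃ ^ 3 ≤ 32 * P.mainTerm β := by
  have hβ := h.pos
  have hR := h.R_pos
  have hY₃ := h.Y₃_pos
  calc P.X₁ * P.X₂ * β ^ 180 * P.R ^ 7 / P.Y₃ ^ 3
      ≤ 32 * β ^ 180 * P.weight * β ^ 180 * P.R ^ 7 / P.Y₃ ^ 3 := by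
        gcongr ?_ * _ * _ / _
        exact h.X₁_mul_X₂_le
    _ = 32 * P.mainTerm β := by rw [mainTerm]; ring

lemma card_le_card_filter_x_add :
    S.card ≤ (S.filter fun s => s.x₁ ≠ 0 ∧ s.x₂ ≠ 0).card +
      ((S.filter fun s => s.x₁ = 0).card + (S.filter fun s => s.x₂ = 0).card) := by
  classical
  calc S.card ≤ ((S.filter fun s => s.x₁ ≠ 0 ∧ s.x₂ ≠ 0) ∪
        ((S.filter fun s => s.x₁ = 0) ∪ S.filter fun s => s.x₂ = 0)).card :=
        Finset.card_le_card fun s hs => by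
          simp only [Finset.mem_union, Finset.mem_filter]
          tauto
    _ ≤ _ := (Finset.card_union_le _ _).trans
      (Nat.add_le_add_left (Finset.card_union_le _ _) _)

lemma exists_card_le_mainTerm {ε : ℝ} (hε : 0 < ε) :
    ∃ C : ℝ, 0 < C ∧ ∀ (P : GeneratorBox) (β : ℝ), P.IsBalanced β →
      ∀ S : Finset GeneratorTriple, (∀ s ∈ S, P.Contains s) →
        (S.card : ℝ) ≤ C * P.mainTerm β * (β ^ 180) ^ ε := by
  obtain ⟨C, hC, hgeneric⟩ := exists_card_le_of_ne_zero hε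
  refine ⟨32 * C + 2592, by positivity, fun P β h S hS => ?_⟩
  have hM := h.mainTerm_pos
  have hE : 1 ≤ (β ^ 180) ^ ε := Real.one_le_rpow (one_le_pow₀ h.one_le) hε.le
  have hME : P.mainTerm β ≤ P.mainTerm β * (β ^ 180) ^ ε := le_mul_of_one_le_right hM.le hE
  have hCME : 0 < C * P.mainTerm β * (β ^ 180) ^ ε := by positivity
  rcases le_total P.R (β ^ 180) with hR | hR
  · have h₀ : ((S.filter fun s => s.x₁ ≠ 0 ∧ s.x₂ ≠ 0).card : ℝ) ≤
        C * (32 * P.mainTerm β) * (β ^ 180) ^ ε :=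
      (hgeneric P _ h.isModerate hR _ fun s hs =>
        ⟨hS s (Finset.mem_filter.1 hs).1, (Finset.mem_filter.1 hs).2⟩).trans
        (by gcongr; exact h.mul_div_le_mainTerm)
    have h₁ := h.card_le_of_x₁_eq_zero (S := S.filter fun s => s.x₁ = 0)
      fun s hs => ⟨hS s (Finset.mem_filter.1 hs).1, (Finset.mem_filter.1 hs).2⟩
    have h₂ := h.card_le_of_x₂_eq_zero (S := S.filter fun s => s.x₂ = 0)
      fun s hs => ⟨hS s (Finset.mem_filter.1 hs).1, (Finset.mem_filter.1 hs).2⟩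
    have hsum : (S.card : ℝ) ≤ _ := Nat.cast_le.2 (card_le_card_filter_x_add (S := S))
    push_cast at hsum
    linarith
  · linarith [h.card_le_of_pow_le_R hR hS]

end GeneratorBox

lemma rpow_natCast_div_eq_pow {B : ℝ} (hB : 0 ≤ B) (n : ℕ) :
    B ^ ((n : ℝ) / 180) = (B ^ ((1 : ℝ) / 180)) ^ n := by
  rw [← Real.rpow_natCast, ← Real.rpow_mul hB]
  congr 1
  ring

namespace GeneratorBox

variable {P : GeneratorBox} {β : ℝ}

lemma exists_ncard_le_mainTerm {ε : ℝ} (hε : 0 < ε) :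
    ∃ C : ℝ, 0 < C ∧ ∀ (P : GeneratorBox) (β : ℝ), P.IsBalanced β →
      ({s | P.Contains s}.ncard : ℝ) ≤ C * P.mainTerm β * (β ^ 180) ^ ε := by
  obtain ⟨C, hC, hcard⟩ := exists_card_le_mainTerm hε
  refine ⟨C, hC, fun P β h => ?_⟩
  have hfin := finite_setOf_contains h.Y₃_pos
  rw [Set.ncard_eq_toFinset_card _ hfin]
  exact hcard P β h _ fun s hs => hfin.mem_toFinset.1 hs

lemma isBalanced_rpow {B : ℝ} (hB : 2 ≤ B) (ha₁ : P.a₁ ≠ 0) (ha₂ : P.a₂ ≠ 0)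
    (hX₁ : P.X₁ ∈ Set.Icc 1 (B ^ ((1 : ℝ) / 5 + 1 / 60)))
    (hX₂ : P.X₂ ∈ Set.Icc 1 (B ^ ((1 : ℝ) / 5 + 1 / 60)))
    (hY₁ : P.Y₁ ∈ Set.Icc 1 (B ^ ((1 : ℝ) / 5 + 1 / 90)))
    (hY₂ : P.Y₂ ∈ Set.Icc 1 (B ^ ((1 : ℝ) / 5 + 1 / 90)))
    (hY₃ : P.Y₃ ∈ Set.Icc (B ^ ((1 : ℝ) / 5 - 1 / 90)) (B ^ ((1 : ℝ) / 5 + 1 / 90)))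
    (hXY₁ : P.X₁ ^ 2 * P.Y₁ ^ 3 ≤ 32 * B / |(P.a₁ : ℝ)|)
    (hXY₂ : P.X₂ ^ 2 * P.Y₂ ^ 3 ≤ 32 * B / |(P.a₂ : ℝ)|) (hR : 0 < P.R) :
    P.IsBalanced (B ^ ((1 : ℝ) / 180)) := by
  have hpow := rpow_natCast_div_eq_pow (zero_le_two.trans hB)
  have h₁₈₀ : (B ^ ((1 : ℝ) / 180)) ^ 180 = B := by norm_num [← hpow]
  rw [show (1 : ℝ) / 5 + 1 / 60 = (39 : ℕ) / 180 by norm_num, hpow] at hX₁ hX₂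
  rw [show (1 : ℝ) / 5 + 1 / 90 = (38 : ℕ) / 180 by norm_num, hpow] at hY₁ hY₂ hY₃
  rw [show (1 : ℝ) / 5 - 1 / 90 = (34 : ℕ) / 180 by norm_num, hpow] at hY₃
  refine ⟨Real.one_le_rpow (one_le_two.trans hB) (by norm_num), by rwa [h₁₈₀], ha₁, ha₂, hX₁, hX₂,
    hY₁, hY₂, hY₃, ?_, ?_, hR⟩ <;> rw [h₁₈₀]
  · exact (le_div_iff₀' (abs_pos.2 (Int.cast_ne_zero.2 ha₁))).1 hXY₁
  · exact (le_div_iff₀' (abs_pos.2 (Int.cast_ne_zero.2 ha₂))).1 hXY₂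

lemma IsBalanced.mainTerm_mul_rpow_eq (h : P.IsBalanced β) (ε : ℝ) :
    P.mainTerm β * (β ^ 180) ^ ε = (P.Y₁ * P.Y₂) ^ (-(3 : ℝ) / 2) * P.Y₃ ^ (-3 : ℝ) * P.R ^ 7 *
      (β ^ 180) ^ (2 + ε) := by
  rw [Real.rpow_add (pow_pos h.pos 180), Real.rpow_neg h.Y₃_pos.le, mainTerm, weight,
    Real.rpow_ofNat, Real.rpow_ofNat]
  ring

end GeneratorBox

theorem generator_count_bound_general {ε : ℝ} (hε : 0 < ε) :
    ∃ C : ℝ, 0 < C ∧ ∀ (a₁ a₂ : ℤ) (X₁ X₂ Y₁ Y₂ Y₃ B : ℝ),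
      2 ≤ B → a₁ ≠ 0 → a₂ ≠ 0 → 1 ≤ X₁ → 1 ≤ X₂ → 1 ≤ Y₁ → 1 ≤ Y₂ →
      X₁ ^ 2 * Y₁ ^ 3 ≤ 32 * B / |(a₁ : ℝ)| → X₂ ^ 2 * Y₂ ^ 3 ≤ 32 * B / |(a₂ : ℝ)| →
      X₁ ≤ B ^ ((1 : ℝ) / 5 + 1 / 60) → X₂ ≤ B ^ ((1 : ℝ) / 5 + 1 / 60) →
      Y₁ ≤ B ^ ((1 : ℝ) / 5 + 1 / 90) → Y₂ ≤ B ^ ((1 : ℝ) / 5 + 1 / 90) →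
      B ^ ((1 : ℝ) / 5 - 1 / 90) ≤ Y₃ ∧ Y₃ ≤ B ^ ((1 : ℝ) / 5 + 1 / 90) →
      ∀ R : ℝ, 0 < R →
        (({t : (ℤ × ℤ × ℤ × ℤ) × ℤ × ℤ |
            Squarefree t.2.1 ∧ Y₃ / 2 < (t.2.1 : ℝ) ∧ (t.2.1 : ℝ) ≤ Y₃ ∧
            IsCoprime t.2.1 (a₁ * a₂) ∧
            0 ≤ t.2.2 ∧ t.2.2 < t.2.1 ∧ IsCoprime t.2.2 t.2.1 ∧
            a₁ * t.1.1 ^ 2 * t.1.2.2.1 ^ 3 + a₂ * t.1.2.1 ^ 2 * t.1.2.2.2 ^ 3 ≠ 0 ∧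
            Congs a₁ a₂ t.2.1 t.2.2 t.1.1 t.1.2.1 t.1.2.2.1 t.1.2.2.2 ∧
            (|t.1.1| : ℝ) ≤ R * X₁ ∧ (|t.1.2.1| : ℝ) ≤ R * X₂ ∧
            (|t.1.2.2.1| : ℝ) ≤ R * Y₁ ∧ (|t.1.2.2.2| : ℝ) ≤ R * Y₂}).ncard : ℝ) ≤
          C * (Y₁ * Y₂) ^ (-(3 : ℝ) / 2) * Y₃ ^ (-3 : ℝ) * R ^ 7 * B ^ (2 + ε) := by
  obtain ⟨C, hC, hncard⟩ := GeneratorBox.exists_ncard_le_mainTerm hε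
  refine ⟨C, hC, fun a₁ a₂ X₁ X₂ Y₁ Y₂ Y₃ B hB ha₁ ha₂ hX₁ hX₂ hY₁ hY₂ hXY₁ hXY₂ hX₁B hX₂B hY₁B
    hY₂B hY₃ R hR => ?_⟩
  let P : GeneratorBox := ⟨a₁, a₂, X₁, X₂, Y₁, Y₂, Y₃, R⟩
  have hP : P.IsBalanced (B ^ ((1 : ℝ) / 180)) := GeneratorBox.isBalanced_rpow hB ha₁ ha₂
    ⟨hX₁, hX₁B⟩ ⟨hX₂, hX₂B⟩ ⟨hY₁, hY₁B⟩ ⟨hY₂, hY₂B⟩ hY₃ hXY₁ hXY₂ hR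
  have h₁₈₀ : (B ^ ((1 : ℝ) / 180)) ^ 180 = B := by
    norm_num [← rpow_natCast_div_eq_pow (zero_le_two.trans hB)]
  have hbound := hncard P _ hP
  rw [mul_assoc, hP.mainTerm_mul_rpow_eq, h₁₈₀] at hbound
  refine le_trans (Nat.cast_le.2 ?_) (hbound.trans_eq (by ring))
  refine Set.ncard_le_ncard_of_injOn GeneratorTriple.equivProd.symm (fun t ht => ?_)
    GeneratorTriple.equivProd.symm.injective.injOn (GeneratorBox.finite_setOf_contains hP.Y₃_pos)
  obtain ⟨hsq, hlt, hle, hcop, h0, hκ, hκq, hform, hcongs, hx₁, hx₂, hy₁, hy₂⟩ := ht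
  exact ⟨hsq, hlt, hle, hcop, h0, hκ, hκq, hform, hcongs, hx₁, hx₂, hy₁, hy₂⟩

/-- For every `ε > 0` there is a constant `C(ε)` such that for every real `R > 0` the number
of triples `(g, q, κ)`, where `(q, κ)` is an admissible pair (with `κ` the canonical
representative of a residue class modulo `q`) and `g = (x₁, x₂, y₁, y₂) ∈ ℤ⁴` satisfies
`a₁x₁²y₁³ + a₂x₂²y₂³ ≠ 0`, the congruences (c1)–(c4), and
`max(|x₁|/X₁, |x₂|/X₂, |y₁|/Y₁, |y₂|/Y₂) ≤ R`, is at most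
`C(ε) (Y₁Y₂)^{-3/2} Y₃^{-3} R⁷ B^{2 + ε}`. -/
theorem generator_count_bound (ε : ℝ) (hε : 0 < ε) :
    ∃ C : ℝ, 0 < C ∧ ∀ (a : Fin 3 → ℤ) (X Y : Fin 3 → ℝ) (B : ℝ),
      2 ≤ B → (∀ i, a i ≠ 0) → (∀ i, Squarefree (a i)) →
      (∀ i j, i ≠ j → IsCoprime (a i) (a j)) →
      (∀ i, 1 ≤ X i) → (∀ i, 1 ≤ Y i) →
      (∀ i, X i ^ 2 * Y i ^ 3 ≤ 32 * B / |(a i : ℝ)|) →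
      (∀ i, B ^ ((1 : ℝ) / 5 - 1 / 60) ≤ X i ∧ X i ≤ B ^ ((1 : ℝ) / 5 + 1 / 60)) →
      (∀ i, B ^ ((1 : ℝ) / 5 - 1 / 90) ≤ Y i ∧ Y i ≤ B ^ ((1 : ℝ) / 5 + 1 / 90)) →
      ∀ R : ℝ, 0 < R →
        (({t : (ℤ × ℤ × ℤ × ℤ) × ℤ × ℤ |
            Squarefree t.2.1 ∧ Y 2 / 2 < (t.2.1 : ℝ) ∧ (t.2.1 : ℝ) ≤ Y 2 ∧
            IsCoprime t.2.1 (a 0 * a 1) ∧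
            0 ≤ t.2.2 ∧ t.2.2 < t.2.1 ∧ IsCoprime t.2.2 t.2.1 ∧
            a 0 * t.1.1 ^ 2 * t.1.2.2.1 ^ 3 + a 1 * t.1.2.1 ^ 2 * t.1.2.2.2 ^ 3 ≠ 0 ∧
            Congs (a 0) (a 1) t.2.1 t.2.2 t.1.1 t.1.2.1 t.1.2.2.1 t.1.2.2.2 ∧
            (|t.1.1| : ℝ) ≤ R * X 0 ∧ (|t.1.2.1| : ℝ) ≤ R * X 1 ∧
            (|t.1.2.2.1| : ℝ) ≤ R * Y 0 ∧ (|t.1.2.2.2| : ℝ) ≤ R * Y 1}).ncard : ℝ) ≤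
          C * (Y 0 * Y 1) ^ (-(3 : ℝ) / 2) * Y 2 ^ (-3 : ℝ) * R ^ 7 * B ^ (2 + ε) := by
  obtain ⟨C, hC, h⟩ := generator_count_bound_general hε
  exact ⟨C, hC, fun a X Y B hB ha _ _ hX hY hXY hXB hYB R hR => h (a 0) (a 1) (X 0) (X 1) (Y 0)
    (Y 1) (Y 2) B hB (ha 0) (ha 1) (hX 0) (hX 1) (hY 0) (hY 1) (hXY 0) (hXY 1) (hXB 0).2
    (hXB 1).2 (hYB 0).2 (hYB 1).2 (hYB 2) R hR⟩
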